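/- (Theorem B, case ν = 0) Assume the integrality condition on (μ,ν) with ν = 0 (so μ ≥ 0 is even), let j ∈ ℕ, and let u : ℝ_+ → ℝ be a smooth function in L²(ℝ_+, x^{μ+1}dx) satisfying D_{μ,0}u = 4j(j+μ+1)u on ℝ_+. Suppose the limit B := lim_{x→0+} u(x)/log(x/2) exists. Then for all ϑ, φ ∈ [0,π] with cos ϑ + cos φ > 0, ∫₀^∞ u(x) J̃_{μ/2}(ax) J̃_{0}(bx) x^{μ+1} dx = A · ((cos ϑ + cos φ)/2)^{(μ+2)/2} · C̃_j^{(μ+1)/2}(cos ϑ) · C̃_{j+μ/2}^{1/2}(cos φ), where a = sin ϑ/(cos ϑ + cos φ), b = sin φ/(cos ϑ + cos φ), and the constant A equals A = (−1)^{j+1} · (j! 2^{2μ} Γ((μ+2)/2)²)/(π Γ(j+μ+1)) · B. -/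

import Mathlib

open MeasureTheory Real Filter Set Metric

noncomputable section

/-- Normalized Bessel function of the first kind: `J̃_α(x) = (x/2)^{-α} J_α(x)`,
given by its (entire) power series. -/
def besselJt (α x : ℝ) : ℝ :=
  ∑' m : ℕ, (-1) ^ m / (m.factorial * Real.Gamma (m + α + 1)) * (x / 2) ^ (2 * m)

/-- Bessel function of the first kind `J_α`. -/
def besselJ (α x : ℝ) : ℝ :=
  ∑' m : ℕ, (-1) ^ m / (m.factorial * Real.Gamma (m + α + 1)) * (x / 2) ^ (2 * (m : ℝ) + α)

/-- Normalized modified Bessel function `Ĩ_α(x) = (x/2)^{-α} I_α(x)`,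
given by its (entire, even) power series. -/
def besselIt (α x : ℝ) : ℝ :=
  ∑' m : ℕ, (x / 2) ^ (2 * m) / (m.factorial * Real.Gamma (m + α + 1))

/-- Modified Bessel function of the first kind `I_α`. -/
def besselI (α x : ℝ) : ℝ :=
  ∑' m : ℕ, (x / 2) ^ (2 * (m : ℝ) + α) / (m.factorial * Real.Gamma (m + α + 1))

/-- Modified Bessel function of the second kind,
`K_α(x) = lim_{β→α} (π/2)(I_{−β}(x) − I_β(x))/sin(βπ)`. -/
def besselK (α x : ℝ) : ℝ :=
  limUnder (nhdsWithin α {α}ᶜ) fun β =>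
    Real.pi / 2 * (besselI (-β) x - besselI β x) / Real.sin (β * Real.pi)

/-- Normalized K-Bessel function `K̃_α(x) = (x/2)^{-α} K_α(x)`. -/
def besselKt (α x : ℝ) : ℝ := (x / 2) ^ (-α) * besselK α x

/-- Normalized Gegenbauer polynomial `C̃_n^λ = Γ(λ) C_n^λ`, where `C_n^λ` is defined via the
generating function `(1 − 2xt + t²)^{−λ} = Σ_{n≥0} C_n^λ(x) tⁿ`; explicitly,
`C̃_n^λ(x) = Σ_{k=0}^{⌊n/2⌋} (−1)^k Γ(λ+n−k)/(k!(n−2k)!) (2x)^{n−2k}`.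
This expression also gives the limit value `C̃_n^0 = lim_{λ→0+} Γ(λ) C_n^λ` for `n ≥ 1`. -/
def gegenbauerCt (n : ℕ) (l x : ℝ) : ℝ :=
  ∑ k ∈ Finset.range (n / 2 + 1),
    (-1) ^ k * Real.Gamma (l + n - k) / (k.factorial * (n - 2 * k).factorial)
      * (2 * x) ^ (n - 2 * k)

/-- Laguerre polynomial `L_n^μ(x) = Σ_{k=0}^n (−1)^k binom(n+μ, n−k) x^k/k!`
(with nonnegative integer parameter `μ`). -/
def laguerreL (n μ : ℕ) (x : ℝ) : ℝ :=
  ∑ k ∈ Finset.range (n + 1),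
    (-1) ^ k * (Nat.choose (n + μ) (n - k)) * x ^ k / k.factorial

/-- The Euler operator `θ = x d/dx`. -/
def eulerOp (u : ℝ → ℝ) : ℝ → ℝ := fun x => x * deriv u x

/-- `(θ+c)(θ+c+ν)u − x² u`, i.e. the operator `Q_ν(θ+c)` applied to `u`. -/
def besselQ (ν c : ℝ) (u : ℝ → ℝ) : ℝ → ℝ := fun x =>
  eulerOp (fun y => eulerOp u y + (c + ν) * u y) x
    + c * (eulerOp u x + (c + ν) * u x) - x ^ 2 * u x

/-- The fourth order differential operator
`D_{μ,ν} = x^{−2}((θ+μ)(θ+μ+ν) − x²)(θ(θ+ν) − x²)`. -/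
def Dop (μ ν : ℝ) (u : ℝ → ℝ) : ℝ → ℝ := fun x =>
  besselQ ν μ (besselQ ν 0 u) x / x ^ 2

/-- The generating function
`G^{μ,ν}(t,x) = (1−t)^{−(μ+ν+2)/2} Ĩ_{μ/2}(tx/(1−t)) K̃_{ν/2}(x/(1−t))`. -/
def genFun (μ ν t x : ℝ) : ℝ :=
  (1 - t) ^ (-(μ + ν + 2) / 2) * besselIt (μ / 2) (t * x / (1 - t))
    * besselKt (ν / 2) (x / (1 - t))

/-- The eigenfunctions `Λ_j^{μ,ν}`, defined as the Taylor coefficients in `t` at `t = 0` of the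
generating function `G^{μ,ν}(t,x) = Σ_{j≥0} Λ_j^{μ,ν}(x) t^j`. -/
def LambdaF (μ ν : ℝ) (j : ℕ) (x : ℝ) : ℝ :=
  iteratedDeriv j (fun t => genFun μ ν t x) 0 / j.factorial

/-- The integrality condition: `μ ≥ ν ≥ −1` are integers of the same parity,
not both equal to `−1`. -/
def IntCond (μ ν : ℤ) : Prop :=
  -1 ≤ ν ∧ ν ≤ μ ∧ Even (μ - ν) ∧ ¬(μ = -1 ∧ ν = -1)

end

/-- The entire function `∑ z^m / (m! (m+p)!)`. -/
noncomputable def gsF (p : ℕ) (z : ℝ) : ℝ :=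
  ∑' m : ℕ, z ^ m / (m.factorial * (m + p).factorial)

/-- Normalized Bessel function of natural order. -/
noncomputable def Jn (p : ℕ) (x : ℝ) : ℝ := gsF p (-(x ^ 2 / 4))

lemma gsF_term_le (p : ℕ) (z : ℝ) (m : ℕ) :
    ‖z ^ m / ((m.factorial : ℝ) * (m + p).factorial)‖ ≤ |z| ^ m / m.factorial := by
  rw [norm_div, norm_pow, Real.norm_eq_abs, Real.norm_eq_abs]
  have h1 : (0 : ℝ) < m.factorial := by positivity
  have h2 : (1 : ℝ) ≤ (m + p).factorial := by exact_mod_cast Nat.factorial_pos _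
  rw [abs_of_pos (by positivity : (0:ℝ) < (m.factorial : ℝ) * (m + p).factorial)]
  apply div_le_div_of_nonneg_left (by positivity) h1
  nlinarith

lemma gsF_summable (p : ℕ) (z : ℝ) :
    Summable fun m : ℕ => z ^ m / ((m.factorial : ℝ) * (m + p).factorial) :=
  Summable.of_norm_bounded (Real.summable_pow_div_factorial |z|) (gsF_term_le p z)

lemma gsF_zero (p : ℕ) : gsF p 0 = 1 / p.factorial := by
  unfold gsF
  rw [tsum_eq_single 0]
  · simp
  · intro m hm
    simp [hm]

lemma gsF_hasDerivAt (p : ℕ) (z : ℝ) : HasDerivAt (gsF p) (gsF (p + 1) z) z := by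
  set R : ℝ := |z| + 1 with hR
  have hz : z ∈ ball (0 : ℝ) R := by simp [hR]
  have hsum : Summable fun m : ℕ => (m : ℝ) * R ^ (m - 1) / m.factorial := by
    rw [← summable_nat_add_iff 1]
    refine (Real.summable_pow_div_factorial R).congr ?_
    intro m
    rw [Nat.factorial_succ]
    push_cast
    have : ((m : ℝ) + 1) ≠ 0 := by positivity
    field_simp
  have key := hasDerivAt_tsum_of_isPreconnected (𝕜 := ℝ) (F := ℝ)
    (g := fun (m : ℕ) (y : ℝ) => y ^ m / ((m.factorial : ℝ) * (m + p).factorial))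
    (g' := fun (m : ℕ) (y : ℝ) => (m : ℝ) * y ^ (m - 1) / ((m.factorial : ℝ) * (m + p).factorial))
    hsum isOpen_ball (convex_ball (0 : ℝ) R).isPreconnected
    (fun m y _ => (hasDerivAt_pow m y).div_const _) ?_ hz (gsF_summable p z) hz
  · convert! key using 1
    have hs2 : Summable fun m : ℕ =>
        (m : ℝ) * z ^ (m - 1) / ((m.factorial : ℝ) * (m + p).factorial) := by
      rw [← summable_nat_add_iff 1]
      refine (gsF_summable (p + 1) z).congr ?_
      intro m
      rw [Nat.factorial_succ, show m + 1 + p = m + (p + 1) by ring]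
      push_cast
      have : ((m : ℝ) + 1) ≠ 0 := by positivity
      field_simp
    rw [hs2.tsum_eq_zero_add]
    simp only [Nat.cast_zero, zero_mul, zero_div, zero_add]
    unfold gsF
    congr 1
    ext m
    rw [Nat.factorial_succ, show m + 1 + p = m + (p + 1) by ring]
    push_cast
    have : ((m : ℝ) + 1) ≠ 0 := by positivity
    field_simp
  · intro m y hy
    have hy' : |y| ≤ R := by
      have : |y| < R := by simpa using hy
      exact this.le
    rw [norm_div, norm_mul, norm_pow, Real.norm_eq_abs, Real.norm_eq_abs, Real.norm_eq_abs]
    have h1 : (0 : ℝ) < m.factorial := by positivity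
    have h2 : (1 : ℝ) ≤ (m + p).factorial := by exact_mod_cast Nat.factorial_pos _
    rw [abs_of_pos (by positivity : (0:ℝ) < (m.factorial : ℝ) * (m + p).factorial), Nat.abs_cast]
    apply div_le_div₀ (by positivity) _ h1 (by nlinarith)
    gcongr

lemma gsF_rec (p : ℕ) (z : ℝ) :
    gsF p z - (p + 1) * gsF (p + 1) z = z * gsF (p + 2) z := by
  unfold gsF
  rw [← tsum_mul_left, ← tsum_mul_left]
  rw [← (gsF_summable p z).tsum_sub ((gsF_summable (p+1) z).mul_left _)]
  rw [Summable.tsum_eq_zero_add ((gsF_summable p z).sub ((gsF_summable (p+1) z).mul_left _))]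
  have h0 : z ^ 0 / (((0:ℕ).factorial : ℝ) * (0 + p).factorial)
      - (p + 1) * (z ^ 0 / (((0:ℕ).factorial : ℝ) * (0 + (p + 1)).factorial)) = 0 := by
    rw [show 0 + (p + 1) = p + 1 by ring, Nat.factorial_succ]
    have h2 : ((p : ℝ) + 1) ≠ 0 := by positivity
    push_cast
    simp
    field_simp
    simp
  rw [h0, zero_add]
  congr 1
  ext m
  rw [show m + 1 + (p + 1) = (m + 1 + p) + 1 by ring, show m + (p + 2) = (m + 1 + p) + 1 by ring,
    Nat.factorial_succ (m + 1 + p), Nat.factorial_succ m]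
  have h1 : ((m : ℝ) + 1) ≠ 0 := by positivity
  have h2 : ((m : ℝ) + 1 + p + 1) ≠ 0 := by positivity
  have h3 : ((m + 1 + p).factorial : ℝ) ≠ 0 := by positivity
  push_cast
  field_simp
  ring

lemma Jn_zero (p : ℕ) : Jn p 0 = 1 / p.factorial := by
  simp [Jn, gsF_zero]

lemma Jn_hasDerivAt (p : ℕ) (x : ℝ) : HasDerivAt (Jn p) (-(x / 2) * Jn (p + 1) x) x := by
  have h1 : HasDerivAt (fun x : ℝ => -(x ^ 2 / 4)) (-(x / 2)) x := by
    have := ((hasDerivAt_pow 2 x).div_const 4).neg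
    convert! this using 1
    ring
  have := (gsF_hasDerivAt p (-(x ^ 2 / 4))).comp x h1
  convert! this using 1
  simp [Jn]
  ring

lemma Jn_rec (p : ℕ) (x : ℝ) :
    Jn p x - (p + 1) * Jn (p + 1) x + (x ^ 2 / 4) * Jn (p + 2) x = 0 := by
  have := gsF_rec p (-(x ^ 2 / 4))
  simp only [Jn]
  linarith

lemma Jn_neg (p : ℕ) (x : ℝ) : Jn p (-x) = Jn p x := by
  simp [Jn]

lemma Jn_continuous (p : ℕ) : Continuous (Jn p) :=
  continuous_iff_continuousAt.2 fun x => (Jn_hasDerivAt p x).continuousAt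

lemma Jn_abs_le_one_of_nonneg (p : ℕ) {x : ℝ} (hx : 0 ≤ x) : |Jn p x| ≤ 1 := by
  set e : ℝ → ℝ := fun y => Jn p y ^ 2 + (-(y / 2) * Jn (p + 1) y) ^ 2 with he
  have hd : ∀ y, HasDerivAt e (-(y * (2 * p + 1) * Jn (p + 1) y ^ 2) / 2) y := by
    intro y
    have hl : HasDerivAt (fun y : ℝ => -(y / 2)) (-(1 / 2)) y := ((hasDerivAt_id y).div_const 2).neg
    have h := ((Jn_hasDerivAt p y).pow 2).add ((hl.mul (Jn_hasDerivAt (p + 1) y)).pow 2)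
    convert! h using 1
    have hr := Jn_rec p y
    simp only [Pi.mul_apply]
    push_cast
    simp only [show p + 1 + 1 = p + 2 from rfl]
    linear_combination (y * Jn (p + 1) y) * hr
  have hanti : AntitoneOn e (Ici 0) := by
    apply antitoneOn_of_deriv_nonpos (convex_Ici 0)
    · exact fun y _ => (hd y).continuousAt.continuousWithinAt
    · exact fun y _ => (hd y).differentiableAt.differentiableWithinAt
    · intro y hy
      rw [interior_Ici] at hy
      rw [(hd y).deriv]
      have hy' : (0 : ℝ) < y := hy
      have : 0 ≤ y * (2 * p + 1) * Jn (p + 1) y ^ 2 := by positivity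
      linarith
  have h := hanti (mem_Ici.2 le_rfl) (mem_Ici.2 hx) hx
  simp only [he] at h
  rw [Jn_zero] at h
  have h1 : (1 : ℝ) / p.factorial ≤ 1 := by
    rw [div_le_one (by positivity)]
    exact_mod_cast Nat.factorial_pos _
  have h2 : (0:ℝ) ≤ 1 / p.factorial := by positivity
  apply abs_le_of_sq_le_sq _ zero_le_one
  nlinarith [sq_nonneg (-(x / 2) * Jn (p + 1) x)]

lemma Jn_abs_le_one (p : ℕ) (x : ℝ) : |Jn p x| ≤ 1 := by
  rcases le_total 0 x with h | h
  · exact Jn_abs_le_one_of_nonneg p h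
  · rw [← Jn_neg]
    exact Jn_abs_le_one_of_nonneg p (by linarith)

lemma besselJt_nat (p : ℕ) (x : ℝ) : besselJt p x = Jn p x := by
  unfold besselJt Jn gsF
  congr 1
  ext m
  rw [show (m : ℝ) + p + 1 = ((m + p : ℕ) : ℝ) + 1 by push_cast; ring, Real.Gamma_nat_eq_factorial]
  rw [show -(x ^ 2 / 4) = (-1) * (x / 2) ^ 2 by ring, mul_pow, ← pow_mul]
  ring

/-- Terms of the Gegenbauer sum, extended by zero. -/
noncomputable def gegT (n : ℕ) (l x : ℝ) (k : ℕ) : ℝ :=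
  if 2 * k ≤ n then (-1) ^ k * Real.Gamma (l + n - k) / (k.factorial * (n - 2 * k).factorial)
      * (2 * x) ^ (n - 2 * k) else 0

lemma geg_eq (n : ℕ) (l x : ℝ) (K : ℕ) (hK : n / 2 + 1 ≤ K) :
    gegenbauerCt n l x = ∑ k ∈ Finset.range K, gegT n l x k := by
  unfold gegenbauerCt
  have hsub : Finset.range (n / 2 + 1) ⊆ Finset.range K := Finset.range_mono hK
  rw [← Finset.sum_subset hsub (f := gegT n l x)]
  · apply Finset.sum_congr rfl
    intro k hk
    rw [Finset.mem_range] at hk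
    rw [gegT, if_pos (by omega)]
  · intro k _ hk
    rw [Finset.mem_range] at hk
    rw [gegT, if_neg (by omega)]

lemma geg_zero (l x : ℝ) : gegenbauerCt 0 l x = Real.Gamma l := by
  simp [gegenbauerCt]

lemma gegT_hasDerivAt (n : ℕ) (l x : ℝ) (k : ℕ) :
    HasDerivAt (fun y => gegT (n + 1) l y k) (2 * gegT n (l + 1) x k) x := by
  unfold gegT
  by_cases h : 2 * k ≤ n
  · rw [if_pos h]
    simp only [if_pos (show 2 * k ≤ n + 1 by omega)]
    obtain ⟨m, hm⟩ : ∃ m, n = 2 * k + m := ⟨n - 2 * k, by omega⟩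
    have e1 : n + 1 - 2 * k = m + 1 := by omega
    have e2 : n - 2 * k = m := by omega
    rw [e1, e2]
    have hd : HasDerivAt (fun y : ℝ => (2 * y) ^ (m + 1)) ((m + 1 : ℕ) * (2 * x) ^ m * 2) x := by
      have := ((hasDerivAt_id x).const_mul 2).pow (m + 1)
      convert! this using 1
      simp
    have := hd.const_mul ((-1) ^ k * Real.Gamma (l + (n + 1 : ℕ) - k) /
      (k.factorial * (m + 1).factorial))
    convert! this using 1
    rw [show l + 1 + (n : ℝ) - k = l + (n + 1 : ℕ) - k by push_cast; ring, Nat.factorial_succ]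
    have h1 : ((m : ℝ) + 1) ≠ 0 := by positivity
    push_cast
    field_simp
  · rw [if_neg h]
    by_cases h' : 2 * k ≤ n + 1
    · simp only [if_pos h']
      have e1 : n + 1 - 2 * k = 0 := by omega
      rw [e1]
      simpa using hasDerivAt_const x _
    · simp only [if_neg h']
      simpa using hasDerivAt_const x _

lemma geg_hasDerivAt (n : ℕ) (l x : ℝ) :
    HasDerivAt (gegenbauerCt (n + 1) l) (2 * gegenbauerCt n (l + 1) x) x := by
  have h1 : gegenbauerCt (n + 1) l = fun y => ∑ k ∈ Finset.range (n + 2), gegT (n + 1) l y k := by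
    ext y
    exact geg_eq _ _ _ _ (by omega)
  rw [h1, geg_eq n (l + 1) x (n + 2) (by omega), Finset.mul_sum]
  exact HasDerivAt.fun_sum fun k _ => gegT_hasDerivAt n l x k

lemma gegT_ode (n : ℕ) (l x : ℝ) (hl : 0 < l) (k : ℕ) :
    4 * (if k = 0 then 0 else gegT n (l + 2) x (k - 1)) - 4 * x ^ 2 * gegT n (l + 2) x k
      - 2 * (2 * l + 1) * x * gegT (n + 1) (l + 1) x k
      + (n + 2) * (n + 2 + 2 * l) * gegT (n + 2) l x k = 0 := by
  by_cases h : 2 * k ≤ n + 2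
  swap
  · have hk : k ≠ 0 := by omega
    unfold gegT
    rw [if_neg hk, if_neg (by omega), if_neg (by omega), if_neg (by omega), if_neg (by omega)]
    ring
  have hg : Real.Gamma (l + n + 2 - k + 1) = (l + n + 2 - k) * Real.Gamma (l + n + 2 - k) := by
    apply Real.Gamma_add_one
    have : (2 * k : ℝ) ≤ n + 2 := by exact_mod_cast h
    have h2 : (0 : ℝ) ≤ n := by positivity
    nlinarith
  have hA : gegT (n + 2) l x k = (-1) ^ k * Real.Gamma (l + n + 2 - k) /
      (k.factorial * (n + 2 - 2 * k).factorial) * (2 * x) ^ (n + 2 - 2 * k) := by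
    unfold gegT
    rw [if_pos h]
    congr 4
    push_cast
    ring
  obtain ⟨m, hm⟩ : ∃ m, n + 2 = 2 * k + m := ⟨n + 2 - 2 * k, by omega⟩
  have e2 : n + 2 - 2 * k = m := by omega
  have hmR : (n : ℝ) + 2 = 2 * k + m := by exact_mod_cast hm
  rw [e2] at hA
  have hB : 4 * (if k = 0 then 0 else gegT n (l + 2) x (k - 1)) =
      -(4 * k * (l + n + 2 - k)) * ((-1) ^ k * Real.Gamma (l + n + 2 - k) /
      (k.factorial * m.factorial) * (2 * x) ^ m) := by
    rcases k with _ | k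
    · simp
    · rw [if_neg (by omega)]
      unfold gegT
      rw [if_pos (by omega)]
      simp only [Nat.add_sub_cancel]
      have e3 : n - 2 * k = m := by omega
      rw [e3, Nat.factorial_succ]
      have : l + 2 + (n : ℝ) - (k : ℝ) = l + n + 2 - ((k + 1 : ℕ) : ℝ) + 1 := by push_cast; ring
      rw [this, hg]
      have h1 : ((k : ℝ) + 1) ≠ 0 := by positivity
      push_cast
      field_simp
      ring
  have hC : 2 * x * gegT (n + 1) (l + 1) x k = m * ((-1) ^ k * Real.Gamma (l + n + 2 - k) /
      (k.factorial * m.factorial) * (2 * x) ^ m) := by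
    unfold gegT
    rcases m with _ | m
    · rw [if_neg (by omega)]
      simp
    · rw [if_pos (by omega)]
      have e3 : n + 1 - 2 * k = m := by omega
      rw [e3, Nat.factorial_succ]
      have : l + 1 + ((n + 1 : ℕ) : ℝ) - (k : ℝ) = l + n + 2 - k := by push_cast; ring
      rw [this]
      have h1 : ((m : ℝ) + 1) ≠ 0 := by positivity
      push_cast
      field_simp
      ring
  have hD : 4 * x ^ 2 * gegT n (l + 2) x k = m * (m - 1) * ((-1) ^ k * Real.Gamma (l + n + 2 - k) /
      (k.factorial * m.factorial) * (2 * x) ^ m) := by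
    unfold gegT
    rcases m with _ | _ | m
    · rw [if_neg (by omega)]
      simp
    · rw [if_neg (by omega)]
      simp
    · rw [if_pos (by omega)]
      have e3 : n - 2 * k = m := by omega
      rw [e3, Nat.factorial_succ, Nat.factorial_succ]
      have : l + 2 + (n : ℝ) - (k : ℝ) = l + n + 2 - k := by ring
      rw [this]
      have h1 : ((m : ℝ) + 1) ≠ 0 := by positivity
      have h2 : ((m : ℝ) + 1 + 1) ≠ 0 := by positivity
      push_cast
      field_simp
      ring
  rw [hA, hB, hD]
  have hC' : 2 * (2 * l + 1) * x * gegT (n + 1) (l + 1) x k =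
      (2 * l + 1) * (2 * x * gegT (n + 1) (l + 1) x k) := by ring
  rw [hC', hC]
  have hn : (n : ℝ) = 2 * k + m - 2 := by linarith
  generalize ((-1) ^ k * Real.Gamma (l + n + 2 - k) /
      (k.factorial * m.factorial) * (2 * x) ^ m) = G
  rw [hn]
  ring

lemma geg_ode2 (n : ℕ) (l x : ℝ) (hl : 0 < l) :
    4 * (1 - x ^ 2) * gegenbauerCt n (l + 2) x
      - 2 * (2 * l + 1) * x * gegenbauerCt (n + 1) (l + 1) x
      + (n + 2) * (n + 2 + 2 * l) * gegenbauerCt (n + 2) l x = 0 := by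
  have e1 : gegenbauerCt n (l + 2) x = ∑ k ∈ Finset.range (n + 3),
      (if k = 0 then 0 else gegT n (l + 2) x (k - 1)) := by
    rw [Finset.sum_range_succ']
    simp only [Nat.add_eq_zero_iff, one_ne_zero, and_false, if_false, Nat.add_sub_cancel, if_true,
      add_zero]
    exact geg_eq _ _ _ _ (by omega)
  have e2 := geg_eq n (l + 2) x (n + 3) (by omega)
  have e3 := geg_eq (n + 1) (l + 1) x (n + 3) (by omega)
  have e4 := geg_eq (n + 2) l x (n + 3) (by omega)
  have : 4 * (1 - x ^ 2) * gegenbauerCt n (l + 2) x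
      = 4 * gegenbauerCt n (l + 2) x - 4 * x ^ 2 * gegenbauerCt n (l + 2) x := by ring
  rw [this]
  nth_rewrite 1 [e1]
  rw [e2, e3, e4, Finset.mul_sum, Finset.mul_sum, Finset.mul_sum, Finset.mul_sum,
    ← Finset.sum_sub_distrib, ← Finset.sum_sub_distrib, ← Finset.sum_add_distrib]
  exact Finset.sum_eq_zero fun k _ => gegT_ode n l x hl k

lemma geg_one (l x : ℝ) : gegenbauerCt 1 l x = Real.Gamma (l + 1) * (2 * x) := by
  simp [gegenbauerCt]

/-- Derivatives of the Gegenbauer polynomial with the differential equation. -/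
lemma geg_exists (n : ℕ) (l : ℝ) (hl : 0 < l) : ∃ C1 C2 : ℝ → ℝ,
    (∀ x, HasDerivAt (gegenbauerCt n l) (C1 x) x) ∧ (∀ x, HasDerivAt C1 (C2 x) x) ∧
    ∀ x, (1 - x ^ 2) * C2 x - (2 * l + 1) * x * C1 x + n * (n + 2 * l) * gegenbauerCt n l x = 0 := by
  rcases n with _ | _ | n
  · refine ⟨fun _ => 0, fun _ => 0, ?_, fun x => hasDerivAt_const x _, fun x => by simp⟩
    intro x
    have : gegenbauerCt 0 l = fun _ => Real.Gamma l := by ext y; exact geg_zero l y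
    rw [this]
    exact hasDerivAt_const x _
  · refine ⟨fun _ => 2 * Real.Gamma (l + 1), fun _ => 0, ?_, fun x => hasDerivAt_const x _, ?_⟩
    · intro x
      have := geg_hasDerivAt 0 l x
      rwa [geg_zero] at this
    · intro x
      rw [geg_one]
      push_cast
      ring
  · refine ⟨fun x => 2 * gegenbauerCt (n + 1) (l + 1) x,
      fun x => 2 * (2 * gegenbauerCt n (l + 1 + 1) x), fun x => geg_hasDerivAt (n + 1) l x,
      fun x => (geg_hasDerivAt n (l + 1) x).const_mul 2, ?_⟩
    intro x
    have := geg_ode2 n l x hl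
    rw [show l + 1 + 1 = l + 2 by ring]
    push_cast
    linear_combination this

lemma geg_at_one (n : ℕ) : ∀ l : ℝ, 0 < l →
    gegenbauerCt n l 1 = Real.Gamma l * Real.Gamma (n + 2 * l) / (n.factorial * Real.Gamma (2 * l)) := by
  induction n with
  | zero =>
    intro l hl
    have : Real.Gamma (2 * l) ≠ 0 := (Real.Gamma_pos_of_pos (by positivity)).ne'
    rw [geg_zero]
    simp
    field_simp
  | succ n ih =>
    intro l hl
    obtain ⟨C1, C2, h1, h2, h3⟩ := geg_exists (n + 1) l hl
    have h4 := h3 1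
    have h5 : C1 1 = 2 * gegenbauerCt n (l + 1) 1 := (h1 1).unique (geg_hasDerivAt n l 1)
    rw [h5, ih (l + 1) (by positivity)] at h4
    have g1 : Real.Gamma (l + 1) = l * Real.Gamma l := Real.Gamma_add_one hl.ne'
    have g2 : Real.Gamma (2 * (l + 1)) = (2 * l + 1) * (2 * l * Real.Gamma (2 * l)) := by
      rw [show 2 * (l + 1) = (2 * l + 1) + 1 by ring, Real.Gamma_add_one (by positivity),
        Real.Gamma_add_one (by positivity)]
    have g3 : Real.Gamma (n + 2 * (l + 1)) =
        (n + 1 + 2 * l) * Real.Gamma ((n + 1 : ℕ) + 2 * l) := by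
      rw [show (n : ℝ) + 2 * (l + 1) = ((n + 1 : ℕ) + 2 * l) + 1 by push_cast; ring,
        Real.Gamma_add_one (by positivity)]
      push_cast
      ring
    rw [g1, g2, g3] at h4
    have p1 : Real.Gamma (2 * l) ≠ 0 := (Real.Gamma_pos_of_pos (by positivity)).ne'
    have p2 : ((n : ℝ) + 1 + 2 * l) ≠ 0 := by positivity
    have p3 : ((n : ℝ) + 1) ≠ 0 := by positivity
    have p4 : (2 * l + 1) ≠ 0 := by positivity
    rw [Nat.factorial_succ]
    generalize gegenbauerCt (n + 1) l 1 = Y at *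
    generalize Real.Gamma ((n + 1 : ℕ) + 2 * l) = Z at *
    push_cast at *
    field_simp at h4 ⊢
    apply mul_left_cancel₀ p2
    linear_combination h4

lemma geg_neg_one (n : ℕ) (l : ℝ) :
    gegenbauerCt n l (-1) = (-1) ^ n * gegenbauerCt n l 1 := by
  unfold gegenbauerCt
  rw [Finset.mul_sum]
  apply Finset.sum_congr rfl
  intro k hk
  rw [Finset.mem_range] at hk
  obtain ⟨m, hm⟩ : ∃ m, n = 2 * k + m := ⟨n - 2 * k, by omega⟩
  have e2 : n - 2 * k = m := by omega
  rw [e2, show (2 : ℝ) * -1 = (-1) * 2 by ring, mul_pow]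
  have : (-1 : ℝ) ^ n = (-1) ^ m := by
    rw [hm, pow_add, pow_mul]
    simp
  rw [this]
  ring

lemma geg_at_one_pos (n : ℕ) (l : ℝ) (hl : 0 < l) : 0 < gegenbauerCt n l 1 := by
  rw [geg_at_one n l hl]
  have h1 := Real.Gamma_pos_of_pos hl
  have h2 : 0 < Real.Gamma (n + 2 * l) := Real.Gamma_pos_of_pos (by positivity)
  have h3 : 0 < Real.Gamma (2 * l) := Real.Gamma_pos_of_pos (by positivity)
  positivity

/-- The system at infinity. -/
structure VSys (m c lam : ℝ) (u u1 v v1 : ℝ → ℝ) : Prop where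
  hu : ∀ x > 0, HasDerivAt u (u1 x) x
  hu1 : ∀ x > 0, HasDerivAt u1 (u x - u1 x / x + v x / x) x
  hv : ∀ x > 0, HasDerivAt v (v1 x) x
  hv1 : ∀ x > 0, HasDerivAt v1 (v x + lam * u x / x - m * v1 x / x - c * v x / x ^ 2) x

lemma amgm8 (p q : ℝ) : -(1 / 8) * p ^ 2 - 2 * q ^ 2 ≤ p * q := by
  nlinarith [sq_nonneg (p + 4 * q)]

lemma amgm16 (p q : ℝ) : -(1 / 16) * p ^ 2 - 4 * q ^ 2 ≤ p * q := by
  nlinarith [sq_nonneg (p / 4 + 2 * q)]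

lemma mul_sq_le_of_le_one {t a : ℝ} (ht : |t| ≤ 1) : (t * a) ^ 2 ≤ a ^ 2 := by
  rw [mul_pow]
  have h : t ^ 2 ≤ 1 := by rw [← sq_abs]; nlinarith [abs_nonneg t]
  nlinarith [sq_nonneg a]

set_option maxHeartbeats 1000000 in
/-- The pointwise inequality for the localized energy. -/
lemma H_ineq (m c lam x R r u u1 v v1 : ℝ) (hx : 1 ≤ x) (hxR : x ≤ R) (hr : r = 1 - x / R)
    (hm : 32 * m ^ 2 ≤ x ^ 2) (hc : 16 * |c| ≤ x ^ 2) (h0 : 1152 ≤ x ^ 2) :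
    (1 / 2) * (r ^ 4 * v ^ 2) - (|lam| + 2 * (m - 1) ^ 2 + 4 * c ^ 2 + 4 * lam ^ 2 + 1152) * u ^ 2 ≤
    r ^ 4 * (v ^ 2 - lam * u ^ 2 + (m - 1) * u * v1 + c * u * v / x)
      + (8 * x / R) * r ^ 3 * (u * v1) + ((4 / R) * r ^ 3 - (12 * x / R ^ 2) * r ^ 2) * (u * v)
      + r ^ 6 * (v1 ^ 2 + v * (v + lam * u / x - m * v1 / x - c * v / x ^ 2))
      - (6 / R) * r ^ 5 * (v * v1) := by
  have hx0 : 0 < x := by linarith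
  have hR0 : 0 < R := by linarith
  have hR1 : 1 ≤ R := by linarith
  set y : ℝ := x / R with hy
  have hy0 : 0 ≤ y := by positivity
  have hy1 : y ≤ 1 := by rw [hy, div_le_one hR0]; exact hxR
  have hr0 : 0 ≤ r := by rw [hr]; linarith
  have hr1 : r ≤ 1 := by rw [hr]; linarith
  set i : ℝ := 1 / x with hi
  have hi0 : 0 < i := by positivity
  have hi1 : i ≤ 1 := by rw [hi, div_le_one hx0]; exact hx
  have hix : i * x = 1 := by rw [hi]; field_simp
  set k : ℝ := 1 / R with hk
  have hk0 : 0 < k := by positivity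
  have hki : k ≤ i := by rw [hk, hi]; exact one_div_le_one_div_of_le hx0 hxR
  have hm' : m ^ 2 * i ^ 2 ≤ 1 / 32 := by
    have : m ^ 2 * i ^ 2 = m ^ 2 / x ^ 2 := by rw [hi]; field_simp
    rw [this, div_le_iff₀ (by positivity)]; linarith
  have hc' : |c| * i ^ 2 ≤ 1 / 16 := by
    have : |c| * i ^ 2 = |c| / x ^ 2 := by rw [hi]; field_simp
    rw [this, div_le_iff₀ (by positivity)]; linarith
  have hi2 : i ^ 2 ≤ 1 / 1152 := by
    have : i ^ 2 = 1 / x ^ 2 := by rw [hi]; field_simp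
    rw [this]; exact one_div_le_one_div_of_le (by norm_num) h0
  have hk2 : k ^ 2 ≤ 1 / 1152 := le_trans (by gcongr) hi2
  have hri : ∀ n : ℕ, 0 ≤ r ^ n ∧ r ^ n ≤ 1 := fun n => ⟨pow_nonneg hr0 n, pow_le_one₀ hr0 hr1⟩
  -- rewrite the right hand side
  have e : r ^ 4 * (v ^ 2 - lam * u ^ 2 + (m - 1) * u * v1 + c * u * v / x)
      + (8 * x / R) * r ^ 3 * (u * v1) + ((4 / R) * r ^ 3 - (12 * x / R ^ 2) * r ^ 2) * (u * v)
      + r ^ 6 * (v1 ^ 2 + v * (v + lam * u / x - m * v1 / x - c * v / x ^ 2))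
      - (6 / R) * r ^ 5 * (v * v1) =
      r ^ 4 * v ^ 2 - r ^ 4 * (lam * u ^ 2) + (r ^ 3 * v1) * (r * ((m - 1) * u))
      + (r ^ 2 * v) * ((r ^ 2 * i) * (c * u)) + (r ^ 3 * v1) * (y * (8 * u))
      + (r ^ 2 * v) * ((4 * k * r - 12 * (y * k)) * u)
      + r ^ 6 * v1 ^ 2 + r ^ 6 * v ^ 2 + (r ^ 2 * v) * ((r ^ 4 * i) * (lam * u))
      + (r ^ 3 * v1) * (-(r ^ 3 * i * m * v)) - r ^ 6 * (c * i ^ 2) * v ^ 2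
      + (r ^ 3 * v1) * (-(6 * k * r ^ 2 * v)) := by
    rw [hy, hi, hk]
    field_simp
    ring
  rw [e]
  have a1 := amgm8 (r ^ 3 * v1) (r * ((m - 1) * u))
  have b1 : (r * ((m - 1) * u)) ^ 2 ≤ ((m - 1) * u) ^ 2 :=
    mul_sq_le_of_le_one (by rw [abs_of_nonneg hr0]; exact hr1)
  have a2 := amgm16 (r ^ 2 * v) ((r ^ 2 * i) * (c * u))
  have b2 : ((r ^ 2 * i) * (c * u)) ^ 2 ≤ (c * u) ^ 2 := mul_sq_le_of_le_one (by
    rw [abs_of_nonneg (mul_nonneg (hri 2).1 hi0.le)]; exact mul_le_one₀ (hri 2).2 hi0.le hi1)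
  have a3 := amgm8 (r ^ 3 * v1) (y * (8 * u))
  have b3 : (y * (8 * u)) ^ 2 ≤ (8 * u) ^ 2 :=
    mul_sq_le_of_le_one (by rw [abs_of_nonneg hy0]; exact hy1)
  have a4 := amgm16 (r ^ 2 * v) ((4 * k * r - 12 * (y * k)) * u)
  have hk1 : k ≤ 1 := hki.trans hi1
  have b4 : ((4 * k * r - 12 * (y * k)) * u) ^ 2 ≤ 144 * u ^ 2 := by
    have h1 : 0 ≤ k * r := by positivity
    have h2 : k * r ≤ 1 := mul_le_one₀ hk1 hr0 hr1
    have h3 : 0 ≤ y * k := by positivity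
    have h4 : y * k ≤ 1 := mul_le_one₀ hy1 hk0.le hk1
    rw [mul_pow]
    have : (4 * k * r - 12 * (y * k)) ^ 2 ≤ 12 ^ 2 := by
      apply sq_le_sq' <;> nlinarith only [h1, h2, h3, h4]
    have pu : 0 ≤ u ^ 2 := sq_nonneg u
    nlinarith only [this, pu]
  have a5 := amgm16 (r ^ 2 * v) ((r ^ 4 * i) * (lam * u))
  have b5 : ((r ^ 4 * i) * (lam * u)) ^ 2 ≤ (lam * u) ^ 2 := mul_sq_le_of_le_one (by
    rw [abs_of_nonneg (mul_nonneg (hri 4).1 hi0.le)]; exact mul_le_one₀ (hri 4).2 hi0.le hi1)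
  have a6 := amgm8 (r ^ 3 * v1) (-(r ^ 3 * i * m * v))
  have b6 : (-(r ^ 3 * i * m * v)) ^ 2 ≤ (1 / 32) * (r ^ 4 * v ^ 2) := by
    have : (-(r ^ 3 * i * m * v)) ^ 2 = (m ^ 2 * i ^ 2) * (r ^ 2 * (r ^ 4 * v ^ 2)) := by ring
    rw [this]
    have h1 : 0 ≤ r ^ 4 * v ^ 2 := by positivity
    have h2 : r ^ 2 * (r ^ 4 * v ^ 2) ≤ r ^ 4 * v ^ 2 := by nlinarith only [(hri 2).2, h1]
    have h3 : 0 ≤ r ^ 2 * (r ^ 4 * v ^ 2) := by positivity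
    nlinarith only [h1, h2, h3, hm']
  have b7 : r ^ 6 * (c * i ^ 2) * v ^ 2 ≤ (1 / 16) * (r ^ 4 * v ^ 2) := by
    have : r ^ 6 * (c * i ^ 2) * v ^ 2 = (c * i ^ 2) * (r ^ 2 * (r ^ 4 * v ^ 2)) := by ring
    rw [this]
    have h0' : c * i ^ 2 ≤ 1 / 16 := le_trans (by gcongr; exact le_abs_self c) hc'
    have h1 : 0 ≤ r ^ 4 * v ^ 2 := by positivity
    have h2 : r ^ 2 * (r ^ 4 * v ^ 2) ≤ r ^ 4 * v ^ 2 := by nlinarith only [(hri 2).2, h1]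
    have h3 : 0 ≤ r ^ 2 * (r ^ 4 * v ^ 2) := by positivity
    nlinarith only [h1, h2, h3, h0']
  have a8 := amgm8 (r ^ 3 * v1) (-(6 * k * r ^ 2 * v))
  have b8 : (-(6 * k * r ^ 2 * v)) ^ 2 ≤ (1 / 32) * (r ^ 4 * v ^ 2) := by
    have : (-(6 * k * r ^ 2 * v)) ^ 2 = (36 * k ^ 2) * (r ^ 4 * v ^ 2) := by ring
    rw [this]
    have h1 : 0 ≤ r ^ 4 * v ^ 2 := by positivity
    nlinarith only [h1, hk2]
  have b9 : r ^ 4 * (lam * u ^ 2) ≤ |lam| * u ^ 2 := by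
    have h1 : lam * u ^ 2 ≤ |lam| * u ^ 2 := by gcongr; exact le_abs_self lam
    have h2 : 0 ≤ |lam| * u ^ 2 := by positivity
    have := hri 4
    nlinarith only [h1, h2, this.1, this.2]
  have p1 : 0 ≤ r ^ 6 * v1 ^ 2 := by positivity
  have p2 : 0 ≤ r ^ 6 * v ^ 2 := by positivity
  have p3 : 0 ≤ r ^ 4 * v ^ 2 := by positivity
  have q1 : (r ^ 3 * v1) ^ 2 = r ^ 6 * v1 ^ 2 := by ring
  have q2 : (r ^ 2 * v) ^ 2 = r ^ 4 * v ^ 2 := by ring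
  rw [q1] at a1 a3 a6 a8
  rw [q2] at a2 a4 a5
  have s1 : ((m - 1) * u) ^ 2 = (m - 1) ^ 2 * u ^ 2 := by ring
  have s2 : (c * u) ^ 2 = c ^ 2 * u ^ 2 := by ring
  have s3 : (lam * u) ^ 2 = lam ^ 2 * u ^ 2 := by ring
  rw [s1] at b1
  rw [s2] at b2
  rw [s3] at b5
  have pu : 0 ≤ u ^ 2 := sq_nonneg u
  linarith only [pu, a1, a2, a3, a4, a5, a6, a8, b1, b2, b3, b4, b5, b6, b7, b8, b9, p1, p2, p3]

/-- The localized energy. -/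
noncomputable def Hen (R : ℝ) (u u1 v v1 : ℝ → ℝ) (x : ℝ) : ℝ :=
  (1 - x / R) ^ 4 * (x * (v x * u1 x - v1 x * u x)) + (4 * x / R) * (1 - x / R) ^ 3 * (u x * v x)
    + (1 - x / R) ^ 6 * (v x * v1 x)

lemma Hen_hasDerivAt {m c lam : ℝ} {u u1 v v1 : ℝ → ℝ} (h : VSys m c lam u u1 v v1) (R : ℝ)
    (hR : 0 < R) (x : ℝ) (hx : 0 < x) :
    HasDerivAt (Hen R u u1 v v1)
    ((1 - x / R) ^ 4 * ((v x) ^ 2 - lam * (u x) ^ 2 + (m - 1) * u x * v1 x + c * u x * v x / x)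
      + (8 * x / R) * (1 - x / R) ^ 3 * (u x * v1 x)
      + ((4 / R) * (1 - x / R) ^ 3 - (12 * x / R ^ 2) * (1 - x / R) ^ 2) * (u x * v x)
      + (1 - x / R) ^ 6 * ((v1 x) ^ 2
        + v x * (v x + lam * u x / x - m * v1 x / x - c * v x / x ^ 2))
      - (6 / R) * (1 - x / R) ^ 5 * (v x * v1 x)) x := by
  have hr : HasDerivAt (fun x : ℝ => 1 - x / R) (-(1 / R)) x := by
    simpa using ((hasDerivAt_id x).div_const R).const_sub 1
  have hl : HasDerivAt (fun x : ℝ => 4 * x / R) (4 / R) x := by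
    have := ((hasDerivAt_id x).const_mul 4).div_const R
    simpa using this
  have A := (hr.pow 4).mul ((hasDerivAt_id x).mul
    (((h.hv x hx).mul (h.hu1 x hx)).sub ((h.hv1 x hx).mul (h.hu x hx))))
  have B := (hl.mul (hr.pow 3)).mul ((h.hu x hx).mul (h.hv x hx))
  have C := (hr.pow 6).mul ((h.hv x hx).mul (h.hv1 x hx))
  have := (A.add B).add C
  convert! this using 1
  simp only [Pi.mul_apply, Pi.pow_apply, Pi.sub_apply, id]
  push_cast
  field_simp
  ring

lemma not_integrable_of_ge {g : ℝ → ℝ} {R0 x1 ε : ℝ} (hg : IntegrableOn g (Ioi R0)) (hR : R0 ≤ x1)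
    (hε : 0 < ε) (h : ∀ x ≥ x1, ε ≤ g x) : False := by
  have h1 : IntegrableOn g (Ioi x1) := hg.mono_set (Ioi_subset_Ioi hR)
  have h2 : IntegrableOn (fun _ : ℝ => ε) (Ioi x1) := by
    refine Integrable.mono' h1 aestronglyMeasurable_const ?_
    filter_upwards [ae_restrict_mem measurableSet_Ioi] with x hx
    rw [Real.norm_eq_abs, abs_of_pos hε]
    exact h x (le_of_lt hx)
  rw [integrableOn_const_iff] at h2
  simp at h2
  exact hε.ne' h2

lemma v_sq_integrable {m c lam : ℝ} {u u1 v v1 : ℝ → ℝ} (h : VSys m c lam u u1 v v1)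
    (hL2 : IntegrableOn (fun x => u x ^ 2) (Ioi 1)) :
    ∃ R0 : ℝ, 1 ≤ R0 ∧ IntegrableOn (fun x => v x ^ 2) (Ioi R0) := by
  set R0 : ℝ := 34 + 32 * m ^ 2 + 16 * |c| with hR0
  have hR01 : 1 ≤ R0 := by
    have : 0 ≤ 32 * m ^ 2 + 16 * |c| := by positivity
    linarith
  have h34 : 34 ≤ R0 := by
    have : 0 ≤ 32 * m ^ 2 + 16 * |c| := by positivity
    linarith
  refine ⟨R0, hR01, ?_⟩
  set K : ℝ := |lam| + 2 * (m - 1) ^ 2 + 4 * c ^ 2 + 4 * lam ^ 2 + 1152 with hK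
  have hK0 : 0 ≤ K := by positivity
  have hUint : IntegrableOn (fun x => u x ^ 2) (Ioi R0) := hL2.mono_set (Ioi_subset_Ioi hR01)
  set U : ℝ := ∫ x in Ioi R0, u x ^ 2 with hU
  set Q : ℝ := R0 * |v R0 * u1 R0 - v1 R0 * u R0| + 4 * |u R0 * v R0| + |v R0 * v1 R0| with hQ
  have hvc : ContinuousOn v (Ioi 0) := fun x hx => (h.hv x hx).continuousAt.continuousWithinAt
  have huc : ContinuousOn u (Ioi 0) := fun x hx => (h.hu x hx).continuousAt.continuousWithinAt
  have hsub : ∀ a b : ℝ, R0 ≤ a → R0 ≤ b → uIcc a b ⊆ Ioi (0:ℝ) := by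
    intro a b ha hb x hx
    have := hx.1
    have h2 : R0 ≤ a ⊓ b := le_inf ha hb
    exact lt_of_lt_of_le (by linarith) (h2.trans this)
  have hvi : ∀ a b : ℝ, R0 ≤ a → R0 ≤ b → IntervalIntegrable (fun x => v x ^ 2) volume a b :=
    fun a b ha hb => ((hvc.mono (hsub a b ha hb)).pow 2).intervalIntegrable
  have hui : ∀ a b : ℝ, R0 ≤ a → R0 ≤ b → IntervalIntegrable (fun x => u x ^ 2) volume a b :=
    fun a b ha hb => ((huc.mono (hsub a b ha hb)).pow 2).intervalIntegrable
  apply integrableOn_Ioi_of_intervalIntegral_norm_bounded (32 * (K * U + Q)) R0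
    (b := fun R : ℝ => R / 2) (l := atTop)
  · intro R
    rcases le_total R0 (R / 2) with hh | hh
    · have := (hvi R0 (R/2) le_rfl hh).1
      exact this
    · rw [Ioc_eq_empty (by linarith)]
      exact integrableOn_empty
  · exact tendsto_id.atTop_div_const (by norm_num)
  · filter_upwards [eventually_ge_atTop (2 * R0)] with R hR
    have hRp : 0 < R := by linarith
    have hint1 : ∀ x ∈ Icc R0 R, (1 / 2) * ((1 - x / R) ^ 4 * v x ^ 2) - K * u x ^ 2 ≤
        ((1 - x / R) ^ 4 * ((v x) ^ 2 - lam * (u x) ^ 2 + (m - 1) * u x * v1 x + c * u x * v x / x)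
      + (8 * x / R) * (1 - x / R) ^ 3 * (u x * v1 x)
      + ((4 / R) * (1 - x / R) ^ 3 - (12 * x / R ^ 2) * (1 - x / R) ^ 2) * (u x * v x)
      + (1 - x / R) ^ 6 * ((v1 x) ^ 2
        + v x * (v x + lam * u x / x - m * v1 x / x - c * v x / x ^ 2))
      - (6 / R) * (1 - x / R) ^ 5 * (v x * v1 x)) := by
      intro x hx
      have hx34 : 34 ≤ x := h34.trans hx.1
      have hxR0 : R0 ≤ x := hx.1
      have hx2 : x ≤ x ^ 2 := by nlinarith
      apply H_ineq m c lam x R (1 - x / R) _ (u1 x) _ _ (by linarith) hx.2 rfl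
      · have : 0 ≤ 16 * |c| := by positivity
        linarith
      · have : 0 ≤ 32 * m ^ 2 := by positivity
        linarith
      · nlinarith
    -- continuity of the weighted function
    have hwi : IntervalIntegrable (fun x => (1 / 2) * ((1 - x / R) ^ 4 * v x ^ 2) - K * u x ^ 2)
        volume R0 R := by
      apply ContinuousOn.intervalIntegrable
      have hs := hsub R0 R le_rfl (by linarith)
      apply ContinuousOn.sub
      · apply ContinuousOn.mul continuousOn_const
        apply ContinuousOn.mul
        · fun_prop
        · exact (hvc.mono hs).pow 2
      · exact continuousOn_const.mul ((huc.mono hs).pow 2)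
    have hwv : IntervalIntegrable (fun x => (1 - x / R) ^ 4 * v x ^ 2) volume R0 R := by
      apply ContinuousOn.intervalIntegrable
      have hs := hsub R0 R le_rfl (by linarith)
      apply ContinuousOn.mul
      · fun_prop
      · exact (hvc.mono hs).pow 2
    have hle : ∫ x in R0..R, ((1 / 2) * ((1 - x / R) ^ 4 * v x ^ 2) - K * u x ^ 2) ≤
        Hen R u u1 v v1 R - Hen R u u1 v v1 R0 := by
      have hd : ∀ x ∈ Icc R0 R, HasDerivAt (Hen R u u1 v v1) _ x := fun x hx =>
        Hen_hasDerivAt h R hRp x (by linarith [hx.1])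
      refine intervalIntegral.integral_le_sub_of_hasDeriv_right_of_le (by linarith)
        (fun x hx => (hd x hx).continuousAt.continuousWithinAt)
        (fun x hx => (hd x (Ioo_subset_Icc_self hx)).hasDerivWithinAt) ?_
        (fun x hx => hint1 x (Ioo_subset_Icc_self hx))
      rw [integrableOn_Icc_iff_integrableOn_Ioc]
      exact (intervalIntegrable_iff_integrableOn_Ioc_of_le (by linarith)).1 hwi
    have hHR : Hen R u u1 v v1 R = 0 := by
      have : R / R = 1 := div_self hRp.ne'
      simp [Hen, this]
    have hHR0 : -Hen R u u1 v v1 R0 ≤ Q := by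
      have hy0 : 0 ≤ R0 / R := by positivity
      have hy1 : R0 / R ≤ 1 := by rw [div_le_one hRp]; linarith
      have hr0 : 0 ≤ 1 - R0 / R := by linarith
      have hr1 : 1 - R0 / R ≤ 1 := by linarith
      refine le_trans (neg_le_abs _) ?_
      unfold Hen
      refine (abs_add_three _ _ _).trans ?_
      rw [hQ]
      have hp : ∀ k : ℕ, |(1 - R0 / R) ^ k| ≤ 1 := fun k => by
        rw [abs_of_nonneg (pow_nonneg hr0 k)]; exact pow_le_one₀ hr0 hr1
      have e1 : |(1 - R0 / R) ^ 4 * (R0 * (v R0 * u1 R0 - v1 R0 * u R0))| ≤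
          R0 * |v R0 * u1 R0 - v1 R0 * u R0| := by
        rw [abs_mul, abs_mul R0, abs_of_pos (show 0 < R0 by linarith)]
        exact mul_le_of_le_one_left (by positivity) (hp 4)
      have e2 : |4 * R0 / R * (1 - R0 / R) ^ 3 * (u R0 * v R0)| ≤ 4 * |u R0 * v R0| := by
        have : 4 * R0 / R * (1 - R0 / R) ^ 3 * (u R0 * v R0) =
          (R0 / R * (1 - R0 / R) ^ 3) * (4 * (u R0 * v R0)) := by ring
        rw [this, abs_mul, abs_mul (4:ℝ), abs_of_pos (show (0:ℝ) < 4 by norm_num)]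
        apply mul_le_of_le_one_left (by positivity)
        rw [abs_mul, abs_of_nonneg hy0]
        exact mul_le_one₀ hy1 (abs_nonneg _) (hp 3)
      have e3 : |(1 - R0 / R) ^ 6 * (v R0 * v1 R0)| ≤ |v R0 * v1 R0| := by
        rw [abs_mul]
        exact mul_le_of_le_one_left (by positivity) (hp 6)
      linarith
    have hUle : ∫ x in R0..R, u x ^ 2 ≤ U := by
      rw [intervalIntegral.integral_of_le (by linarith), hU]
      exact setIntegral_mono_set hUint (Eventually.of_forall fun x => sq_nonneg _)
        (Eventually.of_forall Ioc_subset_Ioi_self)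
    rw [intervalIntegral.integral_sub (hwv.const_mul _) ((hui R0 R le_rfl (by linarith)).const_mul _),
      intervalIntegral.integral_const_mul, intervalIntegral.integral_const_mul] at hle
    have hmono : ∫ x in R0..R / 2, v x ^ 2 ≤ 16 * ∫ x in R0..R, (1 - x / R) ^ 4 * v x ^ 2 := by
      have s1 : ∫ x in R0..R / 2, v x ^ 2 ≤ ∫ x in R0..R / 2, 16 * ((1 - x / R) ^ 4 * v x ^ 2) := by
        apply intervalIntegral.integral_mono_on (by linarith) (hvi _ _ le_rfl (by linarith))
        · apply IntervalIntegrable.const_mul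
          apply hwv.mono_set
          rw [uIcc_of_le (by linarith), uIcc_of_le (by linarith)]
          exact Icc_subset_Icc le_rfl (by linarith)
        · intro x hx
          have hy : x / R ≤ 1 / 2 := by rw [div_le_iff₀ hRp]; linarith [hx.2]
          have : (1 / 2 : ℝ) ^ 4 ≤ (1 - x / R) ^ 4 := by
            apply pow_le_pow_left₀ (by norm_num); linarith
          nlinarith [sq_nonneg (v x)]
      refine s1.trans ?_
      rw [intervalIntegral.integral_const_mul]
      gcongr
      rw [intervalIntegral.integral_of_le (by linarith), intervalIntegral.integral_of_le (by linarith)]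
      apply setIntegral_mono_set
      · exact (intervalIntegrable_iff_integrableOn_Ioc_of_le (by linarith)).1 hwv
      · exact Eventually.of_forall fun x => by positivity
      · exact Eventually.of_forall (Ioc_subset_Ioc_right (by linarith))
    have hn : ∀ x, ‖v x ^ 2‖ = v x ^ 2 := fun x => by
      rw [Real.norm_eq_abs, abs_of_nonneg (sq_nonneg _)]
    simp only [hn]
    rw [hHR] at hle
    have : K * ∫ x in R0..R, u x ^ 2 ≤ K * U := by gcongr
    linarith

lemma monoOn_of_hasDerivAt {f f' : ℝ → ℝ} {R : ℝ} (hf : ∀ x ≥ R, HasDerivAt f (f' x) x)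
    (h : ∀ x ≥ R, 0 ≤ f' x) {x y : ℝ} (hx : R ≤ x) (hxy : x ≤ y) : f x ≤ f y := by
  have : MonotoneOn f (Ici R) := by
    apply monotoneOn_of_deriv_nonneg (convex_Ici R)
    · exact fun x hx => (hf x hx).continuousAt.continuousWithinAt
    · intro x hx
      rw [interior_Ici] at hx
      exact (hf x (le_of_lt hx)).differentiableAt.differentiableWithinAt
    · intro x hx
      rw [interior_Ici] at hx
      rw [(hf x (le_of_lt hx)).deriv]
      exact h x (le_of_lt hx)
  exact this hx (hx.trans hxy) hxy

lemma decay_of_convex {g g1 g2 : ℝ → ℝ} {R : ℝ} (hg : ∀ x ≥ R, HasDerivAt g (g1 x) x)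
    (hg1 : ∀ x ≥ R, HasDerivAt g1 (g2 x) x) (h0 : ∀ x ≥ R, 0 ≤ g x) (h2 : ∀ x ≥ R, g x ≤ g2 x)
    (hi : IntegrableOn g (Ioi R)) : ∀ x ≥ R, g x ≤ (g R * exp R) * exp (-x) := by
  have hn : ∀ x ≥ R, g1 x ≤ 0 := by
    intro x1 hx1
    by_contra hc
    push Not at hc
    have k1 : ∀ y ≥ x1, g1 x1 ≤ g1 y := fun y hy =>
      monoOn_of_hasDerivAt hg1 (fun x hx => (h0 x hx).trans (h2 x hx)) hx1 hy
    refine not_integrable_of_ge hi (x1 := x1 + 1) (by linarith) hc ?_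
    intro x hx
    have := monoOn_of_hasDerivAt (f := fun y => g y - g1 x1 * y) (f' := fun y => g1 y - g1 x1 * 1)
      (R := x1) (fun y hy => (hg y (hx1.trans hy)).sub ((hasDerivAt_id y).const_mul _))
      (fun y hy => by linarith [k1 y hy]) le_rfl (y := x) (by linarith)
    have h3 := h0 x1 hx1
    nlinarith
  have hq : ∀ x ≥ R, g1 x + g x ≤ 0 := by
    intro x1 hx1
    by_contra hc
    push Not at hc
    have hE : ∀ x : ℝ, HasDerivAt (fun y => exp (-y)) (-exp (-x)) x := fun x => by
      simpa using (hasDerivAt_neg x).exp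
    refine not_integrable_of_ge hi hx1 hc ?_
    intro x hx
    have := monoOn_of_hasDerivAt (f := fun y => (g1 y + g y) * exp (-y))
      (f' := fun y => (g2 y + g1 y) * exp (-y) + (g1 y + g y) * (-exp (-y))) (R := R)
      (fun y hy => ((hg1 y hy).add (hg y hy)).mul (hE y))
      (fun y hy => by
        have : (g2 y + g1 y) * exp (-y) + (g1 y + g y) * (-exp (-y)) = (g2 y - g y) * exp (-y) := by
          ring
        rw [this]
        exact mul_nonneg (by linarith [h2 y hy]) (exp_pos _).le) hx1 hx
    have e1 : exp (-x) ≤ exp (-x1) := exp_le_exp.2 (by linarith)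
    have e2 := exp_pos (-x)
    have h4 : (g1 x1 + g x1) * exp (-x) ≤ (g1 x + g x) * exp (-x) :=
      le_trans (mul_le_mul_of_nonneg_left e1 hc.le) this
    have h5 := le_of_mul_le_mul_right h4 e2
    linarith [hn x (hx1.trans hx)]
  intro x hx
  have := monoOn_of_hasDerivAt (f := fun y => -(g y * exp y))
      (f' := fun y => -(g1 y * exp y + g y * exp y)) (R := R)
      (fun y hy => ((hg y hy).mul (Real.hasDerivAt_exp y)).neg)
      (fun y hy => by
        have := hq y hy
        have e2 := exp_pos y
        nlinarith) le_rfl hx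
  rw [exp_neg, ← div_eq_mul_inv, le_div_iff₀ (exp_pos x)]
  linarith

lemma mul_small (A p q : ℝ) (hA : |A| ≤ 1 / 8) : |A * (p * q)| ≤ (p ^ 2 + q ^ 2) / 16 := by
  rw [abs_mul, abs_mul]
  have h1 : |p| * |q| ≤ (p ^ 2 + q ^ 2) / 2 := by
    rw [← sq_abs p, ← sq_abs q]; nlinarith [sq_nonneg (|p| - |q|)]
  have h2 : 0 ≤ |p| * |q| := by positivity
  nlinarith

lemma sqrt_bd {a K x : ℝ} (hK : 0 ≤ K) (h : a ^ 2 ≤ K * exp (-x)) :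
    |a| ≤ (K + 1) * exp (-x / 2) := by
  apply abs_le_of_sq_le_sq _ (by positivity)
  have : exp (-x) = exp (-x / 2) ^ 2 := by rw [← exp_nat_mul]; congr 1; push_cast; ring
  rw [this] at h
  have := sq_nonneg (exp (-x/2))
  nlinarith

lemma lemD {f f1 h : ℝ → ℝ} {k : ℕ} {R C : ℝ} (hR : 1 ≤ R)
    (hf : ∀ x ≥ R, HasDerivAt f (f1 x) x)
    (hf1 : ∀ x ≥ R, HasDerivAt (fun y => y ^ k * f1 y) (h x) x)
    (b1 : ∀ x ≥ R, |f x| ≤ C * exp (-x / 2)) (b2 : ∀ x ≥ R, |h x| ≤ C * x ^ k * exp (-x / 2)) :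
    ∀ x ≥ R, |f1 x| ≤ 3 * 2 ^ k * C * exp (-x / 2) := by
  intro x hx
  have hx1 : 1 ≤ x := hR.trans hx
  have hC : 0 ≤ C := by
    have := (abs_nonneg _).trans (b1 x hx)
    by_contra hc
    push Not at hc
    nlinarith [exp_pos (-x / 2)]
  have hexp : ∀ y ≥ x, exp (-y / 2) ≤ exp (-x / 2) := fun y hy => exp_le_exp.2 (by linarith)
  obtain ⟨ξ, hξ, e1⟩ := exists_hasDerivAt_eq_slope f f1 (show x < x + 1 by linarith)
    (fun y hy => (hf y (hx.trans hy.1)).continuousAt.continuousWithinAt)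
    (fun y hy => hf y (hx.trans hy.1.le))
  obtain ⟨η, hη, e2⟩ := exists_hasDerivAt_eq_slope (fun y => y ^ k * f1 y) h hξ.1
    (fun y hy => (hf1 y (hx.trans hy.1)).continuousAt.continuousWithinAt)
    (fun y hy => hf1 y (hx.trans hy.1.le))
  have hne : ξ - x ≠ 0 := by have := hξ.1; linarith [sub_pos.2 hξ.1] |> fun (h : 0 < ξ - x) => h.ne'
  rw [eq_div_iff hne] at e2
  have p2 : (x + 1) ^ k ≤ 2 ^ k * x ^ k := by
    rw [← mul_pow]; apply pow_le_pow_left₀ (by linarith); linarith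
  have B1 : |f1 ξ| ≤ 2 * C * exp (-x / 2) := by
    rw [e1]
    have : x + 1 - x = 1 := by ring
    rw [this, div_one]
    have t1 := b1 x hx
    have t2 := b1 (x + 1) (by linarith)
    have t3 := hexp (x + 1) (by linarith)
    have t4 : C * exp (-(x + 1) / 2) ≤ C * exp (-x / 2) := by gcongr
    have := abs_sub (f (x + 1)) (f x)
    linarith
  have B2 : |h η * (ξ - x)| ≤ C * (2 ^ k * x ^ k) * exp (-x / 2) := by
    rw [abs_mul]
    have t1 := b2 η (hx.trans hη.1.le)
    have t2 : |ξ - x| ≤ 1 := by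
      rw [abs_of_pos (sub_pos.2 hξ.1)]; linarith [hξ.2]
    have t3 : C * η ^ k * exp (-η / 2) ≤ C * (2 ^ k * x ^ k) * exp (-x / 2) := by
      have : η ^ k ≤ 2 ^ k * x ^ k := le_trans
        (pow_le_pow_left₀ (by linarith [hη.1]) (by linarith [hη.2, hξ.2]) k) p2
      have := hexp η hη.1.le
      gcongr
    calc |h η| * |ξ - x| ≤ |h η| * 1 := by gcongr
      _ ≤ _ := by linarith
  have B3 : |ξ ^ k * f1 ξ| ≤ (2 ^ k * x ^ k) * (2 * C * exp (-x / 2)) := by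
    have hξ0 : 0 ≤ ξ := by linarith [hξ.1]
    rw [abs_mul, abs_of_nonneg (pow_nonneg hξ0 k)]
    have : ξ ^ k ≤ 2 ^ k * x ^ k := le_trans
        (pow_le_pow_left₀ hξ0 (by linarith [hξ.2]) k) p2
    gcongr
  have hxk : 0 < x ^ k := by positivity
  have B4 : x ^ k * |f1 x| ≤ x ^ k * (3 * 2 ^ k * C * exp (-x / 2)) := by
    rw [← abs_of_pos hxk, ← abs_mul, abs_of_pos hxk]
    have : x ^ k * f1 x = ξ ^ k * f1 ξ - h η * (ξ - x) := by rw [e2]; ring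
    rw [this]
    have := abs_sub (ξ ^ k * f1 ξ) (h η * (ξ - x))
    linarith
  exact le_of_mul_le_mul_left B4 hxk

lemma uv_decay {m c lam : ℝ} {u u1 v v1 : ℝ → ℝ} (h : VSys m c lam u u1 v v1)
    (hL2 : IntegrableOn (fun x => u x ^ 2) (Ioi 1)) :
    ∃ R C : ℝ, 1 ≤ R ∧ 0 ≤ C ∧ ∀ x ≥ R, |u x| ≤ C * exp (-x / 2) ∧ |v x| ≤ C * exp (-x / 2) := by
  obtain ⟨R0, hR0, hv2⟩ := v_sq_integrable h hL2
  set R : ℝ := R0 + 8 * (1 + |lam| + |m| + |c|) with hR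
  have hRR0 : R0 ≤ R := by
    have : 0 ≤ 8 * (1 + |lam| + |m| + |c|) := by positivity
    linarith
  have hR1 : 1 ≤ R := hR0.trans hRR0
  have hgi : IntegrableOn (fun x => u x ^ 2 + v x ^ 2) (Ioi R) :=
    (hL2.mono_set (Ioi_subset_Ioi hR1)).add (hv2.mono_set (Ioi_subset_Ioi hRR0))
  have D := decay_of_convex (g := fun x => u x ^ 2 + v x ^ 2)
    (g1 := fun x => 2 * (u x * u1 x + v x * v1 x))
    (g2 := fun x => 2 * (u1 x * u1 x + u x * (u x - u1 x / x + v x / x)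
      + (v1 x * v1 x + v x * (v x + lam * u x / x - m * v1 x / x - c * v x / x ^ 2)))) (R := R)
    (fun x hx => by
      have := ((h.hu x (by linarith)).pow 2).add ((h.hv x (by linarith)).pow 2)
      convert! this using 1
      simp; ring)
    (fun x hx => (((h.hu x (by linarith)).mul (h.hu1 x (by linarith))).add
        ((h.hv x (by linarith)).mul (h.hv1 x (by linarith)))).const_mul 2)
    (fun x hx => by positivity)
    (fun x hx => by
      have hx0 : 0 < x := by linarith
      have hx1 : 1 ≤ x := by linarith
      have ha1 := abs_nonneg lam
      have ha2 := abs_nonneg m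
      have ha3 := abs_nonneg c
      have k1 : |1 / x| ≤ 1 / 8 := by
        rw [abs_div, abs_of_pos hx0, div_le_iff₀ hx0, abs_one]; linarith
      have k2 : |(1 + lam) / x| ≤ 1 / 8 := by
        rw [abs_div, abs_of_pos hx0, div_le_iff₀ hx0]
        have := abs_add_le 1 lam
        rw [abs_one] at this
        linarith
      have k3 : |m / x| ≤ 1 / 8 := by
        rw [abs_div, abs_of_pos hx0, div_le_iff₀ hx0]; linarith
      have k4 : |c / x ^ 2| ≤ 1 / 8 := by
        rw [abs_div, abs_of_pos (by positivity : 0 < x ^ 2), div_le_iff₀ (by positivity)]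
        nlinarith
      have m1 := abs_le.1 (mul_small _ (u x) (u1 x) k1)
      have m2 := abs_le.1 (mul_small _ (u x) (v x) k2)
      have m3 := abs_le.1 (mul_small _ (v x) (v1 x) k3)
      have m4 := abs_le.1 (mul_small _ (v x) (v x) k4)
      have e : 2 * (u1 x * u1 x + u x * (u x - u1 x / x + v x / x)
      + (v1 x * v1 x + v x * (v x + lam * u x / x - m * v1 x / x - c * v x / x ^ 2))) =
        2 * (u1 x ^ 2 + u x ^ 2 + v1 x ^ 2 + v x ^ 2 - 1 / x * (u x * u1 x) + (1 + lam) / x * (u x * v x)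
         - m / x * (v x * v1 x) - c / x ^ 2 * (v x * v x)) := by field_simp; ring
      rw [e]
      have q1 := sq_nonneg (u1 x)
      have q2 := sq_nonneg (v1 x)
      have q3 := sq_nonneg (u x)
      have q4 := sq_nonneg (v x)
      linarith only [m1.2, m2.1, m3.2, m4.2, q1, q2, q3, q4]) hgi
  set K : ℝ := (u R ^ 2 + v R ^ 2) * exp R with hK
  have hK0 : 0 ≤ K := by positivity
  refine ⟨R, K + 1, hR1, by linarith, fun x hx => ?_⟩
  have := D x hx
  exact ⟨sqrt_bd hK0 (by nlinarith [sq_nonneg (v x)]), sqrt_bd hK0 (by nlinarith [sq_nonneg (u x)])⟩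

/-- exponential decay of the whole system -/
lemma vsys_decay {k : ℕ} {c lam : ℝ} {u u1 v v1 : ℝ → ℝ} (h : VSys k c lam u u1 v v1)
    (hL2 : IntegrableOn (fun x => u x ^ 2) (Ioi 1)) :
    ∃ R C : ℝ, 1 ≤ R ∧ 0 ≤ C ∧ ∀ x ≥ R, |u x| ≤ C * exp (-x / 2) ∧ |u1 x| ≤ C * exp (-x / 2) ∧
      |v x| ≤ C * exp (-x / 2) ∧ |v1 x| ≤ C * exp (-x / 2) := by
  obtain ⟨R, C, hR, hC, hb⟩ := uv_decay h hL2
  set L : ℝ := 2 + |lam| + |c| with hL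
  have hl1 := abs_nonneg lam
  have hl2 := abs_nonneg c
  have hL1 : 1 ≤ L := by linarith
  have hCL : C ≤ L * C := le_mul_of_one_le_left hC hL1
  have d1 := lemD (f := u) (f1 := u1) (h := fun x => x * u x + v x) (k := 1) (C := L * C) hR
    (fun x hx => h.hu x (by linarith))
    (fun x hx => by
      have hx0 : 0 < x := by linarith
      have := (hasDerivAt_id x).mul (h.hu1 x hx0)
      simp only [pow_one]
      convert! this using 1
      simp only [id]; field_simp; ring)
    (fun x hx => (hb x hx).1.trans (by gcongr))
    (fun x hx => by
      have hx1 : 1 ≤ x := by linarith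
      have := hb x hx
      have e0 := exp_pos (-x / 2)
      have t1 := abs_add_le (x * u x) (v x)
      rw [abs_mul, abs_of_pos (show 0 < x by linarith)] at t1
      have t2 : x * |u x| ≤ x * (C * exp (-x / 2)) := by gcongr; exact this.1
      have t3 : C * exp (-x / 2) ≤ x * (C * exp (-x / 2)) := le_mul_of_one_le_left (by positivity) hx1
      have t4 : 2 * (x * (C * exp (-x / 2))) ≤ L * (x * (C * exp (-x / 2))) := by
        gcongr; linarith
      simp only [pow_one]
      linarith [this.2])
  have d2 := lemD (f := v) (f1 := v1)
    (h := fun x => x ^ k * (v x + lam * u x / x - c * v x / x ^ 2)) (k := k) (C := L * C) hR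
    (fun x hx => h.hv x (by linarith))
    (fun x hx => by
      have hx0 : 0 < x := by linarith
      have := (hasDerivAt_pow k x).mul (h.hv1 x hx0)
      convert! this using 1
      rcases k with _ | k
      · simp
      · simp only [Nat.add_sub_cancel]
        push_cast
        field_simp; ring)
    (fun x hx => (hb x hx).2.trans (by gcongr))
    (fun x hx => by
      have hx1 : 1 ≤ x := by linarith
      have hx0 : 0 < x := by linarith
      have := hb x hx
      have e0 := exp_pos (-x / 2)
      rw [abs_mul, abs_of_pos (by positivity : 0 < x ^ k)]
      have t1 := abs_sub (v x + lam * u x / x) (c * v x / x ^ 2)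
      have t2 := abs_add_le (v x) (lam * u x / x)
      have t3 : |lam * u x / x| ≤ |lam| * (C * exp (-x / 2)) := by
        rw [abs_div, abs_mul, abs_of_pos hx0, div_le_iff₀ hx0]
        calc |lam| * |u x| ≤ |lam| * (C * exp (-x / 2)) := by gcongr; exact this.1
          _ ≤ _ := le_mul_of_one_le_right (by positivity) hx1
      have t4 : |c * v x / x ^ 2| ≤ |c| * (C * exp (-x / 2)) := by
        rw [abs_div, abs_mul, abs_of_pos (by positivity : 0 < x ^ 2), div_le_iff₀ (by positivity)]
        calc |c| * |v x| ≤ |c| * (C * exp (-x / 2)) := by gcongr; exact this.2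
          _ ≤ _ := le_mul_of_one_le_right (by positivity) (one_le_pow₀ hx1)
      have t5 : |v x + lam * u x / x - c * v x / x ^ 2| ≤ L * C * exp (-x / 2) := by
        have : L * C * exp (-x / 2) = 2 * (C * exp (-x / 2)) + |lam| * (C * exp (-x / 2))
          + |c| * (C * exp (-x / 2)) := by rw [hL]; ring
        have : 0 ≤ C * exp (-x / 2) := by positivity
        linarith
      calc x ^ k * |v x + lam * u x / x - c * v x / x ^ 2| ≤ x ^ k * (L * C * exp (-x / 2)) := by gcongr
        _ = _ := by ring)
  refine ⟨R, C + 3 * 2 ^ 1 * (L * C) + 3 * 2 ^ k * (L * C), hR, by positivity, fun x hx => ?_⟩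
  have p1 : 0 ≤ 3 * 2 ^ 1 * (L * C) := by positivity
  have p2 : 0 ≤ 3 * 2 ^ k * (L * C) := by positivity
  refine ⟨(hb x hx).1.trans ?_, (d1 x hx).trans ?_, (hb x hx).2.trans ?_, (d2 x hx).trans ?_⟩ <;>
  · gcongr
    linarith

/-- The basic first-order system. -/
structure ESys (mu : ℕ) (lam : ℝ) (u u1 w w1 : ℝ → ℝ) : Prop where
  hu : ∀ x > 0, HasDerivAt u (u1 x) x
  hu1 : ∀ x > 0, HasDerivAt u1 (u x - u1 x / x + w x / x ^ 2) x
  hw : ∀ x > 0, HasDerivAt w (w1 x) x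
  hw1 : ∀ x > 0, HasDerivAt w1 (w x + lam * u x - (2 * mu + 1) * w1 x / x - mu ^ 2 * w x / x ^ 2) x

lemma ESys.toVSys {mu : ℕ} {lam : ℝ} {u u1 w w1 : ℝ → ℝ} (h : ESys mu lam u u1 w w1) :
    VSys ((2 * mu + 3 : ℕ) : ℝ) ((mu + 1) ^ 2) lam u u1 (fun x => w x / x)
      (fun x => w1 x / x - w x / x ^ 2) where
  hu := h.hu
  hu1 := fun x hx => by
    convert h.hu1 x hx using 1
    field_simp
  hv := fun x hx => by
    have := (h.hw x hx).div (hasDerivAt_id x) hx.ne'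
    convert! this using 1
    simp only [id]; field_simp
  hv1 := fun x hx => by
    have := ((h.hw1 x hx).div (hasDerivAt_id x) hx.ne').sub
      ((h.hw x hx).div ((hasDerivAt_id x).pow 2) (by simp [hx.ne']))
    convert! this using 1
    simp only [id, Pi.pow_apply]
    push_cast
    field_simp; ring

lemma ESys.neg {mu : ℕ} {lam : ℝ} {u u1 w w1 : ℝ → ℝ} (h : ESys mu lam u u1 w w1) :
    ESys mu lam (fun x => -u x) (fun x => -u1 x) (fun x => -w x) (fun x => -w1 x) where
  hu := fun x hx => (h.hu x hx).neg
  hu1 := fun x hx => by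
    convert! (h.hu1 x hx).neg using 1
    ring
  hw := fun x hx => (h.hw x hx).neg
  hw1 := fun x hx => by
    convert! (h.hw1 x hx).neg using 1
    ring

lemma monoOn_Ioo {f f' : ℝ → ℝ} {d : ℝ} (hf : ∀ x ∈ Ioo 0 d, HasDerivAt f (f' x) x)
    (h : ∀ x ∈ Ioo 0 d, 0 ≤ f' x) {x y : ℝ} (hx : 0 < x) (hxy : x ≤ y) (hy : y < d) : f x ≤ f y := by
  have : MonotoneOn f (Ioo 0 d) := by
    apply monotoneOn_of_deriv_nonneg (convex_Ioo 0 d)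
    · exact fun x hx => (hf x hx).continuousAt.continuousWithinAt
    · intro x hx
      rw [interior_Ioo] at hx
      exact (hf x hx).differentiableAt.differentiableWithinAt
    · intro x hx
      rw [interior_Ioo] at hx
      rw [(hf x hx).deriv]
      exact h x hx
  exact this ⟨hx, by linarith⟩ ⟨by linarith, hy⟩ hxy

lemma one_sub_log_le {x : ℝ} (hx : 0 < x) : 1 - log x ≤ 1 / x := by
  have := log_le_sub_one_of_pos (inv_pos.2 hx)
  rw [log_inv] at this
  rw [one_div]; linarith

lemma hasDerivAt_pow' (k : ℕ) {x : ℝ} (hx : 0 < x) :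
    HasDerivAt (fun y : ℝ => y ^ k) (k * x ^ k / x) x := by
  have h := hasDerivAt_pow k x
  have e : (k : ℝ) * x ^ k / x = k * x ^ (k - 1) := by
    rcases k with _ | k
    · simp
    · rw [Nat.add_sub_cancel, pow_succ]; field_simp
  rw [e]; exact h

/-- `Bd1` -/
noncomputable def Bd1 (mu : ℕ) (u u1 w w1 : ℝ → ℝ) (x : ℝ) : ℝ :=
  x ^ mu * (x * w1 x + mu * w x) - x ^ (mu + 2) * (x * u1 x) + (mu + 2) * x ^ (mu + 2) * u x

lemma W1_hasDerivAt {mu : ℕ} {lam : ℝ} {u u1 w w1 : ℝ → ℝ} (h : ESys mu lam u u1 w w1)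
    (x : ℝ) (hx : 0 < x) : HasDerivAt (fun x => x ^ mu * (x * w1 x + mu * w x))
      (x ^ (mu + 1) * (w x + lam * u x)) x := by
  have := (hasDerivAt_pow' mu hx).mul (((hasDerivAt_id x).mul (h.hw1 x hx)).add
    ((h.hw x hx).const_mul (mu : ℝ)))
  convert! this using 1
  simp only [id, Pi.mul_apply, Pi.add_apply]
  field_simp; ring

lemma t_hasDerivAt {mu : ℕ} {lam : ℝ} {u u1 w w1 : ℝ → ℝ} (h : ESys mu lam u u1 w w1)
    (x : ℝ) (hx : 0 < x) : HasDerivAt (fun x => x * u1 x) (x * u x + w x / x) x := by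
  have := (hasDerivAt_id x).mul (h.hu1 x hx)
  convert! this using 1
  simp only [id]
  field_simp; ring

lemma Bd1_hasDerivAt {mu : ℕ} {lam : ℝ} {u u1 w w1 : ℝ → ℝ} (h : ESys mu lam u u1 w w1)
    (x : ℝ) (hx : 0 < x) : HasDerivAt (Bd1 mu u u1 w w1)
      (x ^ (mu + 1) * u x * (lam + (mu + 2) ^ 2 - x ^ 2)) x := by
  have := ((W1_hasDerivAt h x hx).sub ((hasDerivAt_pow' (mu + 2) hx).mul (t_hasDerivAt h x hx))).add
    (((hasDerivAt_pow' (mu + 2) hx).const_mul ((mu : ℝ) + 2)).mul (h.hu x hx))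
  convert! this using 1
  push_cast
  field_simp; ring

lemma f_hasDerivAt {mu : ℕ} {lam : ℝ} {u u1 w w1 : ℝ → ℝ} (h : ESys mu lam u u1 w w1)
    (x : ℝ) (hx : 0 < x) : HasDerivAt (fun x => x ^ mu * w x - x ^ (mu + 2) * u x)
      ((Bd1 mu u u1 w w1 x - (2 * mu + 4) * x ^ (mu + 2) * u x) / x) x := by
  have := ((hasDerivAt_pow' mu hx).mul (h.hw x hx)).sub
    ((hasDerivAt_pow' (mu + 2) hx).mul (h.hu x hx))
  convert! this using 1
  unfold Bd1
  push_cast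
  field_simp; ring

lemma lemE {h h' : ℝ → ℝ} {k : ℕ} {d C : ℝ} (hd : 0 < d) (hk : 0 < k) (hC : 0 ≤ C)
    (hh : ∀ x > 0, HasDerivAt h (h' x) x) (hb : ∀ x ∈ Ioo 0 d, |h' x| ≤ C / x ^ (k + 1)) :
    ∃ C', 0 ≤ C' ∧ ∀ x ∈ Ioo 0 (d / 2), |h x| ≤ C' / x ^ k := by
  have hpow : ∀ x > 0, HasDerivAt (fun y : ℝ => C / k / y ^ k) (-(C / x ^ (k + 1))) x := by
    intro x hx
    have := (hasDerivAt_const x (C / k)).div (hasDerivAt_pow' k hx) (by positivity)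
    convert! this using 1
    field_simp; ring
  refine ⟨(|h (d / 2)|) * (d / 2) ^ k + C / k, by positivity, fun x hx => ?_⟩
  have hx0 : 0 < x := hx.1
  have m1 := monoOn_Ioo (f := fun y => h y - C / k / y ^ k) (d := d)
    (fun y hy => (hh y hy.1).sub (hpow y hy.1))
    (fun y hy => by have := (abs_le.1 (hb y hy)).1; linarith) hx.1 hx.2.le (by linarith)
  have m2 := monoOn_Ioo (f := fun y => -h y - C / k / y ^ k) (d := d)
    (fun y hy => (hh y hy.1).neg.sub (hpow y hy.1))
    (fun y hy => by have := (abs_le.1 (hb y hy)).2; linarith) hx.1 hx.2.le (by linarith)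
  have p : 0 ≤ C / k / (d / 2) ^ k := by positivity
  have q : |h (d / 2)| ≤ |h (d / 2)| * (d / 2) ^ k / x ^ k := by
    rw [le_div_iff₀ (by positivity)]
    gcongr
    exact hx.2.le
  have q1 := le_abs_self (h (d / 2))
  have q2 := neg_le_abs (h (d / 2))
  rw [add_div, abs_le]
  constructor <;> linarith

lemma ell_le {mu : ℕ} {lam : ℝ} {u u1 w w1 : ℝ → ℝ} (h : ESys mu lam u u1 w w1)
    {K d : ℝ} (hd : 0 < d) (hd1 : d ≤ 1) (hK : 0 ≤ K) (hu : ∀ x ∈ Ioo 0 d, |u x| ≤ K * (1 - log x))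
    {l : ℝ} (hl : Tendsto (Bd1 mu u u1 w w1) (nhdsWithin 0 (Ioi 0)) (nhds l)) : l ≤ 0 := by
  by_contra hc
  push Not at hc
  have hux : ∀ x ∈ Ioo 0 d, |u x| ≤ K / x := fun x hx => (hu x hx).trans (by
    have := one_sub_log_le hx.1
    calc K * (1 - log x) ≤ K * (1 / x) := by gcongr
      _ = _ := by ring)
  have hux2 : ∀ x ∈ Ioo 0 d, |x ^ 2 * u x| ≤ K * x := fun x hx => by
    have := hux x hx
    have hx0 := hx.1
    rw [le_div_iff₀ hx0] at this
    rw [abs_mul, abs_of_pos (by positivity : 0 < x ^ 2)]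
    nlinarith
  -- choose a good d1
  have ev1 : ∀ᶠ x in nhdsWithin (0:ℝ) (Ioi 0), l * (3 / 4) < Bd1 mu u u1 w w1 x :=
    hl.eventually (lt_mem_nhds (by linarith))
  obtain ⟨e1, he1, hB1⟩ := mem_nhdsGT_iff_exists_Ioo_subset.1 ev1
  have he1 : 0 < e1 := he1
  set d1 : ℝ := min (min d e1) (min (l / (4 * ((2 * mu + 4) * (K + 1)))) (1 / (2 * (K + 1)))) with hd1'
  have hd1p : 0 < d1 := by
    refine lt_min (lt_min hd he1) (lt_min ?_ ?_) <;> positivity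
  have d1d : d1 ≤ d := (min_le_left _ _).trans (min_le_left _ _)
  have d1e : d1 ≤ e1 := (min_le_left _ _).trans (min_le_right _ _)
  have d1l : d1 ≤ l / (4 * ((2 * mu + 4) * (K + 1))) := (min_le_right _ _).trans (min_le_left _ _)
  have d1k : d1 ≤ 1 / (2 * (K + 1)) := (min_le_right _ _).trans (min_le_right _ _)
  rw [le_div_iff₀ (by positivity)] at d1l d1k
  have hthf : ∀ x ∈ Ioo 0 d1, l / 2 ≤ Bd1 mu u u1 w w1 x - (2 * mu + 4) * x ^ (mu + 2) * u x := by
    intro x hx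
    have hx0 := hx.1
    have hx1 : x ≤ 1 := by linarith [hx.2]
    have b1 : l * (3 / 4) < Bd1 mu u u1 w w1 x := hB1 ⟨hx.1, hx.2.trans_le d1e⟩
    have b2 := hux2 x ⟨hx.1, hx.2.trans_le d1d⟩
    have b3 : |(2 * mu + 4) * x ^ (mu + 2) * u x| ≤ l / 4 := by
      have : (2 * mu + 4) * x ^ (mu + 2) * u x = (2 * mu + 4) * (x ^ mu * (x ^ 2 * u x)) := by ring
      rw [this, abs_mul, abs_mul, abs_of_pos (by positivity : (0:ℝ) < 2 * mu + 4),
        abs_of_pos (by positivity : 0 < x ^ mu)]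
      have c1 : x ^ mu ≤ 1 := pow_le_one₀ hx0.le hx1
      have c2 : x ^ mu * |x ^ 2 * u x| ≤ K * x :=
        (mul_le_of_le_one_left (abs_nonneg _) c1).trans b2
      have c3 : K * x ≤ (K + 1) * d1 := by
        have := hx.2
        nlinarith
      calc (2 * (mu:ℝ) + 4) * (x ^ mu * |x ^ 2 * u x|) ≤ (2 * mu + 4) * ((K + 1) * d1) := by
            exact mul_le_mul_of_nonneg_left (c2.trans c3) (by positivity)
        _ ≤ l / 4 := by linarith
    have := le_abs_self ((2 * mu + 4) * x ^ (mu + 2) * u x)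
    linarith
  -- f → -∞
  set c : ℝ := d1 / 2 with hcdef
  have hcp : 0 < c := by positivity
  have hcd : c < d1 := by linarith
  set f : ℝ → ℝ := fun x => x ^ mu * w x - x ^ (mu + 2) * u x with hf
  have hfle : ∀ x ∈ Ioc 0 c, f x ≤ f c + l / 2 * (log x - log c) := by
    intro x hx
    have := monoOn_Ioo (f := fun y => f y - l / 2 * log y) (d := d1)
      (fun y hy => (f_hasDerivAt h y hy.1).sub ((Real.hasDerivAt_log hy.1.ne').const_mul (l / 2)))
      (fun y hy => by
        have := hthf y hy
        have hy0 := hy.1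
        rw [← div_eq_mul_inv, ← sub_div]
        exact div_nonneg (by linarith) hy0.le) hx.1 hx.2 hcd
    linarith
  -- choose d2 with f ≤ -2
  set d2 : ℝ := min c (exp (log c - (2 / l) * (|f c| + 2))) with hd2
  have hd2p : 0 < d2 := lt_min hcp (exp_pos _)
  have hd2c : d2 ≤ c := min_le_left _ _
  have hf2 : ∀ x ∈ Ioc 0 d2, f x ≤ -2 := by
    intro x hx
    have h1 := hfle x ⟨hx.1, hx.2.trans hd2c⟩
    have h2 : log x ≤ log c - (2 / l) * (|f c| + 2) := by
      rw [← log_exp (log c - (2 / l) * (|f c| + 2))]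
      exact log_le_log hx.1 (hx.2.trans (min_le_right _ _))
    have h3 : l / 2 * (log x - log c) ≤ l / 2 * (-((2 / l) * (|f c| + 2))) := by
      gcongr; linarith
    have h4 : l / 2 * (-((2 / l) * (|f c| + 2))) = -(|f c| + 2) := by field_simp
    have := le_abs_self (f c)
    linarith
  have hth2 : ∀ x ∈ Ioc 0 d2, x * u x + w x / x ≤ -(1 / x) := by
    intro x hx
    have hx0 := hx.1
    have hxd1 : x < d1 := by linarith [hx.2]
    have hx1 : x ≤ 1 := by linarith [hx.2]
    have h1 := hf2 x hx
    have b2 := (abs_le.1 (hux2 x ⟨hx.1, hxd1.trans_le d1d⟩)).2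
    have c3 : K * x ≤ (K + 1) * d1 := by nlinarith
    have c1 : x ^ mu ≤ 1 := pow_le_one₀ hx0.le hx1
    have c0 : 0 < x ^ mu := by positivity
    have e1 : f x = x ^ mu * (w x - x ^ 2 * u x) := by rw [hf]; ring
    have e2 : w x - x ^ 2 * u x ≤ -2 := by
      by_contra hcc
      push Not at hcc
      rw [e1] at h1
      nlinarith
    have : x * u x + w x / x = (x ^ 2 * u x + w x) / x := by field_simp
    rw [this, ← neg_div]
    gcongr
    linarith
  have ht : ∀ x ∈ Ioo 0 d2, ∀ y ∈ Ioo 0 d2, x ≤ y → y * u1 y + log y ≤ x * u1 x + log x := by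
    intro x hx y hy hxy
    have := monoOn_Ioo (f := fun y => -(y * u1 y + log y)) (d := d2)
      (fun y hy => ((t_hasDerivAt h y hy.1).add (Real.hasDerivAt_log hy.1.ne')).neg)
      (fun y hy => by
        have := hth2 y ⟨hy.1, hy.2.le⟩
        rw [one_div] at this
        linarith) hx.1 hxy hy.2
    linarith
  set y0 : ℝ := d2 / 2 with hy0
  have hy0p : 0 < y0 := by positivity
  have hy0d : y0 < d2 := by linarith
  set c1 : ℝ := y0 * u1 y0 + log y0 with hc1
  set z0 : ℝ := y0 / 2 with hz0
  have hz0p : 0 < z0 := by positivity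
  set c2 : ℝ := u z0 + log z0 ^ 2 / 2 - c1 * log z0 with hc2
  have hfin : ∀ x ∈ Ioc 0 z0, u x ≤ -(log x ^ 2 / 2) + c1 * log x + c2 := by
    intro x hx
    have := monoOn_Ioo (f := fun y => u y + log y ^ 2 / 2 - c1 * log y)
      (f' := fun y => u1 y + (log y * y⁻¹) - c1 * y⁻¹) (d := y0)
      (fun y hy => by
        have := ((h.hu y hy.1).add (((Real.hasDerivAt_log hy.1.ne').pow 2).div_const 2)).sub
          ((Real.hasDerivAt_log hy.1.ne').const_mul c1)
        convert! this using 1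
        simp; ring)
      (fun y hy => by
        have := ht y ⟨hy.1, hy.2.trans hy0d⟩ y0 ⟨hy0p, hy0d⟩ hy.2.le
        have hy' := hy.1
        have e : u1 y + (log y * y⁻¹) - c1 * y⁻¹ = (y * u1 y + log y - c1) / y := by field_simp
        rw [e]
        exact div_nonneg (by linarith) hy'.le) hx.1 hx.2 (by linarith)
    linarith
  -- contradiction
  set L : ℝ := 2 * (|c1| + |c2| + K + 1) + |log z0| + 1 with hL
  have hL0 : 0 < L := by positivity
  have a1 := hfin (exp (-L)) ⟨exp_pos _, by
    rw [← exp_log hz0p]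
    apply exp_le_exp.2
    have := neg_abs_le (log z0)
    have : 0 ≤ 2 * (|c1| + |c2| + K + 1) := by positivity
    linarith⟩
  have a2 := (abs_le.1 (hu (exp (-L)) ⟨exp_pos _, by
    rw [← exp_log hd]
    apply exp_lt_exp.2
    have h1 : log z0 ≤ log d := log_le_log hz0p (by linarith)
    have := neg_abs_le (log z0)
    have : 0 ≤ 2 * (|c1| + |c2| + K + 1) := by positivity
    linarith⟩)).1
  rw [log_exp] at a1 a2
  have g1 := neg_abs_le c1
  have g2 := le_abs_self c2
  have g3 : 2 * (|c1| + |c2| + K + 1) ≤ L := by have := abs_nonneg (log z0); linarith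
  have g5 : 1 ≤ L := by
    have := abs_nonneg (log z0)
    have : 0 ≤ 2 * (|c1| + |c2| + K + 1) := by positivity
    linarith
  have g4 : L * (2 * (|c1| + |c2| + K + 1)) ≤ L * L := by gcongr
  nlinarith [abs_nonneg c1, abs_nonneg c2]

lemma limit_of_bdd_deriv {f f' : ℝ → ℝ} {d K : ℝ} (hd : 0 < d) (hK : 0 ≤ K)
    (hf : ∀ x ∈ Ioo 0 d, HasDerivAt f (f' x) x) (hb : ∀ x ∈ Ioo 0 d, |f' x| ≤ K) :
    ∃ l, Tendsto f (nhdsWithin 0 (Ioi 0)) (nhds l) := by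
  have hL : LipschitzOnWith ⟨K, hK⟩ f (Ioo 0 d) := by
    apply Convex.lipschitzOnWith_of_nnnorm_hasDerivWithin_le (f' := f') (convex_Ioo 0 d)
    · exact fun x hx => (hf x hx).hasDerivWithinAt
    · intro x hx
      exact hb x hx
  obtain ⟨g, hg, hfg⟩ := hL.extend_real
  refine ⟨g 0, ?_⟩
  have : Tendsto g (nhdsWithin 0 (Ioi 0)) (nhds (g 0)) :=
    (hg.continuous.tendsto 0).mono_left nhdsWithin_le_nhds
  refine this.congr' ?_
  filter_upwards [Ioo_mem_nhdsGT hd] with x hx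
  exact (hfg hx).symm

lemma near_zero {mu : ℕ} {lam : ℝ} {u u1 w w1 : ℝ → ℝ} (h : ESys mu lam u u1 w w1)
    {K d : ℝ} (hd : 0 < d) (hd1 : d ≤ 1) (hK : 0 ≤ K) (hu : ∀ x ∈ Ioo 0 d, |u x| ≤ K * (1 - log x)) :
    Tendsto (fun x => x ^ mu * (x * w1 x + mu * w x)) (nhdsWithin 0 (Ioi 0)) (nhds 0) ∧
    ∃ C e, 0 ≤ C ∧ 0 < e ∧ e ≤ d ∧ ∀ x ∈ Ioo 0 e, |u x| ≤ C / x ∧ |x ^ mu * w x| ≤ C / x ∧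
      |x ^ mu * (x * u1 x)| ≤ C / x := by
  have hux : ∀ x ∈ Ioo 0 d, |u x| ≤ K / x := fun x hx => (hu x hx).trans (by
    have := one_sub_log_le hx.1
    calc K * (1 - log x) ≤ K * (1 / x) := by gcongr
      _ = _ := by ring)
  have hpu : ∀ k : ℕ, ∀ x ∈ Ioo 0 d, |x ^ (k + 1) * u x| ≤ K := fun k x hx => by
    have h1 := hux x hx
    have hx0 := hx.1
    have hx1 : x ≤ 1 := by linarith [hx.2]
    rw [le_div_iff₀ hx0] at h1
    rw [abs_mul, abs_of_pos (by positivity : 0 < x ^ (k+1))]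
    have : x ^ (k + 1) ≤ x := by
      rw [pow_succ]; exact mul_le_of_le_one_left hx0.le (pow_le_one₀ hx0.le hx1)
    nlinarith [abs_nonneg (u x)]
  set M : ℝ := K * (|lam| + (mu + 2) ^ 2 + 1) with hM
  have hM0 : 0 ≤ M := by positivity
  obtain ⟨l, hl⟩ := limit_of_bdd_deriv hd hM0 (fun x hx => Bd1_hasDerivAt h x hx.1) (fun x hx => by
    rw [abs_mul, hM]
    apply mul_le_mul (hpu mu x hx) _ (abs_nonneg _) hK
    have hx0 := hx.1
    have hx1 : x ≤ 1 := by linarith [hx.2]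
    have : x ^ 2 ≤ 1 := pow_le_one₀ hx0.le hx1
    have l1 := le_abs_self lam
    have l2 := neg_abs_le lam
    have l3 : (0:ℝ) ≤ (mu + 2) ^ 2 := by positivity
    have l4 := sq_nonneg x
    rw [abs_le]; constructor <;> linarith)
  have hl0 : l = 0 := by
    apply le_antisymm (ell_le h hd hd1 hK hu hl)
    have h2 := ell_le h.neg hd hd1 hK (fun x hx => by rw [abs_neg]; exact hu x hx) (l := -l) (by
      refine hl.neg.congr fun x => ?_
      unfold Bd1; ring)
    linarith
  rw [hl0] at hl
  -- Bd1 bounded near zero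
  obtain ⟨e1, he1, hB1⟩ := mem_nhdsGT_iff_exists_Ioo_subset.1
    (hl.eventually (Metric.ball_mem_nhds (0:ℝ) one_pos))
  have he1 : 0 < e1 := he1
  set d1 : ℝ := min d e1
  have hd1p : 0 < d1 := lt_min hd he1
  have d1d : d1 ≤ d := min_le_left _ _
  have d1e : d1 ≤ e1 := min_le_right _ _
  have hBb : ∀ x ∈ Ioo 0 d1, |Bd1 mu u u1 w w1 x| ≤ 1 := fun x hx => by
    have : Bd1 mu u u1 w w1 x ∈ Metric.ball (0:ℝ) 1 := hB1 ⟨hx.1, hx.2.trans_le d1e⟩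
    rw [mem_ball_zero_iff] at this
    exact this.le
  obtain ⟨C1, hC1, hf⟩ := lemE (h := fun x => x ^ mu * w x - x ^ (mu + 2) * u x) (k := 1)
    (C := 1 + (2 * mu + 4) * K) hd1p one_pos (by positivity) (fun x hx => f_hasDerivAt h x hx)
    (fun x hx => by
      have hx0 := hx.1
      have hx1 : x ≤ 1 := by linarith [hx.2]
      have b1 := hBb x hx
      have b2 := hpu (mu + 1) x ⟨hx.1, hx.2.trans_le d1d⟩
      have b3 : |Bd1 mu u u1 w w1 x - (2 * mu + 4) * x ^ (mu + 2) * u x| ≤ 1 + (2 * mu + 4) * K := by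
        refine (abs_sub _ _).trans ?_
        rw [mul_assoc, abs_mul (2 * (mu:ℝ) + 4), abs_of_pos (by positivity : (0:ℝ) < 2 * mu + 4)]
        gcongr
      rw [abs_div, abs_of_pos hx0]
      have : x ^ (1 + 1) ≤ x := by rw [pow_succ, pow_one]; nlinarith only [hx0, hx1]
      gcongr)
  set d2 := d1 / 2
  have hd2p : 0 < d2 := by positivity
  have d2d : d2 ≤ d := by
    have : d1 / 2 ≤ d1 := by linarith
    exact this.trans d1d
  have hW : ∀ x ∈ Ioo 0 d2, |x ^ mu * w x| ≤ (C1 + K) / x := fun x hx => by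
    have hx0 := hx.1
    have hx1 : x ≤ 1 := by linarith [hx.2]
    have b1 := hf x hx
    have b2 := hpu (mu + 1) x ⟨hx.1, hx.2.trans_le d2d⟩
    have e : x ^ mu * w x = (x ^ mu * w x - x ^ (mu + 2) * u x) + x ^ (mu + 1 + 1) * u x := by ring
    rw [e]
    refine (abs_add_le _ _).trans ?_
    rw [add_div]
    rw [pow_one] at b1
    refine add_le_add b1 (b2.trans ?_)
    rw [le_div_iff₀ hx0]
    exact mul_le_of_le_one_right hK hx1
  obtain ⟨C2, hC2, ht⟩ := lemE (h := fun x => x * u1 x) (k := mu + 1) (C := K + (C1 + K)) hd2p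
    (by omega) (by positivity) (fun x hx => t_hasDerivAt h x hx) (fun x hx => by
      have hx0 := hx.1
      have hx1 : x ≤ 1 := by linarith [hx.2]
      have b1 := hW x hx
      have b2 := hpu (mu + 2) x ⟨hx.1, hx.2.trans_le d2d⟩
      have e : x * u x + w x / x = (x ^ (mu + 2 + 1) * u x + x * (x ^ mu * w x)) / x ^ (mu + 1 + 1) := by
        field_simp; ring
      rw [e, abs_div, abs_of_pos (by positivity : 0 < x ^ (mu + 1 + 1))]
      gcongr
      refine (abs_add_le _ _).trans (add_le_add b2 ?_)
      rw [abs_mul, abs_of_pos hx0]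
      rw [le_div_iff₀ hx0] at b1
      linarith)
  refine ⟨?_, K + (C1 + K) + C2, d2 / 2, by positivity, by positivity, by linarith, fun x hx => ?_⟩
  swap
  · have hx0 := hx.1
    have hx2 : x < d2 := by linarith [hx.2]
    refine ⟨(hux x ⟨hx0, hx2.trans_le d2d⟩).trans ?_, (hW x ⟨hx0, hx2⟩).trans ?_, ?_⟩
    · apply div_le_div_of_nonneg_right _ hx0.le; linarith
    · apply div_le_div_of_nonneg_right _ hx0.le; linarith
    · have := ht x hx
      rw [abs_mul, abs_of_pos (by positivity : 0 < x ^ mu)]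
      calc x ^ mu * |x * u1 x| ≤ x ^ mu * (C2 / x ^ (mu + 1)) := by gcongr
        _ = C2 / x := by field_simp; ring
        _ ≤ _ := by apply div_le_div_of_nonneg_right _ hx0.le; linarith
  · have e : ∀ x, x ^ mu * (x * w1 x + mu * w x) = Bd1 mu u u1 w w1 x
        + (x ^ (mu + 2) * (x * u1 x) - (mu + 2) * x ^ (mu + 2) * u x) := fun x => by
      unfold Bd1; ring
    have hz : Tendsto (fun x => x ^ (mu + 2) * (x * u1 x) - (mu + 2) * x ^ (mu + 2) * u x)
        (nhdsWithin 0 (Ioi 0)) (nhds 0) := by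
      have hlin : Tendsto (fun x : ℝ => (C2 + (mu + 2) * K) * x) (nhdsWithin 0 (Ioi 0)) (nhds 0) := by
        have : Tendsto (fun x : ℝ => (C2 + (mu + 2) * K) * x) (nhds 0) (nhds ((C2 + (mu + 2) * K) * 0)) :=
          (continuous_const.mul continuous_id).tendsto 0
        rw [mul_zero] at this
        exact this.mono_left nhdsWithin_le_nhds
      refine squeeze_zero_norm' ?_ hlin
      filter_upwards [Ioo_mem_nhdsGT (show 0 < d2 / 2 by positivity)] with x hx
      have hx0 := hx.1
      have hx1 : x ≤ 1 := by linarith [hx.2]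
      have b1 := ht x hx
      have b2 := hpu mu x ⟨hx0, by linarith [hx.2]⟩
      rw [Real.norm_eq_abs]
      refine (abs_sub _ _).trans ?_
      have c1 : |x ^ (mu + 2) * (x * u1 x)| ≤ C2 * x := by
        rw [abs_mul, abs_of_pos (by positivity : 0 < x ^ (mu + 2))]
        calc x ^ (mu + 2) * |x * u1 x| ≤ x ^ (mu + 2) * (C2 / x ^ (mu + 1)) := by gcongr
          _ = C2 * x := by field_simp; ring
      have c2 : |(mu + 2) * x ^ (mu + 2) * u x| ≤ (mu + 2) * K * x := by
        have : (mu + 2) * x ^ (mu + 2) * u x = (mu + 2) * x * (x ^ (mu + 1) * u x) := by ring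
        rw [this, abs_mul, abs_of_pos (by positivity : 0 < (mu + 2) * x)]
        calc (mu + 2) * x * |x ^ (mu + 1) * u x| ≤ (mu + 2) * x * K := by gcongr
          _ = _ := by ring
      linarith
    have := hl.add hz
    rw [add_zero] at this
    exact this.congr fun x => (e x).symm

lemma x_exp_le (k : ℕ) (x : ℝ) (hx : 0 ≤ x) : x ^ k * exp (-x / 2) ≤ (4 ^ k * k.factorial) * exp (-x / 4) := by
  have h1 : (x / 4) ^ k / k.factorial ≤ exp (x / 4) :=
    Real.pow_div_factorial_le_exp (x / 4) (by positivity) k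
  rw [div_le_iff₀ (by positivity), div_pow, div_le_iff₀ (by positivity)] at h1
  have h2 : exp (-x / 2) = exp (-x / 4) * exp (-x / 4) := by rw [← exp_add]; congr 1; ring
  have h3 : exp (x / 4) * exp (-x / 4) = 1 := by rw [← exp_add]; simp; ring
  have h4 := exp_pos (-x / 4)
  calc x ^ k * exp (-x / 2) ≤ (exp (x / 4) * k.factorial * 4 ^ k) * exp (-x / 2) := by gcongr
    _ = (4 ^ k * k.factorial) * (exp (x / 4) * exp (-x / 4)) * exp (-x / 4) := by rw [h2]; ring
    _ = _ := by rw [h3]; ring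

lemma one_add_pow_exp (N : ℕ) : ∃ C, 0 ≤ C ∧ ∀ x : ℝ, 0 ≤ x →
    (1 + x) ^ N * exp (-x / 2) ≤ C * exp (-x / 4) := by
  refine ⟨4 ^ N * N.factorial * exp (1 / 2), by positivity, fun x hx => ?_⟩
  have := x_exp_le N (1 + x) (by linarith)
  have e1 : exp (-x / 2) = exp (-(1 + x) / 2) * exp (1 / 2) := by rw [← exp_add]; congr 1; ring
  have e2 : exp (-(1 + x) / 4) ≤ exp (-x / 4) := exp_le_exp.2 (by linarith)
  calc (1 + x) ^ N * exp (-x / 2) = ((1 + x) ^ N * exp (-(1 + x) / 2)) * exp (1 / 2) := by rw [e1]; ring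
    _ ≤ (4 ^ N * N.factorial * exp (-(1 + x) / 4)) * exp (1 / 2) := by gcongr
    _ ≤ (4 ^ N * N.factorial * exp (-x / 4)) * exp (1 / 2) := by gcongr
    _ = _ := by ring

lemma global_bound {f : ℝ → ℝ} (hf : ContinuousOn f (Ioi 0)) {e C1 R C2 : ℝ} (he : 0 < e)
    (h1 : ∀ x ∈ Ioo 0 e, |f x| ≤ C1) (h2 : ∀ x ≥ R, |f x| ≤ C2 * exp (-x / 4)) :
    ∃ C, 0 ≤ C ∧ ∀ x > 0, |f x| ≤ C * exp (-x / 4) := by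
  have hsub : Icc (e / 2) (max R e) ⊆ Ioi (0:ℝ) := fun x hx => lt_of_lt_of_le (by positivity) hx.1
  obtain ⟨M, hM⟩ := isCompact_Icc.exists_bound_of_continuousOn (hf.mono hsub)
  set S := max R e
  set A := |C1| + |M| with hA
  have hA0 : 0 ≤ A := by positivity
  have hS : e ≤ S := le_max_right _ _
  refine ⟨A * exp (S / 4) + |C2|, by positivity, fun x hx => ?_⟩
  rcases le_or_gt S x with hx2 | hx2
  · refine (h2 x ((le_max_left _ _).trans hx2)).trans ?_
    gcongr
    have := le_abs_self C2
    have : 0 ≤ A * exp (S / 4) := by positivity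
    linarith
  · have b : |f x| ≤ A := by
      rcases lt_or_ge x e with h | h
      · have := h1 x ⟨hx, h⟩
        have := le_abs_self C1
        have := abs_nonneg M
        linarith
      · have := hM x ⟨by linarith, hx2.le⟩
        rw [Real.norm_eq_abs] at this
        have := le_abs_self M
        have := abs_nonneg C1
        linarith
    have e1 : 1 ≤ exp (S / 4) * exp (-x / 4) := by
      rw [← exp_add]; apply one_le_exp; linarith
    calc |f x| ≤ A * 1 := by linarith
      _ ≤ A * (exp (S / 4) * exp (-x / 4)) := by gcongr
      _ ≤ _ := by
        have : 0 ≤ |C2| * exp (-x / 4) := by positivity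
        linarith

lemma int_pow_exp (k : ℕ) : IntegrableOn (fun x : ℝ => x ^ k * exp (-x / 4)) (Ioi 0) := by
  have := integrableOn_rpow_mul_exp_neg_mul_rpow (p := 1) (s := k) (b := 1 / 4)
    (by have : (0:ℝ) ≤ k := by positivity
        linarith) one_pos (by norm_num)
  refine this.congr_fun (fun x hx => ?_) measurableSet_Ioi
  simp only [rpow_natCast, rpow_one]
  congr 2; ring

/-- Everything we know about `u`. -/
structure Good (mu : ℕ) (lam : ℝ) (u u1 w w1 : ℝ → ℝ) : Prop where
  es : ESys mu lam u u1 w w1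
  w1z : Tendsto (fun x => x ^ mu * (x * w1 x + mu * w x)) (nhdsWithin 0 (Ioi 0)) (nhds 0)
  near : ∃ C e, 0 ≤ C ∧ 0 < e ∧ ∀ x ∈ Ioo 0 e, |u x| ≤ C / x ∧ |x ^ mu * w x| ≤ C / x ∧
      |x ^ mu * (x * u1 x)| ≤ C / x
  far : ∃ R C, 1 ≤ R ∧ 0 ≤ C ∧ ∀ x ≥ R, |u x| ≤ C * exp (-x / 2) ∧ |u1 x| ≤ C * exp (-x / 2) ∧
      |w x| ≤ C * x * exp (-x / 2) ∧ |w1 x| ≤ C * x * exp (-x / 2)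

lemma good_of {mu : ℕ} {lam : ℝ} {u u1 w w1 : ℝ → ℝ} (h : ESys mu lam u u1 w w1)
    (hL2 : IntegrableOn (fun x => u x ^ 2) (Ioi 1))
    {K d : ℝ} (hd : 0 < d) (hd1 : d ≤ 1) (hK : 0 ≤ K) (hu : ∀ x ∈ Ioo 0 d, |u x| ≤ K * (1 - log x)) :
    Good mu lam u u1 w w1 := by
  obtain ⟨n1, C, e, hC, he, _, n2⟩ := near_zero h hd hd1 hK hu
  refine ⟨h, n1, ⟨C, e, hC, he, n2⟩, ?_⟩
  obtain ⟨R, C, hR, hC, f⟩ := vsys_decay h.toVSys hL2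
  refine ⟨R, 2 * C, hR, by positivity, fun x hx => ?_⟩
  obtain ⟨f1, f2, f3, f4⟩ := f x hx
  have hx1 : 1 ≤ x := hR.trans hx
  have hx0 : 0 < x := by linarith
  have E := exp_pos (-x / 2)
  have CE : 0 ≤ C * exp (-x / 2) := by positivity
  have g3 : |w x| = x * |w x / x| := by
    rw [abs_div, abs_of_pos hx0]; field_simp
  have g4 : w1 x = w x / x + x * (w1 x / x - w x / x ^ 2) := by field_simp; ring
  have t3 : x * |w x / x| ≤ x * (C * exp (-x / 2)) := by gcongr
  have t4 : x * |w1 x / x - w x / x ^ 2| ≤ x * (C * exp (-x / 2)) := by gcongr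
  have t5 : C * exp (-x / 2) ≤ x * (C * exp (-x / 2)) := le_mul_of_one_le_left CE hx1
  refine ⟨by linarith, by linarith, ?_, ?_⟩
  · rw [g3]; linarith
  · rw [g4]
    have := abs_add_le (w x / x) (x * (w1 x / x - w x / x ^ 2))
    rw [abs_mul, abs_of_pos hx0] at this
    linarith

lemma Good.cont {mu : ℕ} {lam : ℝ} {u u1 w w1 : ℝ → ℝ} (h : Good mu lam u u1 w w1) :
    ContinuousOn u (Ioi 0) := fun x hx => (h.es.hu x hx).continuousAt.continuousWithinAt

lemma Good.bound {mu : ℕ} {lam : ℝ} {u u1 w w1 : ℝ → ℝ} (h : Good mu lam u u1 w w1) :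
    ∃ C, 0 ≤ C ∧ ∀ x > 0, |x * u x| ≤ C * exp (-x / 4) := by
  obtain ⟨C, e, hC, he, n⟩ := h.near
  obtain ⟨R, C', hR, hC', f⟩ := h.far
  apply global_bound (f := fun x => x * u x) (C1 := C) (R := R) (C2 := C' * (4 ^ 1 * Nat.factorial 1)) (e := e)
    (continuousOn_id.mul h.cont) he
  · intro x hx
    have := (n x hx).1
    rw [le_div_iff₀ hx.1] at this
    rw [abs_mul, abs_of_pos hx.1]; linarith
  · intro x hx
    have hx0 : 0 < x := by linarith
    rw [abs_mul, abs_of_pos hx0]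
    have := x_exp_le 1 x hx0.le
    rw [pow_one] at this
    calc x * |u x| ≤ x * (C' * exp (-x / 2)) := by gcongr; exact (f x hx).1
      _ = C' * (x * exp (-x / 2)) := by ring
      _ ≤ C' * (4 ^ 1 * (Nat.factorial 1) * exp (-x / 4)) := by gcongr
      _ = _ := by ring

/-- polynomially bounded continuous functions are integrable against `u x^(m+1)` -/
lemma Good.int {mu : ℕ} {lam : ℝ} {u u1 w w1 : ℝ → ℝ} (h : Good mu lam u u1 w w1) (m N : ℕ)
    {G : ℝ → ℝ} (hG : ContinuousOn G (Ioi 0)) {C : ℝ} (hC : 0 ≤ C) (hb : ∀ x > 0, |G x| ≤ C * (1 + x) ^ N) :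
    IntegrableOn (fun x => u x * x ^ (m + 1) * G x) (Ioi 0) := by
  obtain ⟨K, hK, hu⟩ := h.bound
  have hi := ((int_pow_exp m).add (int_pow_exp (m + N))).const_mul (K * C * 2 ^ (N - 1))
  refine Integrable.mono' hi ?_ ?_
  · apply ContinuousOn.aestronglyMeasurable _ measurableSet_Ioi
    exact (h.cont.mul (continuous_pow (m + 1)).continuousOn).mul hG
  · filter_upwards [ae_restrict_mem measurableSet_Ioi] with x hx
    have hx0 : 0 < x := hx
    have e : u x * x ^ (m + 1) * G x = (x * u x) * x ^ m * G x := by ring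
    rw [Real.norm_eq_abs, e, abs_mul, abs_mul, abs_of_pos (by positivity : 0 < x ^ m)]
    have h1 := hu x hx0
    have h2 := hb x hx0
    calc |x * u x| * x ^ m * |G x| ≤ (K * exp (-x / 4)) * x ^ m * (C * (1 + x) ^ N) := by gcongr
      _ ≤ (K * exp (-x / 4)) * x ^ m * (C * (2 ^ (N - 1) * (1 ^ N + x ^ N))) := by
        gcongr; exact add_pow_le zero_le_one hx0.le N
      _ = _ := by simp only [one_pow, Pi.add_apply]; ring

noncomputable def BdF (mu : ℕ) (u u1 w w1 ψ ψ1 χ χ1 : ℝ → ℝ) (x : ℝ) : ℝ :=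
  (x ^ mu * (x * w1 x + mu * w x)) * ψ x - (x ^ mu * w x) * ψ1 x
    + (x ^ mu * (x * u1 x)) * χ x - (x ^ mu * u x) * (mu * χ x + χ1 x)

lemma BdF_hasDerivAt {mu : ℕ} {lam : ℝ} {u u1 w w1 ψ ψ1 χ χ1 χ2 G : ℝ → ℝ} (h : ESys mu lam u u1 w w1)
    (hψ : ∀ x > 0, HasDerivAt ψ (ψ1 x / x) x)
    (hψ1 : ∀ x > 0, HasDerivAt ψ1 ((χ x + x ^ 2 * ψ x) / x) x)
    (hχ : ∀ x > 0, HasDerivAt χ (χ1 x / x) x)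
    (hχ1 : ∀ x > 0, HasDerivAt χ1 (χ2 x / x) x)
    (hG : ∀ x > 0, χ2 x + 2 * mu * χ1 x + mu ^ 2 * χ x - x ^ 2 * χ x - lam * x ^ 2 * ψ x = x ^ 2 * G x)
    (x : ℝ) (hx : 0 < x) :
    HasDerivAt (BdF mu u u1 w w1 ψ ψ1 χ χ1) (-(u x * x ^ (mu + 1) * G x)) x := by
  have P := hasDerivAt_pow' mu hx
  have A := (W1_hasDerivAt h x hx).mul (hψ x hx)
  have B := (P.mul (h.hw x hx)).mul (hψ1 x hx)
  have C := (P.mul (t_hasDerivAt h x hx)).mul (hχ x hx)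
  have D := (P.mul (h.hu x hx)).mul (((hχ x hx).const_mul (mu:ℝ)).add (hχ1 x hx))
  have := ((A.sub B).add C).sub D
  convert! this using 1
  have e : G x = (χ2 x + 2 * mu * χ1 x + mu ^ 2 * χ x - x ^ 2 * χ x - lam * x ^ 2 * ψ x) / x ^ 2 := by
    rw [hG x hx]; field_simp
  rw [e]
  simp only [Pi.mul_apply, Pi.add_apply]
  field_simp; ring

lemma BdF_abs (mu : ℕ) (u u1 w w1 ψ ψ1 χ χ1 : ℝ → ℝ) (x : ℝ) : |BdF mu u u1 w w1 ψ ψ1 χ χ1 x| ≤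
    |x ^ mu * (x * w1 x + mu * w x)| * |ψ x| + |x ^ mu * w x| * |ψ1 x|
    + |x ^ mu * (x * u1 x)| * |χ x| + |x ^ mu * u x| * (mu * |χ x| + |χ1 x|) := by
  unfold BdF
  refine (abs_sub _ _).trans (add_le_add ((abs_add_le _ _).trans (add_le_add
    ((abs_sub _ _).trans (add_le_add (abs_mul _ _).le (abs_mul _ _).le)) (abs_mul _ _).le)) ?_)
  rw [abs_mul]
  gcongr
  refine (abs_add_le _ _).trans ?_
  rw [abs_mul, abs_of_nonneg (by positivity : (0:ℝ) ≤ mu)]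

lemma lagrange {mu : ℕ} {lam : ℝ} {u u1 w w1 ψ ψ1 χ χ1 χ2 G : ℝ → ℝ} (h : Good mu lam u u1 w w1)
    (hψ : ∀ x > 0, HasDerivAt ψ (ψ1 x / x) x)
    (hψ1 : ∀ x > 0, HasDerivAt ψ1 ((χ x + x ^ 2 * ψ x) / x) x)
    (hχ : ∀ x > 0, HasDerivAt χ (χ1 x / x) x)
    (hχ1 : ∀ x > 0, HasDerivAt χ1 (χ2 x / x) x)
    (hG : ∀ x > 0, χ2 x + 2 * mu * χ1 x + mu ^ 2 * χ x - x ^ 2 * χ x - lam * x ^ 2 * ψ x = x ^ 2 * G x)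
    {K : ℝ} {N : ℕ} (hK : 0 ≤ K) (b0 : ∀ x > 0, |ψ x| ≤ K * (1 + x) ^ N)
    (b1 : ∀ x > 0, |ψ1 x| ≤ K * x ^ 2 * (1 + x) ^ N)
    (b2 : ∀ x > 0, |χ x| ≤ K * x ^ 2 * (1 + x) ^ N)
    (b3 : ∀ x > 0, |χ1 x| ≤ K * x ^ 2 * (1 + x) ^ N)
    (hi : IntegrableOn (fun x => u x * x ^ (mu + 1) * G x) (Ioi 0)) :
    ∫ x in Ioi 0, u x * x ^ (mu + 1) * G x = 0 := by
  set F := BdF mu u u1 w w1 ψ ψ1 χ χ1 with hF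
  have hd := BdF_hasDerivAt h.es hψ hψ1 hχ hχ1 hG
  -- limit at zero
  have l0 : Tendsto F (nhdsWithin 0 (Ioi 0)) (nhds 0) := by
    obtain ⟨C, e, hC, he, n⟩ := h.near
    set K2 := K * 2 ^ N with hK2
    have hK2p : 0 ≤ K2 := by positivity
    have hlim : Tendsto (fun x => |x ^ mu * (x * w1 x + mu * w x)| * K2 + C * K2 * (3 + mu) * x)
        (nhdsWithin 0 (Ioi 0)) (nhds (|0| * K2 + C * K2 * (3 + mu) * 0)) := by
      apply (h.w1z.abs.mul_const K2).add
      exact ((continuous_const.mul continuous_id).tendsto 0).mono_left nhdsWithin_le_nhds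
    simp only [abs_zero, zero_mul, mul_zero, add_zero] at hlim
    refine squeeze_zero_norm' ?_ hlim
    filter_upwards [Ioo_mem_nhdsGT (show 0 < min e 1 from lt_min he one_pos)] with x hx
    have hx0 : 0 < x := hx.1
    have hx1 : x ≤ 1 := hx.2.le.trans (min_le_right _ _)
    obtain ⟨n1, n2, n3⟩ := n x ⟨hx0, hx.2.trans_le (min_le_left _ _)⟩
    have hp : K * (1 + x) ^ N ≤ K2 := by rw [hK2]; gcongr; linarith
    have hp2 : K * x ^ 2 * (1 + x) ^ N ≤ K2 * x ^ 2 := by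
      calc _ = K * (1 + x) ^ N * x ^ 2 := by ring
        _ ≤ _ := by gcongr
    have c0 := (b0 x hx0).trans hp
    have c1 := (b1 x hx0).trans hp2
    have c2 := (b2 x hx0).trans hp2
    have c3 := (b3 x hx0).trans hp2
    have n4 : |x ^ mu * u x| ≤ C / x := by
      rw [abs_mul, abs_of_pos (by positivity : 0 < x ^ mu)]
      exact (mul_le_of_le_one_left (abs_nonneg _) (pow_le_one₀ hx0.le hx1)).trans n1
    rw [Real.norm_eq_abs]
    refine (BdF_abs mu u u1 w w1 ψ ψ1 χ χ1 x).trans ?_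
    have hCx : 0 ≤ C / x := by positivity
    calc _ ≤ |x ^ mu * (x * w1 x + mu * w x)| * K2 + C / x * (K2 * x ^ 2) + C / x * (K2 * x ^ 2)
          + C / x * (mu * (K2 * x ^ 2) + K2 * x ^ 2) := by gcongr
      _ = _ := by field_simp; ring
  -- limit at infinity
  have l1 : Tendsto F atTop (nhds 0) := by
    obtain ⟨R, C, hR, hC, f⟩ := h.far
    obtain ⟨C2, hC2, hexp⟩ := one_add_pow_exp (mu + N + 3)
    have hlim : Tendsto (fun x : ℝ => (4 * (1 + mu) * C * K) * (C2 * exp (-x / 4))) atTop (nhds 0) := by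
      have : Tendsto (fun x : ℝ => exp (-x / 4)) atTop (nhds 0) := by
        apply tendsto_exp_atBot.comp
        exact tendsto_neg_atTop_atBot.atBot_div_const (by norm_num)
      simpa using (this.const_mul C2).const_mul (4 * (1 + mu) * C * K)
    refine squeeze_zero_norm' ?_ hlim
    filter_upwards [eventually_ge_atTop R] with x hx
    obtain ⟨f1, f2, f3, f4⟩ := f x hx
    have hx0 : 0 < x := by linarith
    set E := exp (-x / 2) with hE
    have hE0 : 0 < E := exp_pos _
    set p := 1 + x with hp
    have hp0 : 0 < p := by positivity
    have hxp : x ≤ p := by linarith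
    have hp1 : 1 ≤ p := by linarith
    have c0 := b0 x hx0
    have hsq : K * x ^ 2 * p ^ N ≤ K * p ^ (N + 2) := by
      calc K * x ^ 2 * p ^ N ≤ K * p ^ 2 * p ^ N := by gcongr
        _ = _ := by ring
    have c1 := (b1 x hx0).trans hsq
    have c2 := (b2 x hx0).trans hsq
    have c3 := (b3 x hx0).trans hsq
    have a1 : |x ^ mu * (x * w1 x + mu * w x)| ≤ (1 + mu) * C * E * p ^ (mu + 2) := by
      rw [abs_mul, abs_of_pos (by positivity : 0 < x ^ mu)]
      have t := abs_add_le (x * w1 x) (mu * w x)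
      rw [abs_mul, abs_mul, abs_of_pos hx0, abs_of_nonneg (by positivity : (0:ℝ) ≤ mu)] at t
      calc x ^ mu * |x * w1 x + mu * w x| ≤ x ^ mu * (x * |w1 x| + mu * |w x|) := by gcongr
        _ ≤ p ^ mu * (p * (C * p * E) + mu * (p * (C * p * E))) := by
          have : C * x * E ≤ p * (C * p * E) := by
            calc C * x * E ≤ C * p * E := by gcongr
              _ ≤ _ := le_mul_of_one_le_left (by positivity) hp1
          have s1 : |w1 x| ≤ C * p * E := f4.trans (by gcongr)
          have s2 : |w x| ≤ p * (C * p * E) := f3.trans this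
          gcongr
        _ = _ := by ring
    have a2 : |x ^ mu * w x| ≤ C * E * p ^ (mu + 1) := by
      rw [abs_mul, abs_of_pos (by positivity : 0 < x ^ mu)]
      calc x ^ mu * |w x| ≤ p ^ mu * (C * p * E) := by
            have s1 : |w x| ≤ C * p * E := f3.trans (by gcongr)
            gcongr
        _ = _ := by ring
    have a3 : |x ^ mu * (x * u1 x)| ≤ C * E * p ^ (mu + 1) := by
      rw [abs_mul, abs_of_pos (by positivity : 0 < x ^ mu), abs_mul, abs_of_pos hx0]
      calc x ^ mu * (x * |u1 x|) ≤ p ^ mu * (p * (C * E)) := by gcongr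
        _ = _ := by ring
    have a4 : |x ^ mu * u x| ≤ C * E * p ^ (mu + 1) := by
      rw [abs_mul, abs_of_pos (by positivity : 0 < x ^ mu)]
      calc x ^ mu * |u x| ≤ p ^ mu * (C * E) := by gcongr
        _ ≤ p ^ mu * (C * E) * p := le_mul_of_one_le_right (by positivity) hp1
        _ = _ := by ring
    rw [Real.norm_eq_abs]
    refine (BdF_abs mu u u1 w w1 ψ ψ1 χ χ1 x).trans ?_
    calc _ ≤ (1 + mu) * C * E * p ^ (mu + 2) * (K * p ^ N) + C * E * p ^ (mu + 1) * (K * p ^ (N + 2))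
          + C * E * p ^ (mu + 1) * (K * p ^ (N + 2))
          + C * E * p ^ (mu + 1) * (mu * (K * p ^ (N + 2)) + K * p ^ (N + 2)) := by gcongr
      _ = (1 + mu) * C * K * (p ^ (mu + N + 2) * E) + (3 + mu) * C * K * (p ^ (mu + N + 3) * E) := by ring
      _ ≤ (1 + mu) * C * K * (p ^ (mu + N + 3) * E) + (3 * (1 + mu)) * C * K * (p ^ (mu + N + 3) * E) := by
          have : p ^ (mu + N + 2) ≤ p ^ (mu + N + 3) := pow_le_pow_right₀ hp1 (by omega)
          have : (3 + mu : ℝ) ≤ 3 * (1 + mu) := by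
            have : (0:ℝ) ≤ mu := by positivity
            linarith
          gcongr
      _ = (4 * (1 + mu) * C * K) * (p ^ (mu + N + 3) * E) := by ring
      _ ≤ _ := mul_le_mul_of_nonneg_left (hexp x hx0.le) (by positivity)
  -- conclude
  have hcont : ContinuousWithinAt (Function.update F 0 0) (Ici 0) 0 := by
    rw [continuousWithinAt_update_same]
    have : Ici (0:ℝ) \ {0} = Ioi 0 := Ici_sdiff_left
    rw [this]; exact l0
  have hne : ∀ x ∈ Ioi (0:ℝ), Function.update F 0 0 =ᶠ[nhds x] F := fun x hx => by
    filter_upwards [Ioi_mem_nhds hx] with y hy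
    exact Function.update_of_ne (ne_of_gt hy) _ _
  have key := integral_Ioi_of_hasDerivAt_of_tendsto (f := Function.update F 0 0)
    (f' := fun x => -(u x * x ^ (mu + 1) * G x)) (m := 0) hcont
    (fun x hx => (hd x hx).congr_of_eventuallyEq (hne x hx)) hi.neg (by
      refine l1.congr' ?_
      filter_upwards [eventually_gt_atTop 0] with y hy
      exact (Function.update_of_ne (ne_of_gt hy) _ _).symm)
  rw [integral_neg] at key
  simp at key
  exact key

/-- continuous and polynomially bounded on `(0,∞)` -/
def PB (f : ℝ → ℝ) : Prop :=
  ContinuousOn f (Ioi 0) ∧ ∃ K : ℝ, ∃ N : ℕ, 0 ≤ K ∧ ∀ x > 0, |f x| ≤ K * (1 + x) ^ N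

lemma PB.const (c : ℝ) : PB (fun _ => c) :=
  ⟨continuousOn_const, |c|, 0, abs_nonneg c, fun x _ => by simp⟩

lemma PB.id : PB (fun x => x) :=
  ⟨continuousOn_id, 1, 1, zero_le_one, fun x hx => by rw [abs_of_pos hx]; linarith⟩

lemma PB.mul {f g : ℝ → ℝ} (hf : PB f) (hg : PB g) : PB (fun x => f x * g x) := by
  obtain ⟨cf, K, N, hK, bf⟩ := hf
  obtain ⟨cg, L, M, hL, bg⟩ := hg
  refine ⟨cf.mul cg, K * L, N + M, by positivity, fun x hx => ?_⟩
  rw [abs_mul]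
  have h1 := bf x hx
  have h2 := bg x hx
  calc |f x| * |g x| ≤ (K * (1 + x) ^ N) * (L * (1 + x) ^ M) := by gcongr
    _ = _ := by ring

lemma PB.add {f g : ℝ → ℝ} (hf : PB f) (hg : PB g) : PB (fun x => f x + g x) := by
  obtain ⟨cf, K, N, hK, bf⟩ := hf
  obtain ⟨cg, L, M, hL, bg⟩ := hg
  refine ⟨cf.add cg, K + L, N + M, by positivity, fun x hx => ?_⟩
  have h1 := bf x hx
  have h2 := bg x hx
  have hx1 : 1 ≤ 1 + x := by linarith
  have p1 : (1 + x) ^ N ≤ (1 + x) ^ (N + M) := pow_le_pow_right₀ hx1 (by omega)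
  have p2 : (1 + x) ^ M ≤ (1 + x) ^ (N + M) := pow_le_pow_right₀ hx1 (by omega)
  calc |f x + g x| ≤ |f x| + |g x| := abs_add_le _ _
    _ ≤ K * (1 + x) ^ N + L * (1 + x) ^ M := add_le_add h1 h2
    _ ≤ K * (1 + x) ^ (N + M) + L * (1 + x) ^ (N + M) := by gcongr
    _ = _ := by ring

lemma PB.neg {f : ℝ → ℝ} (hf : PB f) : PB (fun x => -f x) := by
  obtain ⟨cf, K, N, hK, bf⟩ := hf
  exact ⟨cf.neg, K, N, hK, fun x hx => by rw [abs_neg]; exact bf x hx⟩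

lemma PB.sub {f g : ℝ → ℝ} (hf : PB f) (hg : PB g) : PB (fun x => f x - g x) := by
  simpa only [sub_eq_add_neg] using hf.add hg.neg

lemma PB.pow {f : ℝ → ℝ} (hf : PB f) (k : ℕ) : PB (fun x => f x ^ k) := by
  induction k with
  | zero => simpa using PB.const 1
  | succ k ih => simpa only [pow_succ] using ih.mul hf

lemma PB.Jn (p : ℕ) (a : ℝ) : PB (fun x => Jn p (a * x)) :=
  ⟨((Jn_continuous p).comp (continuous_const.mul continuous_id)).continuousOn, 1, 0, zero_le_one,
    fun x _ => by simpa using Jn_abs_le_one p (a * x)⟩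

lemma Good.intPB {mu : ℕ} {lam : ℝ} {u u1 w w1 : ℝ → ℝ} (h : Good mu lam u u1 w w1) (m : ℕ)
    {G : ℝ → ℝ} (hG : PB G) : IntegrableOn (fun x => u x * x ^ (m + 1) * G x) (Ioi 0) := by
  obtain ⟨c, K, N, hK, b⟩ := hG
  exact h.int m N c hK b

lemma lagrange' {mu : ℕ} {lam : ℝ} {u u1 w w1 ψ g1 χ0 S1 S2 : ℝ → ℝ} (h : Good mu lam u u1 w w1)
    (hψ : ∀ x > 0, HasDerivAt ψ (x * g1 x) x)
    (hψ1 : ∀ x > 0, HasDerivAt (fun x => x ^ 2 * g1 x) (x * (χ0 x + ψ x)) x)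
    (hχ : ∀ x > 0, HasDerivAt χ0 ((S1 x - (mu + 2) * χ0 x) / x) x)
    (hS : ∀ x > 0, HasDerivAt S1 ((S2 x - (mu + 2) * S1 x) / x) x)
    (p0 : PB ψ) (p1 : PB g1) (p2 : PB χ0) (p3 : PB S1) (p4 : PB S2) :
    ∫ x in Ioi 0, u x * x ^ (mu + 1) * (S2 x - x ^ 2 * χ0 x - lam * ψ x) = 0 := by
  have pG : PB (fun x => S2 x - x ^ 2 * χ0 x - lam * ψ x) :=
    (p4.sub ((PB.id.pow 2).mul p2)).sub ((PB.const lam).mul p0)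
  have pT : PB (fun x => S1 x - mu * χ0 x) := p3.sub ((PB.const _).mul p2)
  obtain ⟨-, K0, N0, hK0, b0⟩ := p0
  obtain ⟨-, K1, N1, hK1, b1⟩ := p1
  obtain ⟨-, K2, N2, hK2, b2⟩ := p2
  obtain ⟨-, K3, N3, hK3, b3⟩ := pT
  have mono : ∀ {f : ℝ → ℝ} {K K' : ℝ} {N N' : ℕ}, 0 ≤ K' → K ≤ K' → N ≤ N' →
      (∀ x > 0, |f x| ≤ K * (1 + x) ^ N) → ∀ x > 0, |f x| ≤ K' * (1 + x) ^ N' := by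
    intro f K K' N N' h0 hk hn hb x hx
    have hx1 : 1 ≤ 1 + x := by linarith
    have p1 : (1 + x) ^ N ≤ (1 + x) ^ N' := pow_le_pow_right₀ hx1 hn
    calc |f x| ≤ K * (1 + x) ^ N := hb x hx
      _ ≤ K' * (1 + x) ^ N := by gcongr
      _ ≤ _ := by gcongr
  set K := K0 + K1 + K2 + K3 with hK
  set N := N0 + N1 + N2 + N3 with hN
  have hKp : 0 ≤ K := by positivity
  have sq : ∀ {f : ℝ → ℝ}, (∀ x > 0, |f x| ≤ K * (1 + x) ^ N) →
      ∀ x > 0, |x ^ 2 * f x| ≤ K * x ^ 2 * (1 + x) ^ N := by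
    intro f hf x hx
    rw [abs_mul, abs_of_pos (by positivity : 0 < x ^ 2)]
    calc x ^ 2 * |f x| ≤ x ^ 2 * (K * (1 + x) ^ N) := by gcongr; exact hf x hx
      _ = _ := by ring
  refine lagrange (ψ := ψ) (ψ1 := fun x => x ^ 2 * g1 x) (χ := fun x => x ^ 2 * χ0 x)
    (χ1 := fun x => x ^ 2 * (S1 x - mu * χ0 x))
    (χ2 := fun x => x ^ 2 * (S2 x - 2 * mu * S1 x + mu ^ 2 * χ0 x)) h ?_ ?_ ?_ ?_ ?_ hKp
    (mono hKp (by linarith) (by omega) b0) (sq (mono hKp (by linarith) (by omega) b1))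
    (sq (mono hKp (by linarith) (by omega) b2)) (sq (mono hKp (by linarith) (by omega) b3))
    (h.intPB mu pG)
  · intro x hx
    convert! hψ x hx using 1
    field_simp
  · intro x hx
    convert! hψ1 x hx using 1
    field_simp
  · intro x hx
    have := (hasDerivAt_pow' 2 hx).mul (hχ x hx)
    convert! this using 1
    push_cast; field_simp; ring
  · intro x hx
    have := (hasDerivAt_pow' 2 hx).mul ((hS x hx).sub ((hχ x hx).const_mul (mu:ℝ)))
    convert! this using 1
    simp only [Pi.sub_apply]
    push_cast; field_simp; ring
  · intro x hx; ring

/-- the basic integrals -/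
noncomputable def II (u : ℝ → ℝ) (p q m : ℕ) (a b : ℝ) : ℝ :=
  ∫ x in Ioi 0, u x * x ^ m * (Jn p (a * x) * Jn q (b * x))

lemma Jn_a_hasDerivAt (p : ℕ) (a x : ℝ) :
    HasDerivAt (fun x => Jn p (a * x)) (-(a ^ 2 * x / 2) * Jn (p + 1) (a * x)) x := by
  have := (Jn_hasDerivAt p (a * x)).comp x ((hasDerivAt_id x).const_mul a)
  convert! this using 1
  simp only [mul_one]; ring

lemma Jn_a_hasDerivAt' (p : ℕ) (a x : ℝ) (hx : 0 < x) :
    HasDerivAt (fun x => Jn (p + 1) (a * x))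
      ((2 * Jn p (a * x) - 2 * (p + 1) * Jn (p + 1) (a * x)) / x) x := by
  convert Jn_a_hasDerivAt (p + 1) a x using 1
  have := Jn_rec p (a * x)
  rw [show p + 1 + 1 = p + 2 from rfl]
  field_simp
  linear_combination 4 * this

lemma Good.II_rel {n : ℕ} {lam : ℝ} {u u1 w w1 : ℝ → ℝ} (h : Good (2 * n) lam u u1 w w1) (a b : ℝ)
    (T N : ℝ) (hT : T = 1 + a ^ 2 + b ^ 2) (hN : N = 2 * n + 2) :
    (2 * n * a ^ 2 - T * N) * (N * II u n 0 (2 * n + 1) a b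
        - (1 / 2) * (a ^ 2 * II u (n + 1) 0 (2 * n + 3) a b + b ^ 2 * II u n 1 (2 * n + 3) a b))
      - n * a ^ 2 * b ^ 2 * (II u n 1 (2 * n + 3) a b + II u (n + 1) 0 (2 * n + 3) a b)
      + (T * a ^ 2 / 2 + a ^ 2 * b ^ 2) * (2 * II u (n + 1) 0 (2 * n + 3) a b
        + 2 * II u n 0 (2 * n + 3) a b - (b ^ 2 / 2) * II u (n + 1) 1 (2 * n + 5) a b)
      + (T * b ^ 2 / 2 + a ^ 2 * b ^ 2) * (N * II u n 1 (2 * n + 3) a b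
        + 2 * II u n 0 (2 * n + 3) a b - (a ^ 2 / 2) * II u (n + 1) 1 (2 * n + 5) a b)
      - (n * a ^ 2 * II u (n + 1) 0 (2 * n + 3) a b - T * II u n 0 (2 * n + 3) a b
        + (a ^ 2 * b ^ 2 / 2) * II u (n + 1) 1 (2 * n + 5) a b)
      - lam * II u n 0 (2 * n + 1) a b = 0 := by
  obtain ⟨P0, hP0⟩ : ∃ f : ℝ → ℝ, f = fun x => Jn n (a * x) := ⟨_, rfl⟩
  obtain ⟨P1, hP1⟩ : ∃ f : ℝ → ℝ, f = fun x => Jn (n + 1) (a * x) := ⟨_, rfl⟩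
  obtain ⟨Q0, hQ0⟩ : ∃ f : ℝ → ℝ, f = fun x => Jn 0 (b * x) := ⟨_, rfl⟩
  obtain ⟨Q1, hQ1⟩ : ∃ f : ℝ → ℝ, f = fun x => Jn 1 (b * x) := ⟨_, rfl⟩
  have dP0 : ∀ x > 0, HasDerivAt P0 (-(a ^ 2 * x / 2) * P1 x) x := fun x _ => by
    rw [hP0, hP1]; exact Jn_a_hasDerivAt n a x
  have dP1 : ∀ x > 0, HasDerivAt P1 ((2 * P0 x - 2 * (n + 1) * P1 x) / x) x := fun x hx => by
    rw [hP0, hP1]; exact Jn_a_hasDerivAt' n a x hx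
  have dQ0 : ∀ x > 0, HasDerivAt Q0 (-(b ^ 2 * x / 2) * Q1 x) x := fun x _ => by
    rw [hQ0, hQ1]; exact Jn_a_hasDerivAt 0 b x
  have dQ1 : ∀ x > 0, HasDerivAt Q1 ((2 * Q0 x - 2 * Q1 x) / x) x := fun x hx => by
    rw [hQ0, hQ1]; simpa using Jn_a_hasDerivAt' 0 b x hx
  have cP0 : PB P0 := hP0 ▸ PB.Jn n a
  have cP1 : PB P1 := hP1 ▸ PB.Jn (n + 1) a
  have cQ0 : PB Q0 := hQ0 ▸ PB.Jn 0 b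
  have cQ1 : PB Q1 := hQ1 ▸ PB.Jn 1 b
  have E00 : ∀ m, II u n 0 m a b = ∫ x in Ioi 0, u x * x ^ m * (P0 x * Q0 x) := fun m => by
    rw [hP0, hQ0]; rfl
  have E10 : ∀ m, II u (n + 1) 0 m a b = ∫ x in Ioi 0, u x * x ^ m * (P1 x * Q0 x) := fun m => by
    rw [hP1, hQ0]; rfl
  have E01 : ∀ m, II u n 1 m a b = ∫ x in Ioi 0, u x * x ^ m * (P0 x * Q1 x) := fun m => by
    rw [hP0, hQ1]; rfl
  have E11 : ∀ m, II u (n + 1) 1 m a b = ∫ x in Ioi 0, u x * x ^ m * (P1 x * Q1 x) := fun m => by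
    rw [hP1, hQ1]; rfl
  clear hP0 hP1 hQ0 hQ1
  have cs : ∀ (c : ℝ), PB (fun x => c * x ^ 2) := fun c => (PB.const c).mul (PB.id.pow 2)
  have L := lagrange' h (ψ := fun x => P0 x * Q0 x)
    (g1 := fun x => -(1 / 2) * (a ^ 2 * (P1 x * Q0 x) + b ^ 2 * (P0 x * Q1 x)))
    (χ0 := fun x => n * a ^ 2 * (P1 x * Q0 x) - T * (P0 x * Q0 x) + a ^ 2 * b ^ 2 / 2 * x ^ 2 * (P1 x * Q1 x))
    (S1 := fun x => n * a ^ 2 * (2 * (P0 x * Q0 x) - b ^ 2 / 2 * x ^ 2 * (P1 x * Q1 x))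
      - T * (N * (P0 x * Q0 x) - 1 / 2 * x ^ 2 * (a ^ 2 * (P1 x * Q0 x) + b ^ 2 * (P0 x * Q1 x)))
      + a ^ 2 * b ^ 2 * x ^ 2 * (P0 x * Q1 x + P1 x * Q0 x))
    (S2 := fun x => (2 * n * a ^ 2 - T * N) * (N * (P0 x * Q0 x)
          - 1 / 2 * x ^ 2 * (a ^ 2 * (P1 x * Q0 x) + b ^ 2 * (P0 x * Q1 x)))
      - n * a ^ 2 * b ^ 2 * x ^ 2 * (P0 x * Q1 x + P1 x * Q0 x)
      + (T * a ^ 2 / 2 + a ^ 2 * b ^ 2) * x ^ 2 * (2 * (P1 x * Q0 x) + 2 * (P0 x * Q0 x)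
        - b ^ 2 / 2 * x ^ 2 * (P1 x * Q1 x))
      + (T * b ^ 2 / 2 + a ^ 2 * b ^ 2) * x ^ 2 * (N * (P0 x * Q1 x) + 2 * (P0 x * Q0 x)
        - a ^ 2 / 2 * x ^ 2 * (P1 x * Q1 x)))
    ?_ ?_ ?_ ?_ ?_ ?_ ?_ ?_ ?_
  · have i00 : IntegrableOn (fun x => u x * x ^ (2 * n + 1) * (P0 x * Q0 x)) (Ioi 0) :=
      h.intPB (2 * n) (cP0.mul cQ0)
    have j00 : IntegrableOn (fun x => u x * x ^ (2 * n + 3) * (P0 x * Q0 x)) (Ioi 0) :=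
      h.intPB (2 * n + 2) (cP0.mul cQ0)
    have j10 : IntegrableOn (fun x => u x * x ^ (2 * n + 3) * (P1 x * Q0 x)) (Ioi 0) :=
      h.intPB (2 * n + 2) (cP1.mul cQ0)
    have j01 : IntegrableOn (fun x => u x * x ^ (2 * n + 3) * (P0 x * Q1 x)) (Ioi 0) :=
      h.intPB (2 * n + 2) (cP0.mul cQ1)
    have l11 : IntegrableOn (fun x => u x * x ^ (2 * n + 5) * (P1 x * Q1 x)) (Ioi 0) :=
      h.intPB (2 * n + 4) (cP1.mul cQ1)
    have key : ∀ c1 c2 c3 c4 c5 : ℝ, ∫ x in Ioi 0, (c1 * (u x * x ^ (2 * n + 1) * (P0 x * Q0 x))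
        + c2 * (u x * x ^ (2 * n + 3) * (P0 x * Q0 x)) + c3 * (u x * x ^ (2 * n + 3) * (P1 x * Q0 x))
        + c4 * (u x * x ^ (2 * n + 3) * (P0 x * Q1 x)) + c5 * (u x * x ^ (2 * n + 5) * (P1 x * Q1 x)))
        = c1 * II u n 0 (2 * n + 1) a b + c2 * II u n 0 (2 * n + 3) a b
          + c3 * II u (n + 1) 0 (2 * n + 3) a b + c4 * II u n 1 (2 * n + 3) a b
          + c5 * II u (n + 1) 1 (2 * n + 5) a b := by
      intro c1 c2 c3 c4 c5
      have k1 := i00.integrable.const_mul c1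
      have k2 := j00.integrable.const_mul c2
      have k3 := j10.integrable.const_mul c3
      have k4 := j01.integrable.const_mul c4
      have k5 := l11.integrable.const_mul c5
      have k12 : Integrable (fun x => c1 * (u x * x ^ (2 * n + 1) * (P0 x * Q0 x))
        + c2 * (u x * x ^ (2 * n + 3) * (P0 x * Q0 x))) (volume.restrict (Ioi 0)) := k1.add k2
      have k13 : Integrable (fun x => c1 * (u x * x ^ (2 * n + 1) * (P0 x * Q0 x))
        + c2 * (u x * x ^ (2 * n + 3) * (P0 x * Q0 x))
        + c3 * (u x * x ^ (2 * n + 3) * (P1 x * Q0 x))) (volume.restrict (Ioi 0)) := k12.add k3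
      have k14 : Integrable (fun x => c1 * (u x * x ^ (2 * n + 1) * (P0 x * Q0 x))
        + c2 * (u x * x ^ (2 * n + 3) * (P0 x * Q0 x))
        + c3 * (u x * x ^ (2 * n + 3) * (P1 x * Q0 x))
        + c4 * (u x * x ^ (2 * n + 3) * (P0 x * Q1 x))) (volume.restrict (Ioi 0)) := k13.add k4
      rw [integral_add k14 k5, integral_add k13 k4, integral_add k12 k3, integral_add k1 k2]
      simp only [integral_const_mul, E00, E10, E01, E11]
    have key2 := key ((2 * n * a ^ 2 - T * N) * N - lam)
      (2 * (T * a ^ 2 / 2 + a ^ 2 * b ^ 2) + 2 * (T * b ^ 2 / 2 + a ^ 2 * b ^ 2) + T)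
      (-(1 / 2) * a ^ 2 * (2 * n * a ^ 2 - T * N) - n * a ^ 2 * b ^ 2 + 2 * (T * a ^ 2 / 2 + a ^ 2 * b ^ 2)
        - n * a ^ 2)
      (-(1 / 2) * b ^ 2 * (2 * n * a ^ 2 - T * N) - n * a ^ 2 * b ^ 2 + N * (T * b ^ 2 / 2 + a ^ 2 * b ^ 2))
      (-(b ^ 2 / 2) * (T * a ^ 2 / 2 + a ^ 2 * b ^ 2) - (a ^ 2 / 2) * (T * b ^ 2 / 2 + a ^ 2 * b ^ 2)
        - a ^ 2 * b ^ 2 / 2)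
    have e := key2.symm.trans ((setIntegral_congr_fun measurableSet_Ioi (fun x hx => ?_)).trans L)
    · linear_combination e
    · ring
  · intro x hx
    convert! (dP0 x hx).mul (dQ0 x hx) using 1
    ring
  · intro x hx
    have := ((hasDerivAt_pow' 2 hx)).mul (((((dP1 x hx).mul (dQ0 x hx)).const_mul (a ^ 2)).add
      (((dP0 x hx).mul (dQ1 x hx)).const_mul (b ^ 2))).const_mul (-(1 / 2)))
    convert! this using 1
    simp only [Pi.mul_apply, Pi.add_apply, Pi.sub_apply]
    rw [hT]
    push_cast
    field_simp
    ring
  · intro x hx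
    have := ((((dP1 x hx).mul (dQ0 x hx)).const_mul (n * a ^ 2)).sub
      (((dP0 x hx).mul (dQ0 x hx)).const_mul T)).add
      (((hasDerivAt_pow' 2 hx).const_mul (a ^ 2 * b ^ 2 / 2)).mul ((dP1 x hx).mul (dQ1 x hx)))
    convert! this using 1
    simp only [Pi.mul_apply, Pi.add_apply, Pi.sub_apply]
    rw [hN]
    push_cast
    field_simp
    ring
  · intro x hx
    have X := hasDerivAt_pow' 2 hx
    have := (((((dP0 x hx).mul (dQ0 x hx)).const_mul 2).sub
        ((X.const_mul (b ^ 2 / 2)).mul ((dP1 x hx).mul (dQ1 x hx)))).const_mul (n * a ^ 2)).sub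
      (((((dP0 x hx).mul (dQ0 x hx)).const_mul N).sub ((X.const_mul (1 / 2)).mul
        ((((dP1 x hx).mul (dQ0 x hx)).const_mul (a ^ 2)).add
          (((dP0 x hx).mul (dQ1 x hx)).const_mul (b ^ 2))))).const_mul T) |>.add
      ((X.const_mul (a ^ 2 * b ^ 2)).mul (((dP0 x hx).mul (dQ1 x hx)).add ((dP1 x hx).mul (dQ0 x hx))))
    convert! this using 1
    simp only [Pi.mul_apply, Pi.add_apply, Pi.sub_apply]
    rw [hN]
    push_cast
    field_simp
    ring
  all_goals
    repeat' first
      | exact cP0 | exact cP1 | exact cQ0 | exact cQ1 | exact PB.const _ | exact PB.id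
      | apply PB.sub | apply PB.add | apply PB.mul | apply PB.pow

lemma ode_uniq {k κ T : ℝ} (hk : 0 < k) (hT : T ≤ π) {f f1 f2 : ℝ → ℝ}
    (hf : ∀ t ∈ Ico 0 T, HasDerivAt f (f1 t) t) (hf1 : ∀ t ∈ Ico 0 T, HasDerivAt f1 (f2 t) t)
    (ode : ∀ t ∈ Ico 0 T, sin t * f2 t + k * cos t * f1 t + κ * sin t * f t = 0)
    (h0 : f 0 = 0) : ∀ t ∈ Ico 0 T, f t = 0 := by
  intro t1 ht1
  have h01 : f1 0 = 0 := by
    have := ode 0 ⟨le_rfl, ht1.1.trans_lt ht1.2⟩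
    simp at this
    rcases this with h | h
    · exact absurd h hk.ne'
    · exact h
  rcases eq_or_lt_of_le ht1.1 with h | hpos
  · rw [← h]; exact h0
  have hs1 : 0 < sin t1 := sin_pos_of_pos_of_lt_pi hpos (ht1.2.trans_le hT)
  set M := 2 * k / sin t1 + |1 - κ| with hM
  have hsub : ∀ t ∈ Icc 0 t1, t ∈ Ico 0 T := fun t ht => ⟨ht.1, ht.2.trans_lt ht1.2⟩
  have hd : ∀ t ∈ Icc 0 t1, HasDerivAt (fun t => (f1 t ^ 2 + f t ^ 2) * exp (-M * t))
      ((2 * f1 t * f2 t + 2 * f t * f1 t - M * (f1 t ^ 2 + f t ^ 2)) * exp (-M * t)) t := by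
    intro t ht
    have e1 : HasDerivAt (fun t => exp (-M * t)) (exp (-M * t) * (-M)) t := by
      have := ((hasDerivAt_id t).const_mul (-M)).exp
      simpa using this
    have := (((hf1 t (hsub t ht)).pow 2).add ((hf t (hsub t ht)).pow 2)).mul e1
    convert! this using 1
    simp only [Pi.add_apply, Pi.pow_apply]
    push_cast; ring
  have anti : AntitoneOn (fun t => (f1 t ^ 2 + f t ^ 2) * exp (-M * t)) (Icc 0 t1) := by
    apply antitoneOn_of_deriv_nonpos (convex_Icc _ _)
    · exact fun t ht => (hd t ht).continuousAt.continuousWithinAt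
    · exact fun t ht => (hd t (interior_subset ht)).differentiableAt.differentiableWithinAt
    · intro t ht
      rw [interior_Icc] at ht
      have htc : t ∈ Icc 0 t1 := Ioo_subset_Icc_self ht
      rw [(hd t htc).deriv]
      apply mul_nonpos_of_nonpos_of_nonneg _ (exp_pos _).le
      have hst : 0 < sin t := sin_pos_of_pos_of_lt_pi ht.1 ((ht.2.trans ht1.2).trans_le hT)
      have ho := ode t (hsub t htc)
      have hf2 : f2 t = -k * (cos t / sin t) * f1 t - κ * f t := by
        field_simp; linear_combination ho
      have hcot : -(cos t / sin t) ≤ 1 / sin t1 := by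
        rcases le_or_gt 0 (cos t) with hc | hc
        · have : 0 ≤ cos t / sin t := by positivity
          have : 0 < 1 / sin t1 := by positivity
          linarith
        · have ht2 : π / 2 ≤ t := by
            by_contra hcon
            have := cos_pos_of_mem_Ioo ⟨by linarith [ht.1, pi_pos], not_le.1 hcon⟩
            linarith
          have hle : sin t1 ≤ sin t := by
            have := sin_le_sin_of_le_of_le_pi_div_two (x := π - t1) (y := π - t)
              (by linarith [ht1.2]) (by linarith) (by linarith [ht.2])
            simpa using this
          rw [← neg_div]
          have := neg_one_le_cos t
          gcongr
          linarith
      rw [hf2]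
      have a1 : (1 - κ) * (2 * f t * f1 t) ≤ |1 - κ| * (f1 t ^ 2 + f t ^ 2) := by
        have h1 := abs_mul (1 - κ) (2 * f t * f1 t)
        have h2 : |2 * f t * f1 t| ≤ f1 t ^ 2 + f t ^ 2 := by
          rw [abs_le]; constructor <;> nlinarith only [sq_nonneg (f t - f1 t), sq_nonneg (f t + f1 t)]
        have h3 := mul_le_mul_of_nonneg_left h2 (abs_nonneg (1 - κ))
        linarith [le_abs_self ((1 - κ) * (2 * f t * f1 t))]
      have a2 : 2 * k * f1 t ^ 2 * (-(cos t / sin t)) ≤ 2 * k * f1 t ^ 2 * (1 / sin t1) :=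
        mul_le_mul_of_nonneg_left hcot (by positivity)
      have a3 : 0 ≤ 2 * k / sin t1 * f t ^ 2 := by positivity
      rw [hM]
      have a4 : 2 * k * f1 t ^ 2 * (1 / sin t1) = 2 * k / sin t1 * f1 t ^ 2 := by ring
      nlinarith only [a1, a2, a3, a4]
  have := anti ⟨le_rfl, hpos.le⟩ ⟨hpos.le, le_rfl⟩ hpos.le
  simp only [h01, h0] at this
  have h2 : f1 t1 ^ 2 + f t1 ^ 2 ≤ 0 := by
    by_contra hcon
    have := mul_pos (not_le.1 hcon) (exp_pos (-M * t1))
    norm_num at *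
    linarith
  nlinarith only [h2, sq_nonneg (f1 t1), sq_nonneg (f t1)]

lemma geg_uniq {l T : ℝ} (m : ℕ) (hl : 0 < l) (hT : T ≤ π) {f f1 f2 : ℝ → ℝ}
    (hf : ∀ t ∈ Ico 0 T, HasDerivAt f (f1 t) t) (hf1 : ∀ t ∈ Ico 0 T, HasDerivAt f1 (f2 t) t)
    (ode : ∀ t ∈ Ico 0 T, sin t * f2 t + (2 * l) * cos t * f1 t + (m * (m + 2 * l)) * sin t * f t = 0) :
    ∀ t ∈ Ico 0 T, f t * gegenbauerCt m l 1 = f 0 * gegenbauerCt m l (cos t) := by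
  obtain ⟨C1, C2, d1, d2, ho⟩ := geg_exists m l hl
  have g1 : ∀ t, HasDerivAt (fun t => gegenbauerCt m l (cos t)) (C1 (cos t) * (-sin t)) t :=
    fun t => (d1 (cos t)).comp t (hasDerivAt_cos t)
  have g2 : ∀ t, HasDerivAt (fun t => C1 (cos t) * (-sin t))
      (C2 (cos t) * (-sin t) * (-sin t) + C1 (cos t) * (-cos t)) t :=
    fun t => ((d2 (cos t)).comp t (hasDerivAt_cos t)).mul (hasDerivAt_sin t).neg
  intro t ht
  have key := ode_uniq (k := 2 * l) (κ := m * (m + 2 * l)) (T := T)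
    (f := fun t => f t * gegenbauerCt m l 1 - f 0 * gegenbauerCt m l (cos t))
    (f1 := fun t => f1 t * gegenbauerCt m l 1 - f 0 * (C1 (cos t) * (-sin t)))
    (f2 := fun t => f2 t * gegenbauerCt m l 1 -
      f 0 * (C2 (cos t) * (-sin t) * (-sin t) + C1 (cos t) * (-cos t)))
    (by linarith) hT
    (fun t ht => ((hf t ht).mul_const _).sub ((g1 t).const_mul _))
    (fun t ht => ((hf1 t ht).mul_const _).sub ((g2 t).const_mul _))
    (fun t ht => by
      have h1 := ode t ht
      have h2 := ho (cos t)
      have h3 := sin_sq_add_cos_sq t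
      linear_combination gegenbauerCt m l 1 * h1 - f 0 * sin t * h2 - f 0 * sin t * C2 (cos t) * h3)
    (by simp) t ht
  linarith

lemma Good.II_rec {mu : ℕ} {lam : ℝ} {u u1 w w1 : ℝ → ℝ} (h : Good mu lam u u1 w w1)
    (p q m : ℕ) (a b : ℝ) :
    II u p q (m + 1) a b - (p + 1) * II u (p + 1) q (m + 1) a b
      + a ^ 2 / 4 * II u (p + 2) q (m + 3) a b = 0 := by
  have i0 := (h.intPB m ((PB.Jn p a).mul (PB.Jn q b))).integrable
  have i1 := (h.intPB m ((PB.Jn (p + 1) a).mul (PB.Jn q b))).integrable.const_mul ((p : ℝ) + 1)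
  have i2 := (h.intPB (m + 2) ((PB.Jn (p + 2) a).mul (PB.Jn q b))).integrable.const_mul (a ^ 2 / 4)
  unfold II
  rw [← integral_const_mul, ← integral_const_mul, ← integral_sub i0 i1]
  have := integral_add (i0.sub i1) i2
  simp only [Pi.sub_apply] at this
  rw [← this]
  refine (integral_congr_ae (Eventually.of_forall fun x => ?_)).trans (integral_zero ℝ ℝ)
  have := Jn_rec p (a * x)
  linear_combination u x * x ^ (m + 1) * Jn q (b * x) * this

lemma II_symm_rec {mu : ℕ} {lam : ℝ} {u u1 w w1 : ℝ → ℝ} (h : Good mu lam u u1 w w1)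
    (p q m : ℕ) (a b : ℝ) :
    II u p q (m + 1) a b - (q + 1) * II u p (q + 1) (m + 1) a b
      + b ^ 2 / 4 * II u p (q + 2) (m + 3) a b = 0 := by
  have sw : ∀ p q m, II u p q m a b = II u q p m b a := fun p q m => by
    unfold II; congr 1; ext x; ring
  rw [sw, sw, sw]
  exact h.II_rec q p m b a

lemma Good.II_deriv {mu : ℕ} {lam : ℝ} {u u1 w w1 : ℝ → ℝ} (h : Good mu lam u u1 w w1)
    (p q m : ℕ) {a b a' b' : ℝ → ℝ} {t0 : ℝ}
    (ha : ∀ᶠ t in nhds t0, HasDerivAt a (a' t) t) (hb : ∀ᶠ t in nhds t0, HasDerivAt b (b' t) t)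
    (ca : ContinuousAt a' t0) (cb : ContinuousAt b' t0) :
    HasDerivAt (fun t => II u p q (m + 1) (a t) (b t))
      (-(a t0 * a' t0 / 2) * II u (p + 1) q (m + 3) (a t0) (b t0)
        - (b t0 * b' t0 / 2) * II u p (q + 1) (m + 3) (a t0) (b t0)) t0 := by
  have c1 : ContinuousAt (fun t => a t * a' t / 2) t0 := (ha.self_of_nhds.continuousAt.mul ca).div_const _
  have c2 : ContinuousAt (fun t => b t * b' t / 2) t0 := (hb.self_of_nhds.continuousAt.mul cb).div_const _
  set M1 := |a t0 * a' t0 / 2| + 1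
  set M2 := |b t0 * b' t0 / 2| + 1
  have b1 : ∀ᶠ t in nhds t0, |a t * a' t / 2| < M1 :=
    c1.abs.eventually_lt_const (by simp [M1])
  have b2 : ∀ᶠ t in nhds t0, |b t * b' t / 2| < M2 :=
    c2.abs.eventually_lt_const (by simp [M2])
  set s := {t | HasDerivAt a (a' t) t ∧ HasDerivAt b (b' t) t ∧ |a t * a' t / 2| < M1 ∧ |b t * b' t / 2| < M2}
  have hs : s ∈ nhds t0 := by
    filter_upwards [ha, hb, b1, b2] with t h1 h2 h3 h4
    exact ⟨h1, h2, h3, h4⟩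
  have i0 : ∀ t, IntegrableOn (fun x => u x * x ^ (m + 1) * (Jn p (a t * x) * Jn q (b t * x))) (Ioi 0) :=
    fun t => h.intPB m ((PB.Jn p _).mul (PB.Jn q _))
  have i1 := (h.intPB (m + 2) ((PB.Jn (p + 1) (a t0)).mul (PB.Jn q (b t0)))).integrable.const_mul
    (-(a t0 * a' t0 / 2))
  have i2 := (h.intPB (m + 2) ((PB.Jn p (a t0)).mul (PB.Jn (q + 1) (b t0)))).integrable.const_mul
    (b t0 * b' t0 / 2)
  have ib := ((h.intPB (m + 2) (PB.const 1)).integrable.abs).const_mul (M1 + M2)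
  have := hasDerivAt_integral_of_dominated_loc_of_deriv_le (μ := volume.restrict (Ioi 0))
    (F := fun t x => u x * x ^ (m + 1) * (Jn p (a t * x) * Jn q (b t * x)))
    (F' := fun t x => -(a t * a' t / 2) * (u x * x ^ (m + 2 + 1) * (Jn (p + 1) (a t * x) * Jn q (b t * x)))
      - (b t * b' t / 2) * (u x * x ^ (m + 2 + 1) * (Jn p (a t * x) * Jn (q + 1) (b t * x))))
    (x₀ := t0) (s := s) (bound := fun x => (M1 + M2) * |u x * x ^ (m + 2 + 1) * 1|) hs
    (Eventually.of_forall fun t => (i0 t).aestronglyMeasurable) (i0 t0)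
    (i1.sub i2).aestronglyMeasurable
    (Eventually.of_forall fun x t ht => by
      obtain ⟨-, -, h3, h4⟩ := ht
      have j1 := Jn_abs_le_one (p + 1) (a t * x)
      have j2 := Jn_abs_le_one q (b t * x)
      have j3 := Jn_abs_le_one p (a t * x)
      have j4 := Jn_abs_le_one (q + 1) (b t * x)
      have k1 : |Jn (p + 1) (a t * x) * Jn q (b t * x)| ≤ 1 := by
        rw [abs_mul]; exact mul_le_one₀ j1 (abs_nonneg _) j2
      have k2 : |Jn p (a t * x) * Jn (q + 1) (b t * x)| ≤ 1 := by
        rw [abs_mul]; exact mul_le_one₀ j3 (abs_nonneg _) j4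
      set U := u x * x ^ (m + 2 + 1)
      rw [Real.norm_eq_abs, mul_one]
      refine (abs_sub _ _).trans ?_
      rw [abs_mul, abs_mul (b t * b' t / 2), abs_mul U, abs_mul U, abs_neg, add_mul]
      have hU := abs_nonneg U
      have r : ∀ {c d M : ℝ}, |c| < M → |d| ≤ 1 → |c| * (|U| * |d|) ≤ M * |U| := by
        intro c d M hc hd
        calc |c| * (|U| * |d|) ≤ |c| * (|U| * 1) := by gcongr
          _ = |c| * |U| := by ring
          _ ≤ _ := by gcongr
      exact add_le_add (r h3 k1) (r h4 k2))
    ib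
    (Eventually.of_forall fun x t ht => by
      obtain ⟨h1, h2, -, -⟩ := ht
      have d1 := (Jn_hasDerivAt p (a t * x)).comp t (h1.mul_const x)
      have d2 := (Jn_hasDerivAt q (b t * x)).comp t (h2.mul_const x)
      convert! (d1.mul d2).const_mul (u x * x ^ (m + 1)) using 1
      simp only [Function.comp]
      ring)
  have h2 := this.2
  have e := integral_sub i1 i2
  rw [integral_const_mul, integral_const_mul] at e
  convert! h2 using 1
  rw [e]; rfl

lemma ode_alg (s c S n lam b2 I J00 J10 J01 K11 K20 K02 : ℝ)
    (hb : b2 = (S ^ 2 * s ^ 2 - 4 + 4 * c * S) / 4)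
    (a2 T N A Ap B Bp I1 I2 a1 g gp: ℝ) (ha : a2 = S ^ 2 * s ^ 2 / 4)
    (ha1 : a1 = S * c / 2 + S ^ 2 * s ^ 2 / 4)
    (hA : A = S * s / 2 * a1 / 2)
    (hAp : Ap = (a1 ^ 2 + S * s / 2 * (3 / 4 * S ^ 2 * s * c - S * s / 2 + S ^ 3 * s ^ 3 / 4)) / 2)
    (hB : B = b2 * S * s / 4)
    (hBp : Bp = (b2 * S ^ 2 * s ^ 2 / 4 + b2 * (S ^ 2 * s ^ 2 / 2 + S * c / 2)) / 2)
    (hI1 : I1 = -A * J10 - B * J01)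
    (hI2 : I2 = -Ap * J10 - Bp * J01 + A * (A * K20 + B * K11) + B * (A * K11 + B * K02))
    (hg : g = (n + 1) * S * s / 2) (hgp : gp = (n + 1) * (S ^ 2 * s ^ 2 / 4 + S * c / 2))
    (hT : T = 1 + a2 + b2) (hN : N = 2 * n + 2)
    (rel : (2 * n * a2 - T * N) * (N * I - (1 / 2) * (a2 * J10 + b2 * J01))
      - n * a2 * b2 * (J01 + J10)
      + (T * a2 / 2 + a2 * b2) * (2 * J10 + 2 * J00 - (b2 / 2) * K11)
      + (T * b2 / 2 + a2 * b2) * (N * J01 + 2 * J00 - (a2 / 2) * K11)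
      - (n * a2 * J10 - T * J00 + (a2 * b2 / 2) * K11) - lam * I = 0)
    (r1 : J00 - (n + 1) * J10 + a2 / 4 * K20 = 0) (r2 : J00 - J01 + b2 / 4 * K02 = 0) :
    s * (g * (g * I + I1) + gp * I + g * I1 + I2) + (2 * n + 1) * c * (g * I + I1)
      + lam / 4 * s * I = 0 := by
  subst hI1 hI2 hA hAp hB hBp hg hgp hT hN ha1 ha hb
  linear_combination (-s / 4) * rel + s * (S * c / 2 + S ^ 2 * s ^ 2 / 4) ^ 2 * r1 +
    s * ((S ^ 2 * s ^ 2 - 4 + 4 * c * S) / 4 * S ^ 2 * s ^ 2 / 4) * r2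

/-- the main separation step: for fixed `φ`, dependence on `ϑ` -/
lemma Good.theta {n j : ℕ} {lam : ℝ} {u u1 w w1 : ℝ → ℝ} (h : Good (2 * n) lam u u1 w w1)
    (hlam : lam = 4 * (j * (j + 2 * n + 1))) {φ : ℝ} (hφ0 : 0 ≤ φ) (hφ : φ < π) {t : ℝ}
    (ht : t ∈ Ico 0 (π - φ)) :
    (2 / (cos t + cos φ)) ^ (n + 1) * II u n 0 (2 * n + 1) (2 / (cos t + cos φ) * sin t / 2)
      (2 / (cos t + cos φ) * sin φ / 2) * gegenbauerCt j (n + 1 / 2) 1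
    = (2 / (1 + cos φ)) ^ (n + 1) * II u n 0 (2 * n + 1) 0 (2 / (1 + cos φ) * sin φ / 2)
      * gegenbauerCt j (n + 1 / 2) (cos t) := by
  set σ : ℝ → ℝ := fun t => 2 / (cos t + cos φ) with hσ
  set α : ℝ → ℝ := fun t => σ t * sin t / 2 with hα
  set β : ℝ → ℝ := fun t => σ t * sin φ / 2 with hβ
  have pos : ∀ t ∈ Ico 0 (π - φ), 0 < cos t + cos φ := by
    intro t ht
    have := cos_lt_cos_of_nonneg_of_le_pi (x := t) (y := π - φ) ht.1 (by linarith) ht.2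
    rw [cos_pi_sub] at this; linarith
  have evp : ∀ t, 0 < cos t + cos φ → ∀ᶠ s in nhds t, 0 < cos s + cos φ := fun t ht =>
    (continuous_cos.add continuous_const).continuousAt.eventually_const_lt ht
  have dσ : ∀ t, 0 < cos t + cos φ → HasDerivAt σ (σ t ^ 2 * sin t / 2) t := by
    intro t ht
    have := ((hasDerivAt_cos t).add_const (cos φ)).inv ht.ne' |>.const_mul 2
    convert! this using 1
    simp only [hσ]; field_simp; try ring
  set α1 : ℝ → ℝ := fun t => σ t * cos t / 2 + σ t ^ 2 * sin t ^ 2 / 4 with hα1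
  set β1 : ℝ → ℝ := fun t => β t * σ t * sin t / 2 with hβ1
  have dα : ∀ t, 0 < cos t + cos φ → HasDerivAt α (α1 t) t := by
    intro t ht
    convert! ((dσ t ht).mul (hasDerivAt_sin t)).div_const 2 using 1
    simp only [hα1]; ring
  have dβ : ∀ t, 0 < cos t + cos φ → HasDerivAt β (β1 t) t := by
    intro t ht
    convert! ((dσ t ht).mul_const (sin φ)).div_const 2 using 1
    simp only [hβ1, hβ]; ring
  have dα1 : ∀ t, 0 < cos t + cos φ → HasDerivAt α1
      (3 / 4 * σ t ^ 2 * sin t * cos t - σ t * sin t / 2 + σ t ^ 3 * sin t ^ 3 / 4) t := by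
    intro t ht
    convert! (((dσ t ht).mul (hasDerivAt_cos t)).div_const 2).add
      ((((dσ t ht).pow 2).mul ((hasDerivAt_sin t).pow 2)).div_const 4) using 1
    simp only [Pi.pow_apply]; push_cast; ring
  have dβ1 : ∀ t, 0 < cos t + cos φ → HasDerivAt β1
      (β t * (σ t ^ 2 * sin t ^ 2 / 2 + σ t * cos t / 2)) t := by
    intro t ht
    convert! (((dβ t ht).mul (dσ t ht)).mul (hasDerivAt_sin t)).div_const 2 using 1
    simp only [Pi.mul_apply, hβ1]; ring
  have dI : ∀ p q m t, 0 < cos t + cos φ → HasDerivAt (fun t => II u p q (m + 1) (α t) (β t))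
      (-(α t * α1 t / 2) * II u (p + 1) q (m + 3) (α t) (β t)
        - (β t * β1 t / 2) * II u p (q + 1) (m + 3) (α t) (β t)) t := fun p q m t ht =>
    h.II_deriv p q m ((evp t ht).mono fun s hs => dα s hs) ((evp t ht).mono fun s hs => dβ s hs)
      (dα1 t ht).continuousAt (dβ1 t ht).continuousAt
  set g : ℝ → ℝ := fun t => (n + 1) * σ t * sin t / 2 with hg
  have dg : ∀ t, 0 < cos t + cos φ → HasDerivAt g
      ((n + 1) * (σ t ^ 2 * sin t ^ 2 / 4 + σ t * cos t / 2)) t := by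
    intro t ht
    convert! ((((dσ t ht).const_mul ((n : ℝ) + 1)).mul (hasDerivAt_sin t)).div_const 2) using 1
    ring
  have dσp : ∀ t, 0 < cos t + cos φ → HasDerivAt (fun t => σ t ^ (n + 1)) (σ t ^ (n + 1) * g t) t := by
    intro t ht
    convert! (dσ t ht).pow (n + 1) using 1
    simp only [hg, Nat.add_sub_cancel]; push_cast; ring
  set I1 : ℝ → ℝ := fun t => -(α t * α1 t / 2) * II u (n + 1) 0 (2 * n + 3) (α t) (β t)
        - (β t * β1 t / 2) * II u n 1 (2 * n + 3) (α t) (β t) with hI1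
  set I2 : ℝ → ℝ := fun t =>
      -((α1 t * α1 t + α t * (3 / 4 * σ t ^ 2 * sin t * cos t - σ t * sin t / 2 + σ t ^ 3 * sin t ^ 3 / 4)) / 2)
          * II u (n + 1) 0 (2 * n + 3) (α t) (β t)
        + (-(α t * α1 t / 2)) * (-(α t * α1 t / 2) * II u (n + 2) 0 (2 * n + 5) (α t) (β t)
          - (β t * β1 t / 2) * II u (n + 1) 1 (2 * n + 5) (α t) (β t))
      - ((β1 t * β1 t + β t * (β t * (σ t ^ 2 * sin t ^ 2 / 2 + σ t * cos t / 2))) / 2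
          * II u n 1 (2 * n + 3) (α t) (β t)
        + (β t * β1 t / 2) * (-(α t * α1 t / 2) * II u (n + 1) 1 (2 * n + 5) (α t) (β t)
          - (β t * β1 t / 2) * II u n 2 (2 * n + 5) (α t) (β t))) with hI2
  have dI1 : ∀ t, 0 < cos t + cos φ → HasDerivAt I1 (I2 t) t := by
    intro t ht
    exact ((((dα t ht).mul (dα1 t ht)).div_const 2).neg.mul (dI (n + 1) 0 (2 * n + 2) t ht)).sub
      ((((dβ t ht).mul (dβ1 t ht)).div_const 2).mul (dI n 1 (2 * n + 2) t ht))
  set I0 : ℝ → ℝ := fun t => II u n 0 (2 * n + 1) (α t) (β t) with hI0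
  have dI0 : ∀ t, 0 < cos t + cos φ → HasDerivAt I0 (I1 t) t := fun t ht => dI n 0 (2 * n) t ht
  have main := geg_uniq (l := n + 1 / 2) (T := π - φ) j (by positivity) (by linarith)
    (f := fun t => σ t ^ (n + 1) * I0 t) (f1 := fun t => σ t ^ (n + 1) * (g t * I0 t + I1 t))
    (f2 := fun t => σ t ^ (n + 1) * (g t * (g t * I0 t + I1 t) +
      ((n + 1) * (σ t ^ 2 * sin t ^ 2 / 4 + σ t * cos t / 2)) * I0 t + g t * I1 t + I2 t))
    (fun t ht => by
      convert! (dσp t (pos t ht)).mul (dI0 t (pos t ht)) using 1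
      ring)
    (fun t ht => by
      convert! (dσp t (pos t ht)).mul (((dg t (pos t ht)).mul (dI0 t (pos t ht))).add (dI1 t (pos t ht)))
        using 1
      simp only [Pi.add_apply, Pi.mul_apply]; ring)
    (fun t ht => by
      have hp := pos t ht
      have hS : σ t * (cos t + cos φ) = 2 := by simp only [hσ]; field_simp
      have hb : β t ^ 2 = (σ t ^ 2 * sin t ^ 2 - 4 + 4 * cos t * σ t) / 4 := by
        have h1 := sin_sq_add_cos_sq t
        have h2 := sin_sq_add_cos_sq φ
        have h3 : β t ^ 2 = σ t ^ 2 * sin φ ^ 2 / 4 := by simp only [hβ]; ring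
        rw [h3]
        linear_combination σ t ^ 2 / 4 * h2 - σ t ^ 2 / 4 * h1 -
          (σ t * cos φ + 2 - σ t * cos t) / 4 * hS
      have rel := h.II_rel (α t) (β t) _ _ rfl rfl
      have r1 := h.II_rec n 0 (2 * n + 2) (α t) (β t)
      have r2 := II_symm_rec h n 0 (2 * n + 2) (α t) (β t)
      simp only [Nat.cast_zero, zero_add, one_mul] at r2
      have := ode_alg (sin t) (cos t) (σ t) n lam (β t ^ 2) (I0 t) _ _ _ _ _ _ hb (α t ^ 2) _ _ _ _ _ _
        (I1 t) (I2 t) (α1 t) (g t) _ (by simp only [hα]; ring) rfl rfl rfl rfl rfl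
        (by simp only [hI1, hα, hβ1]; ring) (by simp only [hI2, hα, hβ1]; ring) rfl rfl rfl rfl rel r1 r2
      rw [hlam] at this
      linear_combination σ t ^ (n + 1) * this)
    t ht
  simpa [hI0, hα, hβ, hσ] using main

/-- second separation step: dependence on `φ` for `ϑ = 0` -/
lemma Good.phi {n j : ℕ} {lam : ℝ} {u u1 w w1 : ℝ → ℝ} (h : Good (2 * n) lam u u1 w w1)
    (hlam : lam = 4 * (j * (j + 2 * n + 1))) {t : ℝ} (ht : t ∈ Ico 0 π) :
    (2 / (1 + cos t)) ^ (n + 1) * II u n 0 (2 * n + 1) 0 (2 / (1 + cos t) * sin t / 2)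
      * gegenbauerCt (j + n) (1 / 2) 1
    = II u n 0 (2 * n + 1) 0 0 * gegenbauerCt (j + n) (1 / 2) (cos t) := by
  set σ : ℝ → ℝ := fun t => 2 / (1 + cos t) with hσ
  set β : ℝ → ℝ := fun t => σ t * sin t / 2 with hβ
  have pos : ∀ t ∈ Ico 0 π, 0 < 1 + cos t := by
    intro t ht
    have := cos_lt_cos_of_nonneg_of_le_pi (x := t) (y := π) ht.1 le_rfl ht.2
    rw [cos_pi] at this; linarith
  have evp : ∀ t, 0 < 1 + cos t → ∀ᶠ s in nhds t, 0 < 1 + cos s := fun t ht =>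
    (continuous_const.add continuous_cos).continuousAt.eventually_const_lt ht
  have hX : ∀ t, 0 < 1 + cos t → σ t * cos t = 2 - σ t := by
    intro t ht; simp only [hσ]; field_simp; ring
  have hY : ∀ t, 0 < 1 + cos t → σ t ^ 2 * sin t ^ 2 = 4 * (σ t - 1) := by
    intro t ht
    rw [sin_sq]; linear_combination (-σ t * cos t - 2 + σ t) * hX t ht
  have dσ : ∀ t, 0 < 1 + cos t → HasDerivAt σ (σ t ^ 2 * sin t / 2) t := by
    intro t ht
    have := ((hasDerivAt_cos t).const_add 1).inv ht.ne' |>.const_mul 2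
    convert! this using 1
    simp only [hσ]; field_simp
  set β1 : ℝ → ℝ := fun t => σ t / 2 with hβ1
  have dβ : ∀ t, 0 < 1 + cos t → HasDerivAt β (β1 t) t := by
    intro t ht
    convert! ((dσ t ht).mul (hasDerivAt_sin t)).div_const 2 using 1
    simp only [hβ1]
    linear_combination (-1 / 2) * hX t ht - 1 / 4 * hY t ht
  have dI : ∀ p q m t, 0 < 1 + cos t → HasDerivAt (fun t => II u p q (m + 1) 0 (β t))
      (- (β t * β1 t / 2) * II u p (q + 1) (m + 3) 0 (β t)) t := fun p q m t ht => by
    have := h.II_deriv p q m (a := fun _ => 0) (a' := fun _ => 0) (t0 := t)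
      (Eventually.of_forall fun s => hasDerivAt_const s (0:ℝ)) ((evp t ht).mono fun s hs => dβ s hs)
      continuousAt_const ((dσ t ht).continuousAt.div_const 2)
    convert! this using 1
    ring
  set g : ℝ → ℝ := fun t => (n + 1) * σ t * sin t / 2 with hg
  have dg : ∀ t, 0 < 1 + cos t → HasDerivAt g
      ((n + 1) * (σ t ^ 2 * sin t ^ 2 / 4 + σ t * cos t / 2)) t := by
    intro t ht
    convert! ((((dσ t ht).const_mul ((n : ℝ) + 1)).mul (hasDerivAt_sin t)).div_const 2) using 1
    ring
  have dσp : ∀ t, 0 < 1 + cos t → HasDerivAt (fun t => σ t ^ (n + 1)) (σ t ^ (n + 1) * g t) t := by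
    intro t ht
    convert! (dσ t ht).pow (n + 1) using 1
    simp only [hg, Nat.add_sub_cancel]; push_cast; ring
  set I1 : ℝ → ℝ := fun t => - (β t * β1 t / 2) * II u n 1 (2 * n + 3) 0 (β t) with hI1
  set I2 : ℝ → ℝ := fun t => -((β1 t * β1 t + β t * (σ t ^ 2 * sin t / 2 / 2)) / 2)
          * II u n 1 (2 * n + 3) 0 (β t)
        + -(β t * β1 t / 2) * (- (β t * β1 t / 2) * II u n 2 (2 * n + 5) 0 (β t)) with hI2
  have dI1 : ∀ t, 0 < 1 + cos t → HasDerivAt I1 (I2 t) t := by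
    intro t ht
    exact (((dβ t ht).mul ((dσ t ht).div_const 2)).div_const 2).neg.mul (dI n 1 (2 * n + 2) t ht)
  set I0 : ℝ → ℝ := fun t => II u n 0 (2 * n + 1) 0 (β t) with hI0
  have dI0 : ∀ t, 0 < 1 + cos t → HasDerivAt I0 (I1 t) t := fun t ht => dI n 0 (2 * n) t ht
  have main := geg_uniq (l := 1 / 2) (T := π) (j + n) (by norm_num) le_rfl
    (f := fun t => σ t ^ (n + 1) * I0 t) (f1 := fun t => σ t ^ (n + 1) * (g t * I0 t + I1 t))
    (f2 := fun t => σ t ^ (n + 1) * (g t * (g t * I0 t + I1 t) +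
      ((n + 1) * (σ t ^ 2 * sin t ^ 2 / 4 + σ t * cos t / 2)) * I0 t + g t * I1 t + I2 t))
    (fun t ht => by
      convert! (dσp t (pos t ht)).mul (dI0 t (pos t ht)) using 1
      ring)
    (fun t ht => by
      convert! (dσp t (pos t ht)).mul (((dg t (pos t ht)).mul (dI0 t (pos t ht))).add (dI1 t (pos t ht)))
        using 1
      simp only [Pi.add_apply, Pi.mul_apply]; ring)
    (fun t ht => by
      have hp := pos t ht
      have X := hX t hp
      have Y := hY t hp
      have hb : β t ^ 2 = σ t - 1 := by
        simp only [hβ]; linear_combination 1 / 4 * Y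
      have rel := h.II_rel 0 (β t) _ _ rfl rfl
      have r2 := II_symm_rec h n 0 (2 * n + 2) 0 (β t)
      simp only [Nat.cast_zero, zero_add, one_mul] at r2
      rw [hb] at rel r2
      have e1 : I1 t = -(σ t ^ 2 * sin t / 8) * II u n 1 (2 * n + 3) 0 (β t) := by
        simp only [hI1, hβ1, hβ]; ring
      have e2 : I2 t = -((σ t ^ 2 / 4 + σ t * (σ t ^ 2 * sin t ^ 2) / 8) / 2)
          * II u n 1 (2 * n + 3) 0 (β t)
        + (β t ^ 2 * σ t ^ 2 / 16) * II u n 2 (2 * n + 5) 0 (β t) := by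
        simp only [hI2, hβ1]
        have : β t * (σ t ^ 2 * sin t / 2 / 2) = σ t * (σ t ^ 2 * sin t ^ 2) / 8 := by
          simp only [hβ]; ring
        rw [this]; ring
      rw [e1, e2, hb]
      have e3 : II u n 0 (2 * n + 1) 0 (β t) = I0 t := rfl
      rw [e3] at rel
      simp only [hg]
      push_cast
      subst hlam
      generalize I0 t = i0 at *
      generalize II u n 1 (2 * n + 3) 0 (β t) = J01 at *
      generalize II u n 0 (2 * n + 3) 0 (β t) = J00 at *
      change J00 - J01 + (σ t - 1) / 4 * II u n 2 (2 * n + 5) 0 (β t) = 0 at r2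
      generalize II u n 2 (2 * n + 5) 0 (β t) = K02 at *
      generalize σ t = S at *
      linear_combination S ^ (n + 1) * ((-sin t / 4) * rel + sin t * S ^ 2 / 4 * r2
        + sin t * ((n + 1) ^ 2 / 4 * i0 - (n + 1) * S / 8 * J01 + (n + 1) / 4 * i0 - S / 16 * J01) * Y
        + sin t * ((n + 1) * i0 - S / 8 * J01) * X))
    t ht
  have h0 : σ 0 = 1 := by simp [hσ]; norm_num
  simpa [hI0, hβ, h0] using main

lemma exp_change (L : ℝ) (hL : 0 < L) (g : ℝ → ℝ) :
    ∫ a in Ioi 0, g a = ∫ s, L * exp (L * s) * g (exp (L * s)) := by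
  have him : (fun s => exp (L * s)) '' univ = Ioi 0 := by
    ext a
    simp only [image_univ, mem_range, mem_Ioi]
    constructor
    · rintro ⟨s, rfl⟩; exact exp_pos _
    · intro ha
      exact ⟨log a / L, by rw [mul_div_cancel₀ _ hL.ne', exp_log ha]⟩
  have := integral_image_eq_integral_abs_deriv_smul (s := univ) (f := fun s => exp (L * s))
    (f' := fun s => L * exp (L * s)) MeasurableSet.univ
    (fun s _ => by
      have := ((hasDerivAt_id s).const_mul L).exp
      simp only [id, mul_one] at this
      convert! this.hasDerivWithinAt using 1
      ring)
    (fun s _ t _ hst => by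
      have := exp_injective hst
      exact mul_left_cancel₀ hL.ne' this) g
  rw [him, Measure.restrict_univ] at this
  rw [this]
  congr 1; ext s
  rw [abs_of_pos (by positivity), smul_eq_mul]

lemma exp_abs_bound (s : ℝ) : exp (-|s|) ≤ 2 * (1 + s ^ 2)⁻¹ := by
  have h := quadratic_le_exp_of_nonneg (abs_nonneg s)
  rw [exp_neg, ← div_eq_mul_inv, inv_eq_one_div, div_le_div_iff₀ (exp_pos _) (by positivity)]
  rw [sq_abs] at h
  nlinarith only [h, abs_nonneg s]

lemma log_limit {H : ℝ → ℝ} {M κ : ℝ} (hM : 0 ≤ M) (hc : ContinuousOn H (Ioi 0))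
    (h1 : ∀ a > 0, |a * H a| ≤ M) (h2 : ∀ a > 0, |a * H a| ≤ M * a ^ 2)
    (hl : Tendsto (fun a => a * H a) atTop (nhds κ)) :
    Tendsto (fun L => (∫ a in Ioi 0, H a * exp (-(exp (-L) * a) ^ 2)) / L) atTop (nhds κ) := by
  have key : Tendsto (fun L : ℝ => ∫ s : ℝ, exp (L * s) * H (exp (L * s)) * exp (-exp (2 * (L * (s - 1)))))
      atTop (nhds (∫ s : ℝ, (Ioo (0:ℝ) 1).indicator (fun _ => κ) s)) := by
    apply tendsto_integral_filter_of_dominated_convergence (fun s => M * exp 2 * (2 * (1 + s ^ 2)⁻¹))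
    · refine Eventually.of_forall fun L => Continuous.aestronglyMeasurable ?_
      have hcc : Continuous fun s => H (exp (L * s)) :=
        hc.comp_continuous (by fun_prop) fun s => exp_pos _
      exact ((by fun_prop : Continuous fun s => exp (L * s)).mul hcc).mul (by fun_prop)
    · filter_upwards [eventually_ge_atTop 1] with L hL
      refine Eventually.of_forall fun s => ?_
      have ha := exp_pos (L * s)
      rw [norm_mul, Real.norm_eq_abs, Real.norm_eq_abs, abs_of_pos (exp_pos (-_))]
      have hE1 : exp (-exp (2 * (L * (s - 1)))) ≤ 1 := exp_le_one_iff.2 (neg_nonpos.2 (exp_pos _).le)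
      have hsuff : |exp (L * s) * H (exp (L * s))| * exp (-exp (2 * (L * (s - 1)))) ≤ M * exp 2 * exp (-|s|) := by
        rw [mul_assoc M, ← exp_add]
        rcases le_total s 0 with hs | hs
        · rw [abs_of_nonpos hs]
          calc _ ≤ (M * exp (L * s) ^ 2) * 1 := by
                apply mul_le_mul (h2 _ ha) hE1 (exp_pos _).le (by positivity)
            _ = M * exp (2 * (L * s)) := by rw [two_mul (L * s), exp_add]; ring
            _ ≤ _ := by
                apply mul_le_mul_of_nonneg_left _ hM
                apply exp_le_exp.2
                nlinarith only [hs, hL]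
        · rw [abs_of_nonneg hs]
          calc _ ≤ M * exp (-exp (2 * (L * (s - 1)))) := mul_le_mul_of_nonneg_right (h1 _ ha) (exp_pos _).le
            _ ≤ _ := by
                apply mul_le_mul_of_nonneg_left _ hM
                apply exp_le_exp.2
                rcases le_total s 1 with h | h
                · have := exp_pos (2 * (L * (s - 1))); linarith
                · have := add_one_le_exp (2 * (L * (s - 1)))
                  nlinarith only [this, hL, h]
      exact hsuff.trans (mul_le_mul_of_nonneg_left (exp_abs_bound s) (by positivity))
    · exact (integrable_inv_one_add_sq.const_mul 2).const_mul _
    · have hn : ∀ᵐ s : ℝ, s ≠ 0 ∧ s ≠ 1 := by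
        have h0 : ∀ᵐ s : ℝ, s ≠ 0 := Measure.ae_ne volume 0
        have h1 : ∀ᵐ s : ℝ, s ≠ 1 := Measure.ae_ne volume 1
        filter_upwards [h0, h1] with s h0 h1 using ⟨h0, h1⟩
      filter_upwards [hn] with s hs
      have te : ∀ c : ℝ, c < 0 → Tendsto (fun L : ℝ => exp (L * c)) atTop (nhds 0) := fun c hc =>
        tendsto_exp_atBot.comp (tendsto_id.atTop_mul_const_of_neg hc)
      rcases lt_or_gt_of_ne hs.1 with h | h
      · rw [indicator_of_notMem (fun hh => by linarith [hh.1])]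
        apply squeeze_zero_norm (a := fun L => M * exp (L * s) ^ 2)
        · intro L
          rw [norm_mul, Real.norm_eq_abs, Real.norm_eq_abs, abs_of_pos (exp_pos (-_))]
          have hE1 : exp (-exp (2 * (L * (s - 1)))) ≤ 1 := exp_le_one_iff.2 (neg_nonpos.2 (exp_pos _).le)
          calc _ ≤ (M * exp (L * s) ^ 2) * 1 := by
                apply mul_le_mul (h2 _ (exp_pos _)) hE1 (exp_pos _).le (by positivity)
            _ = _ := by ring
        · simpa using ((te s h).pow 2).const_mul M
      rcases lt_or_gt_of_ne hs.2 with h' | h'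
      · rw [indicator_of_mem (show s ∈ Ioo (0:ℝ) 1 from ⟨h, h'⟩)]
        have t1 : Tendsto (fun L : ℝ => exp (L * s) * H (exp (L * s))) atTop (nhds κ) :=
          hl.comp (tendsto_exp_atTop.comp (tendsto_id.atTop_mul_const h))
        have t2 : Tendsto (fun L : ℝ => exp (-exp (2 * (L * (s - 1))))) atTop (nhds 1) := by
          have := te (2 * (s - 1)) (by linarith)
          have := (continuous_exp.tendsto _).comp this.neg
          simp only [neg_zero, exp_zero] at this
          convert this using 2 with L
          simp only [Function.comp]
          ring_nf
        simpa using t1.mul t2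
      · rw [indicator_of_notMem (fun hh => by linarith [hh.2])]
        have t3 : Tendsto (fun L : ℝ => exp (-exp (2 * (L * (s - 1))))) atTop (nhds 0) := by
          apply tendsto_exp_neg_atTop_nhds_zero.comp
          apply tendsto_exp_atTop.comp
          have : Tendsto (fun L : ℝ => L * (2 * (s - 1))) atTop atTop :=
            tendsto_id.atTop_mul_const (by linarith)
          exact this.congr fun L => by ring
        apply squeeze_zero_norm (a := fun L => M * exp (-exp (2 * (L * (s - 1)))))
        · intro L
          rw [norm_mul, Real.norm_eq_abs, Real.norm_eq_abs, abs_of_pos (exp_pos (-_))]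
          exact mul_le_mul_of_nonneg_right (h1 _ (exp_pos _)) (exp_pos _).le
        · simpa using t3.const_mul M
  rw [integral_indicator measurableSet_Ioo] at key
  simp only [integral_const, MeasurableSet.univ, measureReal_restrict_apply, univ_inter,
    volume_real_Ioo, sub_zero, zero_le_one, sup_of_le_left, smul_eq_mul, one_mul] at key
  norm_num at key
  refine key.congr' ?_
  filter_upwards [eventually_gt_atTop 0] with L hL
  rw [exp_change L hL, eq_div_iff hL.ne', mul_comm, ← integral_const_mul]
  congr 1; ext s
  have : (exp (-L) * exp (L * s)) ^ 2 = exp (2 * (L * (s - 1))) := by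
    rw [← exp_add, ← exp_nat_mul]; congr 1; push_cast; ring
  rw [this]; ring

lemma int_gauss (k : ℕ) {e : ℝ} (he : 0 < e) :
    IntegrableOn (fun a => a ^ k * exp (-(e * a) ^ 2)) (Ioi 0) ∧
    ∫ a in Ioi 0, a ^ (2 * k + 1) * exp (-(e * a) ^ 2) = k.factorial / (2 * e ^ (2 * k + 2)) := by
  have e2 : 0 < e ^ 2 := by positivity
  constructor
  · have := integrableOn_rpow_mul_exp_neg_mul_sq e2 (s := k)
      (by have : (0:ℝ) ≤ k := by positivity
          linarith)
    refine this.congr_fun (fun x _ => ?_) measurableSet_Ioi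
    simp only [rpow_natCast]
    congr 2; ring
  · have hk : (0:ℝ) ≤ k := by positivity
    have := integral_rpow_mul_exp_neg_mul_rpow (p := 2) (q := 2 * k + 1) (b := e ^ 2) two_pos
      (by linarith) e2
    rw [show (2 * (k:ℝ) + 1 + 1) / 2 = k + 1 by ring, Gamma_nat_eq_factorial,
      show -(2 * (k:ℝ) + 1 + 1) / 2 = -((k + 1 : ℕ):ℝ) by push_cast; ring, rpow_neg e2.le,
      rpow_natCast] at this
    calc _ = ∫ x in Ioi 0, x ^ (2 * (k:ℝ) + 1) * exp (-e ^ 2 * x ^ (2:ℝ)) := by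
          apply setIntegral_congr_fun measurableSet_Ioi
          intro x hx
          simp only
          rw [show 2 * (k:ℝ) + 1 = ((2 * k + 1 : ℕ) : ℝ) by push_cast; ring, rpow_natCast, rpow_two]
          congr 2; ring
      _ = _ := by rw [this, ← pow_mul, show 2 * (k + 1) = 2 * k + 2 by ring]; field_simp

lemma gauss_J (n : ℕ) (x : ℝ) {e : ℝ} (he : 0 < e) :
    ∫ a in Ioi 0, Jn n (a * x) * (a ^ (2 * n + 1) * exp (-(e * a) ^ 2))
      = exp (-(x / (2 * e)) ^ 2) / (2 * e ^ (2 * n + 2)) := by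
  set F : ℕ → ℝ → ℝ := fun m a => (-(x ^ 2 / 4)) ^ m / (m.factorial * (m + n).factorial) *
    (a ^ (2 * (m + n) + 1) * exp (-(e * a) ^ 2)) with hF
  have hi : ∀ m, Integrable (F m) (volume.restrict (Ioi 0)) := fun m =>
    (int_gauss _ he).1.integrable.const_mul _
  have hv : ∀ (c : ℝ) (m : ℕ), ∫ a in Ioi 0, c / (m.factorial * (m + n).factorial) *
    (a ^ (2 * (m + n) + 1) * exp (-(e * a) ^ 2)) = c / e ^ (2 * m) / m.factorial * (1 / (2 * e ^ (2 * n + 2))) := by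
    intro c m
    rw [integral_const_mul, (int_gauss (m + n) he).2, show 2 * (m + n) + 2 = 2 * m + (2 * n + 2) by ring, pow_add]
    have : ((m + n).factorial : ℝ) ≠ 0 := by positivity
    field_simp
  have hn : ∀ m, ∫ a in Ioi 0, ‖F m a‖ = (x ^ 2 / 4 / e ^ 2) ^ m / m.factorial * (1 / (2 * e ^ (2 * n + 2))) := by
    intro m
    rw [div_pow (x ^ 2 / 4), ← pow_mul e 2 m, ← hv]
    apply setIntegral_congr_fun measurableSet_Ioi
    intro a ha
    have ha' : 0 < a := ha
    simp only [hF]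
    rw [norm_mul, norm_div, norm_pow, norm_neg, Real.norm_of_nonneg (by positivity : 0 ≤ x ^ 2 / 4),
      Real.norm_of_nonneg (by positivity : (0:ℝ) ≤ m.factorial * (m + n).factorial),
      Real.norm_of_nonneg (by positivity : 0 ≤ a ^ (2 * (m + n) + 1) * exp (-(e * a) ^ 2))]
  have hs := hasSum_integral_of_summable_integral_norm hi (by
    simp only [hn]
    exact (Real.summable_pow_div_factorial _).mul_right _)
  have hval : ∀ m, ∫ a in Ioi 0, F m a = (-(x / (2 * e)) ^ 2) ^ m / m.factorial * (1 / (2 * e ^ (2 * n + 2))) := by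
    intro m
    rw [show -(x / (2 * e)) ^ 2 = -(x ^ 2 / 4) / e ^ 2 by field_simp; ring, div_pow _ (e ^ 2), ← pow_mul e 2 m, ← hv]
  simp only [hval] at hs
  have hs2 : HasSum (fun m : ℕ => (-(x / (2 * e)) ^ 2) ^ m / m.factorial * (1 / (2 * e ^ (2 * n + 2))))
      (exp (-(x / (2 * e)) ^ 2) * (1 / (2 * e ^ (2 * n + 2)))) := by
    apply HasSum.mul_right
    rw [Real.exp_eq_exp_ℝ]
    exact NormedSpace.expSeries_div_hasSum_exp _
  have := hs.unique hs2
  rw [mul_one_div] at this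
  rw [← this]
  congr 1; ext a
  rw [Jn, gsF, ← tsum_mul_right]
  congr 1; ext m
  simp only [hF]
  rw [show -((a * x) ^ 2 / 4) = a ^ 2 * -(x ^ 2 / 4) by ring, mul_pow, ← pow_mul]
  ring

lemma Good.fubini {n : ℕ} {lam : ℝ} {u u1 w w1 : ℝ → ℝ} (h : Good (2 * n) lam u u1 w w1)
    {e : ℝ} (he : 0 < e) :
    ∫ a in Ioi 0, (II u n 0 (2 * n + 1) a 0 * a ^ (2 * n + 1)) * exp (-(e * a) ^ 2)
      = 2 ^ (2 * n + 1) * ∫ y in Ioi 0, u (2 * e * y) * (y ^ (2 * n + 1) * exp (-y ^ 2)) := by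
  have iu : Integrable (fun x => u x * x ^ (2 * n + 1)) (volume.restrict (Ioi 0)) := by
    have := h.intPB (2 * n) (PB.const 1)
    simp only [mul_one] at this
    exact this
  have ig : Integrable (fun a => a ^ (2 * n + 1) * exp (-(e * a) ^ 2)) (volume.restrict (Ioi 0)) :=
    (int_gauss (2 * n + 1) he).1
  have hp := (ig.mul_prod iu).bdd_mul (f := fun z : ℝ × ℝ => Jn n (z.1 * z.2)) (c := 1)
    (((Jn_continuous n).comp (continuous_fst.mul continuous_snd)).aestronglyMeasurable)
    (Eventually.of_forall fun z => Jn_abs_le_one n _)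
  have sw := integral_integral_swap
    (f := fun a x => Jn n (a * x) * (a ^ (2 * n + 1) * exp (-(e * a) ^ 2) * (u x * x ^ (2 * n + 1)))) hp
  have l : ∀ a, (II u n 0 (2 * n + 1) a 0 * a ^ (2 * n + 1)) * exp (-(e * a) ^ 2) =
      ∫ x in Ioi 0, Jn n (a * x) * (a ^ (2 * n + 1) * exp (-(e * a) ^ 2) * (u x * x ^ (2 * n + 1))) := by
    intro a
    rw [II, mul_assoc, ← integral_mul_const]
    congr 1; ext x
    rw [zero_mul, Jn_zero]; simp; ring
  simp only [l]
  rw [sw]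
  have r : ∀ x, ∫ a in Ioi 0, Jn n (a * x) * (a ^ (2 * n + 1) * exp (-(e * a) ^ 2) * (u x * x ^ (2 * n + 1)))
      = (u x * x ^ (2 * n + 1)) * (exp (-(x / (2 * e)) ^ 2) / (2 * e ^ (2 * n + 2))) := by
    intro x
    rw [← gauss_J n x he, ← integral_const_mul]
    congr 1; ext a; ring
  simp only [r]
  have sub := integral_comp_mul_left_Ioi
    (fun x => (u x * x ^ (2 * n + 1)) * (exp (-(x / (2 * e)) ^ 2) / (2 * e ^ (2 * n + 2)))) 0
    (b := 2 * e) (by positivity)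
  rw [mul_zero, smul_eq_mul, eq_inv_mul_iff_mul_eq₀ (by positivity)] at sub
  rw [← sub, ← integral_const_mul, ← integral_const_mul]
  congr 1; ext y
  rw [mul_div_cancel_left₀ y (by positivity : 2 * e ≠ 0), mul_pow (2 * e) y, mul_pow 2 e]
  rw [show e ^ (2 * n + 2) = e ^ (2 * n + 1) * e by ring]
  field_simp

lemma Good.log_bound {n : ℕ} {lam : ℝ} {u u1 w w1 : ℝ → ℝ} (h : Good n lam u u1 w w1)
    {K d : ℝ} (hd : 0 < d) (hd1 : d ≤ 1) (hK : 0 ≤ K) (hu : ∀ x ∈ Ioo 0 d, |u x| ≤ K * (1 - log x)) :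
    ∃ C, 0 ≤ C ∧ ∀ x > 0, |u x| ≤ C * (1 + |log x|) := by
  obtain ⟨C, hC, hb⟩ := h.bound
  refine ⟨K + C / d, by positivity, fun x hx => ?_⟩
  have hl := abs_nonneg (log x)
  have q : 0 ≤ C / d := by positivity
  rcases lt_or_ge x d with hxd | hxd
  · calc |u x| ≤ K * (1 - log x) := hu x ⟨hx, hxd⟩
      _ ≤ K * (1 + |log x|) := by
          apply mul_le_mul_of_nonneg_left _ hK
          linarith [neg_abs_le (log x)]
      _ ≤ _ := by nlinarith only [hl, q]
  · have h1 := hb x hx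
    rw [abs_mul, abs_of_pos hx] at h1
    have h2 : exp (-x / 4) ≤ 1 := exp_le_one_iff.2 (by linarith)
    have h3 : x * |u x| ≤ C := h1.trans (by nlinarith)
    have h4 : |u x| ≤ C / d := by
      rw [le_div_iff₀ hd]; nlinarith [abs_nonneg (u x)]
    nlinarith

lemma Good.rhs_limit {n : ℕ} {lam B C : ℝ} {u u1 w w1 : ℝ → ℝ} (h : Good (2 * n) lam u u1 w w1)
    (hC : 0 ≤ C) (hb : ∀ x > 0, |u x| ≤ C * (1 + |log x|))
    (hB : Tendsto (fun x : ℝ => u x / log (x / 2)) (nhdsWithin 0 (Ioi 0)) (nhds B)) :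
    Tendsto (fun L => (∫ y in Ioi 0, u (2 * exp (-L) * y) * (y ^ (2 * n + 1) * exp (-y ^ 2))) / L)
      atTop (nhds (-(B * (n.factorial / 2)))) := by
  have key : Tendsto (fun L : ℝ => ∫ y in Ioi 0, (u (2 * exp (-L) * y) / L) * (y ^ (2 * n + 1) * exp (-y ^ 2)))
      atTop (nhds (∫ y in Ioi 0, (-B) * (y ^ (2 * n + 1) * exp (-y ^ 2)))) := by
    have g1 := int_gauss (2 * n + 1) one_pos
    have g2 := int_gauss (2 * n + 2) one_pos
    have g3 := int_gauss (2 * n) one_pos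
    simp only [one_mul] at g1 g2 g3
    apply tendsto_integral_filter_of_dominated_convergence
      (fun y => 2 * C * (y ^ (2 * n + 1) * exp (-y ^ 2)) + C * (2 * (y ^ (2 * n + 2) * exp (-y ^ 2)) +
        y ^ (2 * n) * exp (-y ^ 2)))
    · refine Eventually.of_forall fun L => ContinuousOn.aestronglyMeasurable ?_ measurableSet_Ioi
      have : ContinuousOn (fun y => u (2 * exp (-L) * y)) (Ioi 0) :=
        h.cont.comp (by fun_prop) fun y hy => by
          have : 0 < y := hy
          have := exp_pos (-L)
          simp only [mem_Ioi]; positivity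
      exact (this.div_const L).mul (by fun_prop)
    · filter_upwards [eventually_ge_atTop 1] with L hL
      filter_upwards [ae_restrict_mem measurableSet_Ioi] with y hy
      have hy0 : 0 < y := hy
      have he := exp_pos (-L)
      have hu := hb (2 * exp (-L) * y) (by positivity)
      have hlog : log (2 * exp (-L) * y) = -L + log (2 * y) := by
        rw [mul_right_comm, log_mul (by positivity) he.ne', log_exp]; ring
      have hl2 : y * |log (2 * y)| ≤ 2 * y ^ 2 + 1 := by
        have a1 := log_le_sub_one_of_pos (show 0 < 2 * y by positivity)
        have a2 := one_sub_inv_le_log_of_pos (show 0 < 2 * y by positivity)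
        have a3 : y * (2 * y)⁻¹ = 1 / 2 := by field_simp
        have a4 : |log (2 * y)| ≤ 2 * y + (2 * y)⁻¹ := by
          have : 0 < (2 * y)⁻¹ := by positivity
          rw [abs_le]; constructor <;> linarith
        nlinarith only [mul_le_mul_of_nonneg_left a4 hy0.le, a3]
      rw [norm_mul, norm_div, Real.norm_eq_abs, Real.norm_eq_abs, abs_of_pos (by linarith : 0 < L),
        Real.norm_of_nonneg (by positivity)]
      have hu2 : |u (2 * exp (-L) * y)| / L ≤ C * (2 + |log (2 * y)|) := by
        rw [div_le_iff₀ (by linarith)]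
        refine hu.trans ?_
        rw [hlog, mul_assoc]
        apply mul_le_mul_of_nonneg_left _ hC
        have := abs_add_le (-L) (log (2 * y))
        rw [abs_neg, abs_of_pos (by linarith : 0 < L)] at this
        nlinarith [abs_nonneg (log (2 * y))]
      have hpe : 0 ≤ y ^ (2 * n) * exp (-y ^ 2) := by positivity
      calc _ ≤ C * (2 + |log (2 * y)|) * (y ^ (2 * n + 1) * exp (-y ^ 2)) :=
            mul_le_mul_of_nonneg_right hu2 (by positivity)
        _ = 2 * C * (y ^ (2 * n + 1) * exp (-y ^ 2)) + C * ((y * |log (2 * y)|) * (y ^ (2 * n) * exp (-y ^ 2))) := by ring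
        _ ≤ 2 * C * (y ^ (2 * n + 1) * exp (-y ^ 2)) + C * ((2 * y ^ 2 + 1) * (y ^ (2 * n) * exp (-y ^ 2))) := by
            have := mul_le_mul_of_nonneg_right hl2 hpe
            have := mul_le_mul_of_nonneg_left this hC
            linarith
        _ = _ := by ring
    · exact (g1.1.integrable.const_mul _).add (((g2.1.integrable.const_mul 2).add g3.1.integrable).const_mul C)
    · filter_upwards [ae_restrict_mem measurableSet_Ioi] with y hy
      have hy0 : 0 < y := hy
      apply Tendsto.mul_const
      have t1 : Tendsto (fun L : ℝ => 2 * exp (-L) * y) atTop (nhdsWithin 0 (Ioi 0)) := by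
        apply tendsto_nhdsWithin_iff.2 ⟨?_, Eventually.of_forall fun L => ?_⟩
        · have := (tendsto_exp_neg_atTop_nhds_zero.const_mul 2).mul_const y
          simpa using this
        · have := exp_pos (-L); simp only [mem_Ioi]; positivity
      have t2 := hB.comp t1
      have t3 : Tendsto (fun L : ℝ => log y / L - 1) atTop (nhds (0 - 1)) :=
        (tendsto_const_nhds.div_atTop tendsto_id).sub_const 1
      have t4 := t2.mul t3
      rw [show B * (0 - 1) = -B by ring] at t4
      refine t4.congr' ?_
      filter_upwards [eventually_gt_atTop 0, eventually_gt_atTop (log y)] with L hL hL2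
      have : log (2 * exp (-L) * y / 2) = -L + log y := by
        rw [show 2 * exp (-L) * y / 2 = exp (-L) * y by ring, log_mul (exp_pos _).ne' hy0.ne', log_exp]
      simp only [Function.comp]
      rw [this]
      have h1 : -L + log y ≠ 0 := by linarith
      field_simp
      ring
  have g := (int_gauss n one_pos).2
  simp only [one_mul, one_pow, mul_one] at g
  rw [integral_const_mul, g, neg_mul] at key
  refine key.congr fun L => ?_
  rw [← integral_div]
  congr 1; ext y; ring

lemma Good.axis {n j : ℕ} {lam : ℝ} {u u1 w w1 : ℝ → ℝ} (h : Good (2 * n) lam u u1 w w1)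
    (hlam : lam = 4 * (j * (j + 2 * n + 1))) {a : ℝ} (ha : 0 < a) :
    (1 + a ^ 2) ^ (n + 1) * II u n 0 (2 * n + 1) a 0 * gegenbauerCt j (n + 1 / 2) 1
      = II u n 0 (2 * n + 1) 0 0 * gegenbauerCt j (n + 1 / 2) ((1 - a ^ 2) / (1 + a ^ 2)) := by
  have hpos : 0 < 1 + a ^ 2 := by positivity
  have h0 : 0 ≤ 2 * arctan a := by
    have := arctan_pos.2 ha; linarith
  have h1 : 2 * arctan a < π - 0 := by
    have := arctan_lt_pi_div_two a; linarith
  have key := h.theta hlam le_rfl pi_pos (t := 2 * arctan a) ⟨h0, h1⟩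
  have hc : cos (2 * arctan a) = (1 - a ^ 2) / (1 + a ^ 2) := by
    rw [cos_two_mul, cos_sq_arctan]; field_simp; ring
  have hs : sin (2 * arctan a) = 2 * a / (1 + a ^ 2) := by
    have h2 : cos (arctan a) ≠ 0 := (cos_arctan_pos a).ne'
    have h3 : sin (arctan a) = a * cos (arctan a) := by
      have := tan_arctan a
      rw [tan_eq_sin_div_cos] at this
      field_simp at this
      linarith
    rw [sin_two_mul, h3]
    have h4 := cos_sq_arctan a
    calc 2 * (a * cos (arctan a)) * cos (arctan a) = 2 * a * cos (arctan a) ^ 2 := by ring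
      _ = _ := by rw [h4]; ring
  rw [hc, hs] at key
  have e1 : 2 / ((1 - a ^ 2) / (1 + a ^ 2) + cos 0) = 1 + a ^ 2 := by
    have : (1 - a ^ 2) / (1 + a ^ 2) + cos 0 = 2 / (1 + a ^ 2) := by
      rw [cos_zero]; field_simp; ring
    rw [this]; field_simp
  rw [e1] at key
  have e2 : (1 + a ^ 2) * (2 * a / (1 + a ^ 2)) / 2 = a := by field_simp
  rw [e2, cos_zero, sin_zero] at key
  norm_num at key ⊢
  linarith

lemma Good.const {n j : ℕ} {lam B C : ℝ} {u u1 w w1 : ℝ → ℝ} (h : Good (2 * n) lam u u1 w w1)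
    (hlam : lam = 4 * (j * (j + 2 * n + 1)))
    (hC : 0 ≤ C) (hb : ∀ x > 0, |u x| ≤ C * (1 + |log x|))
    (hB : Tendsto (fun x : ℝ => u x / log (x / 2)) (nhdsWithin 0 (Ioi 0)) (nhds B)) :
    II u n 0 (2 * n + 1) 0 0 = (-1) ^ (j + 1) * 2 ^ (2 * n) * n.factorial * B := by
  have hl : (0:ℝ) < n + 1 / 2 := by positivity
  set P := II u n 0 (2 * n + 1) 0 0 with hP
  set c1 := gegenbauerCt j (n + 1 / 2) 1 with hc1
  have c1pos : 0 < c1 := geg_at_one_pos j _ hl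
  have gc : Continuous (gegenbauerCt j (n + 1 / 2)) := by
    obtain ⟨C1, C2, g1, _⟩ := geg_exists j _ hl
    exact continuous_iff_continuousAt.2 fun x => (g1 x).continuousAt
  obtain ⟨M0, hM0⟩ := (isCompact_Icc (a := (-1:ℝ)) (b := 1)).exists_bound_of_continuousOn gc.continuousOn
  have hq : ∀ a > (0:ℝ), (1 - a ^ 2) / (1 + a ^ 2) ∈ Icc (-1:ℝ) 1 := by
    intro a ha
    have hpos : 0 < 1 + a ^ 2 := by positivity
    constructor
    · rw [le_div_iff₀ hpos]; nlinarith
    · rw [div_le_iff₀ hpos]; nlinarith [sq_nonneg a]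
  have M0n : 0 ≤ M0 := (norm_nonneg _).trans (hM0 1 (by norm_num))
  set H : ℝ → ℝ := fun a => II u n 0 (2 * n + 1) a 0 * a ^ (2 * n + 1) with hH
  have He : ∀ a > 0, a * H a = P / c1 * (a ^ 2 / (1 + a ^ 2)) ^ (n + 1)
      * gegenbauerCt j (n + 1 / 2) ((1 - a ^ 2) / (1 + a ^ 2)) := by
    intro a ha
    have hpos : (1 + a ^ 2) ^ (n + 1) ≠ 0 := by positivity
    have := h.axis hlam ha
    rw [← hP, ← hc1] at this
    rw [hH, div_pow]
    simp only
    have e : P / c1 * ((a ^ 2) ^ (n + 1) / (1 + a ^ 2) ^ (n + 1))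
      * gegenbauerCt j (n + 1 / 2) ((1 - a ^ 2) / (1 + a ^ 2))
      = (P * gegenbauerCt j (n + 1 / 2) ((1 - a ^ 2) / (1 + a ^ 2))) * a ^ (2 * n + 2)
        / ((1 + a ^ 2) ^ (n + 1) * c1) := by
      rw [← pow_mul, show 2 * (n + 1) = 2 * n + 2 by ring]
      generalize (1 + a ^ 2) ^ (n + 1) = D
      generalize gegenbauerCt j (n + 1 / 2) ((1 - a ^ 2) / (1 + a ^ 2)) = E
      rw [div_mul_div_comm, div_mul_eq_mul_div]
      congr 1 <;> ring
    rw [e, ← this, eq_div_iff (mul_ne_zero hpos c1pos.ne')]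
    ring
  have hr0 : ∀ a > (0:ℝ), 0 ≤ a ^ 2 / (1 + a ^ 2) := fun a _ => by positivity
  have hr1 : ∀ a > (0:ℝ), a ^ 2 / (1 + a ^ 2) ≤ 1 := fun a _ => by
    rw [div_le_one (by positivity)]; linarith
  have hr2 : ∀ a > (0:ℝ), a ^ 2 / (1 + a ^ 2) ≤ a ^ 2 := fun a _ =>
    div_le_self (by positivity) (by nlinarith [sq_nonneg a])
  have hpw : ∀ a > (0:ℝ), (a ^ 2 / (1 + a ^ 2)) ^ (n + 1) ≤ a ^ 2 / (1 + a ^ 2) := fun a ha =>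
    pow_le_of_le_one (hr0 a ha) (hr1 a ha) (by omega)
  have Mn : 0 ≤ |P / c1| * M0 := by positivity
  have bd : ∀ a > 0, |a * H a| ≤ |P / c1| * M0 * (a ^ 2 / (1 + a ^ 2)) := by
    intro a ha
    rw [He a ha, abs_mul, abs_mul, abs_of_nonneg (pow_nonneg (hr0 a ha) _)]
    have k := hM0 _ (hq a ha)
    rw [norm_eq_abs] at k
    calc _ ≤ |P / c1| * (a ^ 2 / (1 + a ^ 2)) * M0 := by
          apply mul_le_mul _ k (abs_nonneg _) (mul_nonneg (abs_nonneg _) (hr0 a ha))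
          exact mul_le_mul_of_nonneg_left (hpw a ha) (abs_nonneg _)
      _ = _ := by ring
  have bd1 : ∀ a > 0, |a * H a| ≤ |P / c1| * M0 := fun a ha =>
    (bd a ha).trans (mul_le_of_le_one_right Mn (hr1 a ha))
  have bd2 : ∀ a > 0, |a * H a| ≤ |P / c1| * M0 * a ^ 2 := fun a ha =>
    (bd a ha).trans (mul_le_mul_of_nonneg_left (hr2 a ha) Mn)
  have hcont : ContinuousOn H (Ioi 0) := by
    have : ContinuousOn (fun a => (P / c1 * (a ^ 2 / (1 + a ^ 2)) ^ (n + 1)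
      * gegenbauerCt j (n + 1 / 2) ((1 - a ^ 2) / (1 + a ^ 2))) / a) (Ioi 0) := by
      apply ContinuousOn.div _ continuousOn_id (fun x hx => (mem_Ioi.1 hx).ne')
      apply Continuous.continuousOn
      have hne : ∀ a : ℝ, 1 + a ^ 2 ≠ 0 := fun a => by positivity
      have q1 : Continuous fun a : ℝ => a ^ 2 / (1 + a ^ 2) :=
        Continuous.div (by fun_prop) (by fun_prop) hne
      have q2 : Continuous fun a : ℝ => (1 - a ^ 2) / (1 + a ^ 2) :=
        Continuous.div (by fun_prop) (by fun_prop) hne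
      exact (continuous_const.mul (q1.pow _)).mul (gc.comp q2)
    refine this.congr fun a ha => ?_
    simp only
    rw [← He a ha]
    have : a ≠ 0 := (mem_Ioi.1 ha).ne'
    field_simp
  have hlim : Tendsto (fun a => a * H a) atTop (nhds ((-1) ^ j * P)) := by
    have t0 : Tendsto (fun a : ℝ => (1 + a ^ 2)⁻¹) atTop (nhds 0) :=
      tendsto_inv_atTop_zero.comp (tendsto_atTop_add_const_left _ _ (tendsto_pow_atTop two_ne_zero))
    have t1 : Tendsto (fun a : ℝ => a ^ 2 / (1 + a ^ 2)) atTop (nhds 1) := by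
      have := t0.const_sub 1
      rw [sub_zero] at this
      refine this.congr fun a => ?_
      have : 1 + a ^ 2 ≠ 0 := by positivity
      field_simp
      ring
    have t2 : Tendsto (fun a : ℝ => (1 - a ^ 2) / (1 + a ^ 2)) atTop (nhds (-1)) := by
      have := (t0.const_mul 2).sub_const 1
      rw [mul_zero, zero_sub] at this
      refine this.congr fun a => ?_
      have : 1 + a ^ 2 ≠ 0 := by positivity
      field_simp
      ring
    have t3 := ((t1.pow (n + 1)).const_mul (P / c1)).mul ((gc.tendsto (-1)).comp t2)
    have e : P / c1 * 1 ^ (n + 1) * gegenbauerCt j (n + 1 / 2) (-1) = (-1) ^ j * P := by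
      rw [geg_neg_one, ← hc1, one_pow]; field_simp
    rw [e] at t3
    refine t3.congr' ?_
    filter_upwards [eventually_gt_atTop 0] with a ha
    rw [He a ha]; rfl
  have L1 := log_limit Mn hcont bd1 bd2 hlim
  have L2 := (h.rhs_limit hC hb hB).const_mul (2 ^ (2 * n + 1))
  have L3 : Tendsto (fun L => (∫ a in Ioi 0, H a * exp (-(exp (-L) * a) ^ 2)) / L) atTop
      (nhds (2 ^ (2 * n + 1) * (-(B * (n.factorial / 2))))) := by
    refine L2.congr fun L => ?_
    rw [h.fubini (exp_pos (-L))]; ring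
  have fin := tendsto_nhds_unique L1 L3
  have s : ((-1:ℝ) ^ j) * (-1) ^ j = 1 := by rw [← mul_pow]; norm_num
  calc P = (-1) ^ j * ((-1) ^ j * P) := by rw [← mul_assoc, s, one_mul]
    _ = _ := by rw [fin]; ring

lemma esys_of {n : ℕ} {lam : ℝ} {u : ℝ → ℝ} (hs : ContDiffOn ℝ (⊤ : ℕ∞) u (Ioi 0))
    (he : ∀ x > (0 : ℝ), Dop n 0 u x = lam * u x) :
    ESys n lam u (deriv u) (besselQ 0 0 u) (deriv (besselQ 0 0 u)) := by
  have dd : ∀ {f : ℝ → ℝ}, ContDiffOn ℝ (⊤ : ℕ∞) f (Ioi 0) → ContDiffOn ℝ (⊤ : ℕ∞) (deriv f) (Ioi 0) :=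
    fun hf => hf.deriv_of_isOpen isOpen_Ioi (by simp)
  have da : ∀ {f : ℝ → ℝ}, ContDiffOn ℝ (⊤ : ℕ∞) f (Ioi 0) → ∀ x > 0, HasDerivAt f (deriv f x) x := by
    intro f hf x hx
    exact ((hf.contDiffAt (Ioi_mem_nhds hx)).differentiableAt (by simp)).hasDerivAt
  -- formula for `eulerOp` iterated
  have fE : ∀ {f : ℝ → ℝ} (c : ℝ), ContDiffOn ℝ (⊤ : ℕ∞) f (Ioi 0) → ∀ x > 0,
      besselQ 0 c f x = x * (deriv f x + x * deriv (deriv f) x + c * deriv f x)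
        + c * (x * deriv f x + c * f x) - x ^ 2 * f x := by
    intro f c hf x hx
    have h1 := da hf x hx
    have h2 := da (dd hf) x hx
    have h3 : HasDerivAt (fun y => eulerOp f y + (c + 0) * f y)
        (deriv f x + x * deriv (deriv f) x + c * deriv f x) x := by
      have := ((hasDerivAt_id x).mul h2).add (h1.const_mul (c + 0))
      convert! this using 1
      simp
    have h4 : eulerOp (fun y => eulerOp f y + (c + 0) * f y) x
        = x * (deriv f x + x * deriv (deriv f) x + c * deriv f x) := by
      simp only [eulerOp] at h3 ⊢
      rw [h3.deriv]
    simp only [besselQ, h4]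
    simp only [eulerOp]
    ring
  have hw : ContDiffOn ℝ (⊤ : ℕ∞) (besselQ 0 0 u) (Ioi 0) := by
    have : ContDiffOn ℝ (⊤ : ℕ∞) (fun x => x * (deriv u x + x * deriv (deriv u) x + 0 * deriv u x)
        + 0 * (x * deriv u x + 0 * u x) - x ^ 2 * u x) (Ioi 0) := by
      have a1 := dd hs
      have a2 := dd a1
      fun_prop
    exact this.congr fun x hx => fE 0 hs x hx
  refine ⟨da hs, fun x hx => ?_, da hw, fun x hx => ?_⟩
  · have := da (dd hs) x hx
    convert! this using 1
    rw [fE 0 hs x hx]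
    field_simp
    ring
  · have := da (dd hw) x hx
    convert! this using 1
    have e := he x hx
    rw [Dop, fE n hw x hx, div_eq_iff (by positivity)] at e
    field_simp
    linarith

lemma log_near {u : ℝ → ℝ} {B : ℝ}
    (hB : Tendsto (fun x : ℝ => u x / log (x / 2)) (nhdsWithin 0 (Ioi 0)) (nhds B)) :
    ∃ d K : ℝ, 0 < d ∧ d ≤ 1 ∧ 0 ≤ K ∧ ∀ x ∈ Ioo 0 d, |u x| ≤ K * (1 - log x) := by
  have h1 := hB.abs.eventually (eventually_le_nhds (show |B| < |B| + 1 by linarith))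
  obtain ⟨d, hd, hb⟩ := (mem_nhdsGT_iff_exists_Ioo_subset).1 h1
  refine ⟨min d 1, |B| + 1, lt_min hd one_pos, min_le_right _ _, by positivity, fun x hx => ?_⟩
  have hx0 := hx.1
  have hxd := hx.2.trans_le (min_le_left d 1)
  have hx1 := hx.2.trans_le (min_le_right d 1)
  have h2 : |u x / log (x / 2)| ≤ |B| + 1 := hb ⟨hx0, hxd⟩
  have l2 : log 2 < 1 := by have := log_two_lt_d9; linarith
  have lp : 0 < log 2 := log_pos (by norm_num)
  have lx : log x < 0 := log_neg hx0 hx1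
  have e : log (x / 2) = log x - log 2 := log_div hx0.ne' two_ne_zero
  have ha : |log (x / 2)| = log 2 - log x := by rw [e, abs_of_neg (by linarith)]; ring
  rw [abs_div, ha, div_le_iff₀ (by linarith)] at h2
  exact h2.trans (mul_le_mul_of_nonneg_left (by linarith) (by positivity))

lemma const_alg (n j : ℕ) :
    ((j.factorial * (2 : ℝ) ^ (4 * n) * (n.factorial : ℝ) ^ 2)
              / (π * Gamma (j + (2 * n : ℝ) + 1)))
      * gegenbauerCt j (n + 1 / 2) 1 * gegenbauerCt (j + n) (1 / 2) 1 = 2 ^ (2 * n) * n.factorial := by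
  rw [geg_at_one _ _ (by positivity), geg_at_one _ _ (by norm_num)]
  have d := Gamma_mul_Gamma_add_half ((n:ℝ) + 1 / 2)
  rw [show (n:ℝ) + 1 / 2 + 1 / 2 = n + 1 by ring, Gamma_nat_eq_factorial,
    show (1:ℝ) - 2 * (n + 1 / 2) = -((2 * n : ℕ) : ℝ) by push_cast; ring, rpow_neg (by norm_num), rpow_natCast] at d
  have g1 : 0 < Gamma ((n:ℝ) + 1 / 2) := Gamma_pos_of_pos (by positivity)
  have g2 : 0 < Gamma (2 * ((n:ℝ) + 1 / 2)) := Gamma_pos_of_pos (by positivity)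
  have g3 : 0 < Gamma ((j:ℝ) + 2 * n + 1) := Gamma_pos_of_pos (by positivity)
  have e1 : (j:ℝ) + 2 * (n + 1 / 2) = j + 2 * n + 1 := by ring
  have e2 : Gamma (((j + n : ℕ) : ℝ) + 2 * (1 / 2)) = (j + n).factorial := by
    rw [show (((j + n : ℕ) : ℝ) + 2 * (1 / 2)) = ((j + n : ℕ) : ℝ) + 1 by ring, Gamma_nat_eq_factorial]
  rw [e1, e2, Gamma_one_half_eq, show (2:ℝ) * (1 / 2) = 1 by norm_num, Gamma_one]
  have f1 : ((j + n).factorial : ℝ) ≠ 0 := by positivity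
  have f2 : (j.factorial : ℝ) ≠ 0 := by positivity
  have f3 : (n.factorial : ℝ) ≠ 0 := by positivity
  have s := sq_sqrt pi_pos.le
  have sp : 0 < √π := sqrt_pos.2 pi_pos
  generalize hG1 : Gamma ((n:ℝ) + 1 / 2) = G1 at *
  generalize hG2 : Gamma (2 * ((n:ℝ) + 1 / 2)) = G2 at *
  generalize hG3 : Gamma ((j:ℝ) + 2 * n + 1) = G3 at *
  have p2 : (2:ℝ) ^ (2 * n) ≠ 0 := by positivity
  rw [show (2:ℝ) ^ (4 * n) = 2 ^ (2 * n) * 2 ^ (2 * n) by rw [← pow_add]; congr 1; ring]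
  generalize (2:ℝ) ^ (2 * n) = T at *
  generalize (n.factorial : ℝ) = N at *
  generalize √π = S at *
  rw [← s]
  field_simp at d ⊢
  linarith

/-- **Theorem B, case `ν = 0`.** -/
theorem theoremB_nu_zero (μ : ℕ) (hμ : Even μ) (j : ℕ) (u : ℝ → ℝ)
    (hu_smooth : ContDiffOn ℝ (⊤ : ℕ∞) u (Set.Ioi 0))
    (hu_L2 : MeasureTheory.IntegrableOn
      (fun x => u x ^ 2 * x ^ ((μ : ℝ) + 1)) (Set.Ioi 0))
    (hu_eig : ∀ x > (0 : ℝ), Dop μ 0 u x = 4 * j * (j + (μ : ℝ) + 1) * u x)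
    (B : ℝ) (hB : Filter.Tendsto (fun x : ℝ => u x / Real.log (x / 2))
      (nhdsWithin 0 (Set.Ioi 0)) (nhds B)) :
    ∀ ϑ ∈ Set.Icc (0 : ℝ) Real.pi, ∀ φ ∈ Set.Icc (0 : ℝ) Real.pi,
      Real.cos ϑ + Real.cos φ > 0 →
      ∫ x in Set.Ioi (0 : ℝ),
          u x * besselJt ((μ : ℝ) / 2) (Real.sin ϑ / (Real.cos ϑ + Real.cos φ) * x)
            * besselJt 0 (Real.sin φ / (Real.cos ϑ + Real.cos φ) * x)
            * x ^ ((μ : ℝ) + 1)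
        = ((-1) ^ (j + 1) * (j.factorial * (2 : ℝ) ^ (2 * (μ : ℝ))
                * Real.Gamma (((μ : ℝ) + 2) / 2) ^ 2)
              / (Real.pi * Real.Gamma (j + (μ : ℝ) + 1)) * B)
            * ((Real.cos ϑ + Real.cos φ) / 2) ^ (((μ : ℝ) + 2) / 2)
            * gegenbauerCt j (((μ : ℝ) + 1) / 2) (Real.cos ϑ)
            * gegenbauerCt (j + μ / 2) (1 / 2) (Real.cos φ) := by
  obtain ⟨n, hn⟩ := hμ
  have hn2 : μ = 2 * n := by omega
  clear hn
  subst hn2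
  set lam : ℝ := 4 * (j * (j + 2 * n + 1)) with hlam
  have hsys : ESys (2 * n) lam u (deriv u) (besselQ 0 0 u) (deriv (besselQ 0 0 u)) := by
    apply esys_of hu_smooth
    intro x hx
    rw [hu_eig x hx, hlam]
    push_cast
    ring
  obtain ⟨d, K, hd, hd1, hK, hnear⟩ := log_near hB
  have hL2 : IntegrableOn (fun x => u x ^ 2) (Ioi 1) := by
    have h1 : IntegrableOn (fun x => u x ^ 2 * x ^ (((2 * n : ℕ) : ℝ) + 1)) (Ioi 1) :=
      hu_L2.mono_set (Ioi_subset_Ioi zero_le_one)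
    refine Integrable.mono' h1 ?_ ?_
    · have hc : ContinuousOn u (Ioi 1) := hu_smooth.continuousOn.mono (Ioi_subset_Ioi zero_le_one)
      exact (hc.pow 2).aestronglyMeasurable measurableSet_Ioi
    · filter_upwards [ae_restrict_mem measurableSet_Ioi] with x hx
      rw [norm_of_nonneg (sq_nonneg _)]
      have : (1:ℝ) ≤ x ^ (((2 * n : ℕ) : ℝ) + 1) :=
        one_le_rpow (mem_Ioi.1 hx).le (by positivity)
      exact le_mul_of_one_le_right (sq_nonneg _) this
  have hgood := good_of hsys hL2 hd hd1 hK hnear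
  obtain ⟨C, hC, hb⟩ := hgood.log_bound hd hd1 hK hnear
  have hP := hgood.const hlam hC hb hB
  intro ϑ hϑ φ hφ hpos
  have hφπ : φ < π := by
    rcases lt_or_eq_of_le hφ.2 with h | h
    · exact h
    · rw [h, cos_pi] at hpos
      linarith [cos_le_one ϑ]
  have hϑφ : ϑ < π - φ := by
    by_contra hcon
    have := cos_le_cos_of_nonneg_of_le_pi (x := π - φ) (y := ϑ) (by linarith) hϑ.2 (by linarith)
    rw [cos_pi_sub] at this
    linarith
  have k1 := hgood.theta hlam hφ.1 hφπ ⟨hϑ.1, hϑφ⟩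
  have k2 := hgood.phi hlam (t := φ) ⟨hφ.1, hφπ⟩
  have k3 := const_alg n j
  have c1 := geg_at_one_pos j ((n:ℝ) + 1 / 2) (by positivity)
  have c2 := geg_at_one_pos (j + n) (1 / 2) (by norm_num)
  have hI : ∫ x in Set.Ioi (0 : ℝ),
          u x * besselJt (((2 * n : ℕ) : ℝ) / 2) (Real.sin ϑ / (Real.cos ϑ + Real.cos φ) * x)
            * besselJt 0 (Real.sin φ / (Real.cos ϑ + Real.cos φ) * x)
            * x ^ (((2 * n : ℕ) : ℝ) + 1)
      = II u n 0 (2 * n + 1) (2 / (cos ϑ + cos φ) * sin ϑ / 2) (2 / (cos ϑ + cos φ) * sin φ / 2) := by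
    unfold II
    refine setIntegral_congr_fun measurableSet_Ioi fun x hx => ?_
    have e0 : ∀ y, besselJt 0 y = Jn 0 y := fun y => by
      have := besselJt_nat 0 y
      rwa [Nat.cast_zero] at this
    have e1 : (((2 * n : ℕ) : ℝ) / 2) = (n : ℝ) := by push_cast; ring
    have e2 : x ^ (((2 * n : ℕ) : ℝ) + 1) = x ^ (2 * n + 1) := by
      rw [← rpow_natCast]; push_cast; rfl
    have e3 : ∀ s : ℝ, 2 / (cos ϑ + cos φ) * s / 2 = s / (cos ϑ + cos φ) := fun s => by ring
    simp only [e0, e1, e2, e3, besselJt_nat]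
    ring
  rw [hI]
  have e4 : ((cos ϑ + cos φ) / 2) ^ ((((2 * n : ℕ) : ℝ) + 2) / 2) = ((cos ϑ + cos φ) / 2) ^ (n + 1) := by
    rw [← rpow_natCast]; congr 1; push_cast; ring
  have e5 : (2:ℝ) ^ (2 * ((2 * n : ℕ) : ℝ)) = 2 ^ (4 * n) := by
    rw [← rpow_natCast]; congr 1; push_cast; ring
  have e6 : Gamma ((((2 * n : ℕ) : ℝ) + 2) / 2) = n.factorial := by
    rw [← Gamma_nat_eq_factorial]; congr 1; push_cast; ring
  have e7 : (((2 * n : ℕ) : ℝ) + 1) / 2 = n + 1 / 2 := by push_cast; ring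
  have e8 : 2 * n / 2 = n := by omega
  have e9 : (j : ℝ) + ((2 * n : ℕ) : ℝ) + 1 = j + 2 * n + 1 := by push_cast; ring
  rw [e4, e5, e6, e7, e8, e9]
  have e10 : (cos ϑ + cos φ) / 2 = (2 / (cos ϑ + cos φ))⁻¹ := by rw [inv_div]
  rw [e10, inv_pow]
  have sp : 0 < (2 / (cos ϑ + cos φ)) ^ (n + 1) := pow_pos (div_pos two_pos hpos) _
  generalize II u n 0 (2 * n + 1) (2 / (cos ϑ + cos φ) * sin ϑ / 2)
    (2 / (cos ϑ + cos φ) * sin φ / 2) = I1 at *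
  generalize (2 / (cos ϑ + cos φ)) ^ (n + 1) = S at *
  generalize (2 / (1 + cos φ)) ^ (n + 1) * II u n 0 (2 * n + 1) 0 (2 / (1 + cos φ) * sin φ / 2) = I2 at *
  generalize II u n 0 (2 * n + 1) 0 0 = P at *
  generalize gegenbauerCt j (n + 1 / 2) (cos ϑ) = X at *
  generalize gegenbauerCt (j + n) (1 / 2) (cos φ) = Y at *
  generalize gegenbauerCt j (n + 1 / 2) 1 = X1 at *
  generalize gegenbauerCt (j + n) (1 / 2) 1 = Y1 at *
  rw [mul_div_assoc]
  generalize (j.factorial * (2 : ℝ) ^ (4 * n) * (n.factorial : ℝ) ^ 2)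
              / (π * Gamma (j + (2 * n : ℝ) + 1)) = Q at *
  have hPQ : P = (-1) ^ (j + 1) * (Q * X1 * Y1) * B := by rw [hP, k3]; ring
  have fin : S * I1 * (X1 * Y1) = ((-1) ^ (j + 1) * Q * B * X * Y) * (X1 * Y1) := by
    calc S * I1 * (X1 * Y1) = (S * I1 * X1) * Y1 := by ring
      _ = (I2 * Y1) * X := by rw [k1]; ring
      _ = _ := by rw [k2, hPQ]; ring
  have fin2 := mul_right_cancel₀ (mul_pos c1 c2).ne' fin
  calc I1 = S⁻¹ * (S * I1) := by field_simp
    _ = _ := by rw [fin2]; ring
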